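/- Let γ ∈ (1/2, 1), u ∈ (0,1), β ≥ 2. Consider the discursive voter model with temperature θ on the Simplified Norros–Reittu graph G_N, started from the initial law μ_u in which each vertex independently has opinion 1 with probability u. Then: (i) for θ ∈ (−∞, 1/γ], E^θ_{μ_u}(τ_cons | G_N) = Θ_P^{log N}(N); (ii) for θ ∈ (1/γ, 2], E^θ_{μ_u}(τ_cons | G_N) = Θ_P^{log N}(N^{2−γθ}). Here f = Θ_P^{log N}(g) means there exists C > 0 such that with probability tending to 1 over G_N, g·log^{−C} N ≤ f ≤ g·log^C N. -/

import Mathlib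

open scoped Classical
open Filter

noncomputable section

/-- Edge probability of the Simplified Norros–Reittu graph between (1-based) vertices
`i` and `j` of `[N]`: `1 - exp(-β N^(2γ-1) i^(-γ) j^(-γ))`. -/
def snrEdgeProb (β γ : ℝ) (N i j : ℕ) : ℝ :=
  1 - Real.exp (-(β * (N : ℝ) ^ (2 * γ - 1) * (i : ℝ) ^ (-γ) * (j : ℝ) ^ (-γ)))

/-- Probability weight of a given simple graph on `[N]` when each edge `{i,j}` (`i ≠ j`)
is present independently with probability `p i j` (indices 1-based). -/
def graphWeight (p : ℕ → ℕ → ℝ) (N : ℕ) (G : SimpleGraph (Fin N)) : ℝ :=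
  ∏ i : Fin N, ∏ j : Fin N,
    if i < j then
      (if G.Adj i j then p ((i : ℕ) + 1) ((j : ℕ) + 1)
       else 1 - p ((i : ℕ) + 1) ((j : ℕ) + 1))
    else 1

/-- Probability that the random graph with independent edge probabilities `p` satisfies the
property `A`. -/
def graphProb (p : ℕ → ℕ → ℝ) (N : ℕ) (A : SimpleGraph (Fin N) → Prop) : ℝ :=
  ∑ G : SimpleGraph (Fin N), if A G then graphWeight p N G else 0

/-- Probability that the Simplified Norros–Reittu graph `G_N` satisfies the property `A`. -/
def snrProb (β γ : ℝ) (N : ℕ) (A : SimpleGraph (Fin N) → Prop) : ℝ :=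
  graphProb (snrEdgeProb β γ N) N A

/-- Generator matrix `Q` of the discursive voter model with temperature `θ` on a graph `G`,
acting on the state space `{0,1}^N`:
`(ℒ f)(η) = Σ_η' Q η η' f(η')` where
`ℒ f(η) = Σ_i d(i)^θ Σ_{j∼i} (1/d(i)) (½ f(η^{j←i}) + ½ f(η^{i←j}) − f(η))`. -/
def voterQ {N : ℕ} (G : SimpleGraph (Fin N)) (θ : ℝ) :
    Matrix (Fin N → Bool) (Fin N → Bool) ℝ :=
  Matrix.of fun η η' =>
    ∑ i : Fin N, (G.degree i : ℝ) ^ θ *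
      ∑ j ∈ G.neighborFinset i, ((G.degree i : ℝ))⁻¹ *
        ((1 / 2) * (if Function.update η j (η i) = η' then 1 else 0)
          + (1 / 2) * (if Function.update η i (η j) = η' then 1 else 0)
          - (if η = η' then 1 else 0))

/-- The set of absorbing configurations: those constant on each connected component of `G`. -/
def consensusStates {N : ℕ} (G : SimpleGraph (Fin N)) : Set (Fin N → Bool) :=
  {η | ∀ i j : Fin N, G.Reachable i j → η i = η j}

/-- The initial law `μ_u` in which each vertex independently has opinion 1 with
probability `u`. -/
def muU {N : ℕ} (u : ℝ) (η : Fin N → Bool) : ℝ :=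
  ∏ i : Fin N, if η i then u else 1 - u

/-- `P_{μ_u}(η_t ∈ A)`: the probability that the discursive voter model with temperature `θ`
on `G`, started from `μ_u`, is in an absorbing (componentwise constant) state at time `t`;
the law at time `t` is obtained from `μ_u` via the semigroup `exp(tℒ)`. -/
def probConsensusAt {N : ℕ} (G : SimpleGraph (Fin N)) (θ u t : ℝ) : ℝ :=
  ∑ η : Fin N → Bool, ∑ η' : Fin N → Bool,
    muU u η * (NormedSpace.exp (t • voterQ G θ)) η η' *
      (if η' ∈ consensusStates G then 1 else 0)

/-- The expected consensus time `E^θ_{μ_u}(τ_cons | G)` of the discursive voter model with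
temperature `θ` on the realized graph `G`, from initial law `μ_u`:
`E_{μ_u}(τ_cons) = ∫_0^∞ (1 − P_{μ_u}(η_t ∈ A)) dt`. -/
def expectedConsensusTime {N : ℕ} (G : SimpleGraph (Fin N)) (θ u : ℝ) : ℝ :=
  ∫ t in Set.Ioi (0 : ℝ), (1 - probConsensusAt G θ u t)

/-
Seen from two vertices, the voter model is dual to a pair of independent random walks that coalesce
when they meet, so the matrix of discordance probabilities solves the heat equation of the pair walk
killed on the diagonal.  Its `ℓ²` norm decays at the rate given by a Poincaré inequality for pairs,
and consensus is reached within logarithmically many relaxation times.  Conversely the total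
discordance decreases at speed at most the sum of all conductances, which forces the consensus time
to be at least of order `N ^ 2 / ∑ d(i) ^ θ`.

The Poincaré inequality comes from the geometry of the graph.  Vertices of weight about a power of
`log N` form an expander (the core).  Each heavier vertex (a hub) sends a polylogarithmic fraction
of its edges to the core, and the lighter vertices are covered by connected pieces of
polylogarithmic size which either touch the core or hubs or are whole components.  Hence functions
on the giant component are controlled by their energy up to logarithms, and the pair inequality
holds with constant `N` up to logarithms.  When `θ > 1 / γ` the neighbourhood of the vertex of
largest degree, `d ≈ N ^ γ`, is a star with conductances `d ^ (θ - 1)`, on which pairs meet fast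
enough to improve the constant to `N ^ 2 / d ^ θ = N ^ (2 - γ θ)`.
-/

section MarkovSemigroup

variable {n : Type*} [Fintype n]

/-- `Q` is the generator matrix (`Q`-matrix) of a continuous-time Markov chain. -/
structure IsGeneratorMatrix (Q : Matrix n n ℝ) : Prop where
  nonneg_of_ne : ∀ i j, i ≠ j → 0 ≤ Q i j
  sum_row : ∀ i, ∑ j, Q i j = 0

variable [DecidableEq n]

/-- The expectation `g ↦ E_μ[g(X_t)]` for the continuous-time Markov chain `X` with generator
matrix `Q` and initial law `μ`. -/
def semigroupExpectation (Q : Matrix n n ℝ) (μ : n → ℝ) (t : ℝ) : (n → ℝ) →ₗ[ℝ] ℝ :=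
  dotProductBilin ℝ ℝ μ ∘ₗ (NormedSpace.exp (t • Q)).mulVecLin

lemma semigroupExpectation_apply (Q : Matrix n n ℝ) (μ : n → ℝ) (t : ℝ) (g : n → ℝ) :
    semigroupExpectation Q μ t g = ∑ i, ∑ j, μ i * NormedSpace.exp (t • Q) i j * g j := by
  simp [semigroupExpectation, dotProductBilin, dotProduct, Matrix.mulVec, Finset.mul_sum,
    mul_assoc]

lemma semigroupExpectation_zero (Q : Matrix n n ℝ) (μ g : n → ℝ) :
    semigroupExpectation Q μ 0 g = ∑ i, μ i * g i := by
  simp [semigroupExpectation_apply, Matrix.one_apply]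

section Exponential

attribute [local instance] Matrix.linftyOpNormedRing Matrix.linftyOpNormedAlgebra

lemma hasDerivAt_semigroupExpectation (Q : Matrix n n ℝ) (μ g : n → ℝ) (t : ℝ) :
    HasDerivAt (fun s => semigroupExpectation Q μ s g)
      (semigroupExpectation Q μ t (Q.mulVec g)) t := by
  let φ : Matrix n n ℝ →ₗ[ℝ] ℝ :=
    dotProductBilin ℝ ℝ μ ∘ₗ (LinearMap.applyₗ g ∘ₗ Matrix.toLin'.toLinearMap)
  have hφ : ∀ M, φ M = dotProductBilin ℝ ℝ μ (M.mulVec g) := fun M => by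
    simp [φ, Matrix.toLin'_apply]
  have h : HasDerivAt (fun s => φ (NormedSpace.exp (s • Q))) (φ (NormedSpace.exp (t • Q) * Q)) t :=
    φ.toContinuousLinearMap.hasFDerivAt.comp_hasDerivAt t (hasDerivAt_exp_smul_const (𝕂 := ℝ) Q t)
  simpa [hφ, semigroupExpectation, Matrix.mulVec_mulVec] using h

lemma matrix_pow_apply_nonneg {M : Matrix n n ℝ} (hM : ∀ i j, 0 ≤ M i j) (k : ℕ) (i j : n) :
    0 ≤ (M ^ k) i j := by
  induction k generalizing i j with
  | zero => rw [pow_zero, Matrix.one_apply]; positivity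
  | succ k ih =>
    rw [pow_succ, Matrix.mul_apply]
    exact Finset.sum_nonneg fun l _ => mul_nonneg (ih i l) (hM l j)

lemma matrix_exp_apply_nonneg {M : Matrix n n ℝ} (hM : ∀ i j, 0 ≤ M i j) (i j : n) :
    0 ≤ NormedSpace.exp M i j := by
  have hsum := (NormedSpace.exp_series_hasSum_exp' (𝕂 := ℝ) M).mapL
    (Matrix.entryLinearMap ℝ ℝ i j).toContinuousLinearMap
  refine hsum.nonneg fun k => ?_
  change 0 ≤ (k.factorial : ℝ)⁻¹ * (M ^ k) i j
  exact mul_nonneg (by positivity) (matrix_pow_apply_nonneg hM k i j)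

lemma matrix_exp_smul_one (c : ℝ) :
    NormedSpace.exp (c • (1 : Matrix n n ℝ)) = Real.exp c • (1 : Matrix n n ℝ) := by
  simp only [Matrix.smul_one_eq_diagonal, Matrix.exp_diagonal, Real.exp_eq_exp_ℝ]
  exact congrArg Matrix.diagonal (funext (Pi.coe_exp _))

-- Uniformization: `exp (tQ) = e^{-tc} exp (t(Q + c))`, and `Q + c` has nonnegative entries.
lemma matrix_exp_smul_apply_nonneg {Q : Matrix n n ℝ} (hQ : ∀ i j, i ≠ j → 0 ≤ Q i j) {t : ℝ}
    (ht : 0 ≤ t) (i j : n) : 0 ≤ NormedSpace.exp (t • Q) i j := by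
  set c : ℝ := ∑ k, |Q k k|
  have hshift : ∀ i j, 0 ≤ (t • (Q + c • (1 : Matrix n n ℝ))) i j := fun i j => by
    refine mul_nonneg ht ?_
    rcases eq_or_ne i j with rfl | hij
    · have hle : |Q i i| ≤ c :=
        Finset.single_le_sum (f := fun k => |Q k k|) (fun _ _ => abs_nonneg _) (Finset.mem_univ i)
      simpa using neg_le_iff_add_nonneg.1 ((neg_le_neg hle).trans (neg_abs_le (Q i i)))
    · simpa [Matrix.one_apply_ne hij] using hQ i j hij
  have hsplit : t • Q = t • (Q + c • (1 : Matrix n n ℝ)) + (-(t * c)) • (1 : Matrix n n ℝ) := by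
    rw [smul_add, smul_smul, add_assoc, ← add_smul, add_neg_cancel, zero_smul, add_zero]
  rw [hsplit, Matrix.exp_add_of_commute _ _ ((Commute.one_right _).smul_right _),
    matrix_exp_smul_one, Matrix.mul_smul, mul_one]
  exact mul_nonneg (Real.exp_pos _).le (matrix_exp_apply_nonneg hshift i j)

end Exponential

lemma semigroupExpectation_mono {Q : Matrix n n ℝ} (hQ : IsGeneratorMatrix Q) {μ : n → ℝ}
    (hμ : ∀ i, 0 ≤ μ i) {t : ℝ} (ht : 0 ≤ t) {g h : n → ℝ} (hgh : ∀ i, g i ≤ h i) :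
    semigroupExpectation Q μ t g ≤ semigroupExpectation Q μ t h := by
  simp only [semigroupExpectation_apply]
  exact Finset.sum_le_sum fun i _ => Finset.sum_le_sum fun j _ => mul_le_mul_of_nonneg_left (hgh j)
    (mul_nonneg (hμ i) (matrix_exp_smul_apply_nonneg hQ.nonneg_of_ne ht i j))

lemma semigroupExpectation_nonneg {Q : Matrix n n ℝ} (hQ : IsGeneratorMatrix Q) {μ : n → ℝ}
    (hμ : ∀ i, 0 ≤ μ i) {t : ℝ} (ht : 0 ≤ t) {g : n → ℝ} (hg : ∀ i, 0 ≤ g i) :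
    0 ≤ semigroupExpectation Q μ t g := by
  simpa using semigroupExpectation_mono hQ hμ ht (g := 0) hg

lemma semigroupExpectation_one {Q : Matrix n n ℝ} (hQ : IsGeneratorMatrix Q) (μ : n → ℝ) (t : ℝ) :
    semigroupExpectation Q μ t 1 = ∑ i, μ i := by
  have hder : ∀ s, HasDerivAt (fun s => semigroupExpectation Q μ s 1) 0 s := fun s => by
    have hQ1 : Q.mulVec 1 = 0 := funext fun i => by simp [Matrix.mulVec, dotProduct, hQ.sum_row]
    simpa [hQ1] using hasDerivAt_semigroupExpectation Q μ 1 s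
  rw [is_const_of_deriv_eq_zero (fun s => (hder s).differentiableAt) (fun s => (hder s).deriv) t 0,
    semigroupExpectation_zero]
  simp

lemma semigroupExpectation_le_one {Q : Matrix n n ℝ} (hQ : IsGeneratorMatrix Q) {μ : n → ℝ}
    (hμ : ∀ i, 0 ≤ μ i) (hμ1 : ∑ i, μ i = 1) {t : ℝ} (ht : 0 ≤ t) {g : n → ℝ}
    (hg : ∀ i, g i ≤ 1) : semigroupExpectation Q μ t g ≤ 1 := by
  simpa [semigroupExpectation_one hQ, hμ1] using semigroupExpectation_mono hQ hμ ht (h := 1) hg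

end MarkovSemigroup

section Conductance

variable {V : Type*} [Fintype V]

/-- Dirichlet energy of `f` for the conductances `c`; every edge is counted in both directions. -/
def dirichletEnergy (c : V → V → ℝ) (f : V → ℝ) : ℝ := ∑ x, ∑ z, c x z * (f x - f z) ^ 2

/-- Generator of the random walk with jump rates `c`. -/
def walkGenerator (c : V → V → ℝ) (f : V → ℝ) (x : V) : ℝ := ∑ z, c x z * (f z - f x)

/-- Generator of two independent random walks with jump rates `c`. -/
def pairGenerator (c D : V → V → ℝ) (x y : V) : ℝ :=
  walkGenerator c (fun z => D z y) x + walkGenerator c (D x) y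

lemma dirichletEnergy_nonneg {c : V → V → ℝ} (hc : ∀ x y, 0 ≤ c x y) (f : V → ℝ) :
    0 ≤ dirichletEnergy c f :=
  Finset.sum_nonneg fun x _ => Finset.sum_nonneg fun z _ => mul_nonneg (hc x z) (sq_nonneg _)

lemma sum_mul_walkGenerator {c : V → V → ℝ} (hc : ∀ x y, c x y = c y x) (f g : V → ℝ) :
    ∑ x, f x * walkGenerator c g x =
      -(1 / 2) * ∑ x, ∑ z, c x z * ((f x - f z) * (g x - g z)) := by
  have hswap : ∑ x, ∑ z, c x z * (f z * (g x - g z)) = ∑ x, ∑ z, c x z * (f x * (g z - g x)) := by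
    rw [Finset.sum_comm]
    simp only [hc]
  have hsum : ∑ x, ∑ z, c x z * ((f x - f z) * (g x - g z)) =
      -(∑ x, ∑ z, c x z * (f x * (g z - g x)) + ∑ x, ∑ z, c x z * (f z * (g x - g z))) := by
    simp only [← Finset.sum_add_distrib, ← Finset.sum_neg_distrib]
    exact Finset.sum_congr rfl fun x _ => Finset.sum_congr rfl fun z _ => by ring
  have hleft : ∑ x, f x * walkGenerator c g x = ∑ x, ∑ z, c x z * (f x * (g z - g x)) := by
    simp only [walkGenerator, Finset.mul_sum]
    exact Finset.sum_congr rfl fun x _ => Finset.sum_congr rfl fun z _ => by ring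
  rw [hleft, hsum, hswap]
  ring

lemma sum_mul_walkGenerator_self {c : V → V → ℝ} (hc : ∀ x y, c x y = c y x) (f : V → ℝ) :
    ∑ x, f x * walkGenerator c f x = -(1 / 2) * dirichletEnergy c f := by
  simp only [sum_mul_walkGenerator hc, dirichletEnergy, ← sq]

lemma sum_walkGenerator {c : V → V → ℝ} (hc : ∀ x y, c x y = c y x) (f : V → ℝ) :
    ∑ x, walkGenerator c f x = 0 := by
  simpa using sum_mul_walkGenerator hc 1 f

lemma sum_mul_pairGenerator_self {c P : V → V → ℝ} (hc : ∀ x y, c x y = c y x)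
    (hP : ∀ x y, P x y = P y x) :
    ∑ x, ∑ y, P x y * pairGenerator c P x y = -∑ y, dirichletEnergy c fun x => P x y := by
  have hfirst : ∑ x, ∑ y, P x y * walkGenerator c (fun z => P z y) x =
      ∑ y, -(1 / 2) * dirichletEnergy c fun x => P x y := by
    rw [Finset.sum_comm]
    simp only [← sum_mul_walkGenerator_self hc]
  have hsecond : ∑ x, ∑ y, P x y * walkGenerator c (P x) y =
      ∑ y, -(1 / 2) * dirichletEnergy c fun x => P x y := by
    simp only [sum_mul_walkGenerator_self hc]
    exact Finset.sum_congr rfl fun x _ => by rw [funext (hP x)]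
  simp only [pairGenerator, mul_add, Finset.sum_add_distrib, hfirst, hsecond, ← Finset.mul_sum]
  ring

/-- The Poincaré inequality, with constant `T`, for two independent walks among the conductances
`c` run inside the components of `G` and killed when they meet. -/
def PairPoincare (G : SimpleGraph V) (c : V → V → ℝ) (T : ℝ) : Prop :=
  ∀ P : V → V → ℝ, (∀ x, P x x = 0) → (∀ x y, P x y = P y x) →
    (∀ x y, ¬ G.Reachable x y → P x y = 0) →
    ∑ x, ∑ y, P x y ^ 2 ≤ T * ∑ y, dirichletEnergy c fun x => P x y

end Conductance

section VoterConductance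

variable {V : Type*} [Fintype V] (G : SimpleGraph V) (θ : ℝ)

/-- The rate `d(i)^(θ-1)` at which the discursive voter model at `i` starts a discussion with a
given neighbour. -/
def vertexRate (i : V) : ℝ := (G.degree i : ℝ) ^ θ * (G.degree i : ℝ)⁻¹

/-- The conductances of the walk dual to the discursive voter model: the rate at which `i` adopts
the opinion of `j`. -/
def voterConductance (i j : V) : ℝ :=
  if G.Adj i j then (vertexRate G θ i + vertexRate G θ j) / 2 else 0

lemma vertexRate_nonneg (i : V) : 0 ≤ vertexRate G θ i := by
  unfold vertexRate
  positivity

lemma voterConductance_nonneg (i j : V) : 0 ≤ voterConductance G θ i j := by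
  have hi := vertexRate_nonneg G θ i
  have hj := vertexRate_nonneg G θ j
  unfold voterConductance
  positivity

lemma voterConductance_comm (i j : V) : voterConductance G θ i j = voterConductance G θ j i := by
  simp only [voterConductance, G.adj_comm i j, add_comm (vertexRate G θ i)]

lemma voterConductance_of_adj {i j : V} (h : G.Adj i j) :
    voterConductance G θ i j = (vertexRate G θ i + vertexRate G θ j) / 2 :=
  if_pos h

lemma voterConductance_of_not_adj {i j : V} (h : ¬ G.Adj i j) : voterConductance G θ i j = 0 :=
  if_neg h

lemma sum_sum_voterConductance :
    ∑ x, ∑ z, voterConductance G θ x z = ∑ i, (G.degree i : ℝ) * vertexRate G θ i := by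
  have hrow (i : V) : ∑ j, (if G.Adj i j then vertexRate G θ i else 0) =
      (G.degree i : ℝ) * vertexRate G θ i := by
    rw [← Finset.sum_filter, ← SimpleGraph.neighborFinset_eq_filter, Finset.sum_const,
      SimpleGraph.card_neighborFinset_eq_degree, nsmul_eq_mul]
  have hcol : ∑ x, ∑ z, (if G.Adj x z then vertexRate G θ z else 0) =
      ∑ x, ∑ z, (if G.Adj x z then vertexRate G θ x else 0) := by
    rw [Finset.sum_comm]
    simp only [G.adj_comm]
  have hsplit (x z : V) : voterConductance G θ x z =
      1 / 2 * (if G.Adj x z then vertexRate G θ x else 0) +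
        1 / 2 * (if G.Adj x z then vertexRate G θ z else 0) := by
    unfold voterConductance
    split_ifs <;> ring
  simp only [hsplit, Finset.sum_add_distrib, ← Finset.mul_sum, hcol, hrow]
  ring

end VoterConductance

section VoterModel

variable {N : ℕ} (G : SimpleGraph (Fin N)) (θ : ℝ)

lemma voterQ_mulVec (g : (Fin N → Bool) → ℝ) (η : Fin N → Bool) :
    (voterQ G θ).mulVec g η = ∑ i, ∑ j ∈ G.neighborFinset i, vertexRate G θ i *
      (1 / 2 * g (Function.update η j (η i)) + 1 / 2 * g (Function.update η i (η j)) - g η) := by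
  have hite (ζ η' : Fin N → Bool) :
      (if ζ = η' then (1 : ℝ) else 0) * g η' = if ζ = η' then g η' else 0 := by
    rw [ite_mul, one_mul, zero_mul]
  simp only [voterQ, vertexRate, Matrix.mulVec, dotProduct, Matrix.of_apply, Finset.mul_sum,
    Finset.sum_mul]
  rw [Finset.sum_comm]
  refine Finset.sum_congr rfl fun i _ => ?_
  rw [Finset.sum_comm]
  refine Finset.sum_congr rfl fun j _ => ?_
  simp only [mul_assoc, sub_mul, add_mul, hite, ← Finset.mul_sum, Finset.sum_sub_distrib,
    Finset.sum_add_distrib, Finset.sum_ite_eq, Finset.mem_univ, if_true]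

lemma voterQ_mulVec_eq_sum_conductance (g : (Fin N → Bool) → ℝ) (η : Fin N → Bool) :
    (voterQ G θ).mulVec g η =
      ∑ i, ∑ j, voterConductance G θ i j * (g (Function.update η i (η j)) - g η) := by
  have hcond (i j : Fin N) : voterConductance G θ i j * (g (Function.update η i (η j)) - g η) =
      (if G.Adj i j then vertexRate G θ i / 2 * (g (Function.update η i (η j)) - g η) else 0) +
      if G.Adj j i then vertexRate G θ j / 2 * (g (Function.update η i (η j)) - g η) else 0 := by
    rw [voterConductance, G.adj_comm j i]
    split_ifs <;> ring
  have hrate (i : Fin N) : ∑ j ∈ G.neighborFinset i, vertexRate G θ i *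
      (1 / 2 * g (Function.update η j (η i)) + 1 / 2 * g (Function.update η i (η j)) - g η) =
      ∑ j, (if G.Adj i j then vertexRate G θ i / 2 * (g (Function.update η i (η j)) - g η) else 0) +
      ∑ j, if G.Adj i j then vertexRate G θ i / 2 * (g (Function.update η j (η i)) - g η)
        else 0 := by
    rw [← Finset.sum_add_distrib, SimpleGraph.neighborFinset_eq_filter, Finset.sum_filter]
    refine Finset.sum_congr rfl fun j _ => ?_
    split_ifs <;> ring
  rw [voterQ_mulVec]
  simp only [hcond, hrate, Finset.sum_add_distrib]
  congr 1
  exact Finset.sum_comm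

lemma voterQ_isGeneratorMatrix : IsGeneratorMatrix (voterQ G θ) where
  nonneg_of_ne η η' h := by
    simp only [voterQ, Matrix.of_apply, if_neg h, sub_zero]
    positivity
  sum_row η := by
    simpa [Matrix.mulVec, dotProduct] using voterQ_mulVec_eq_sum_conductance G θ 1 η

end VoterModel

section ProductMeasure

variable {N : ℕ} {u : ℝ}

lemma muU_nonneg (hu : u ∈ Set.Ioo (0 : ℝ) 1) (η : Fin N → Bool) : 0 ≤ muU u η :=
  Finset.prod_nonneg fun i _ => by split_ifs <;> linarith [hu.1, hu.2]

lemma sum_muU_mul_prod (φ : Fin N → Bool → ℝ) :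
    ∑ η : Fin N → Bool, muU u η * ∏ i, φ i (η i) =
      ∏ i, (u * φ i true + (1 - u) * φ i false) := by
  have hfactor (i : Fin N) : u * φ i true + (1 - u) * φ i false =
      ∑ b : Bool, (if b then u else 1 - u) * φ i b := by simp
  simp only [hfactor, Finset.prod_univ_sum, Fintype.piFinset_univ, muU, Finset.prod_mul_distrib]

lemma sum_muU : ∑ η : Fin N → Bool, muU u η = 1 := by
  simpa using sum_muU_mul_prod (N := N) (u := u) fun _ _ => 1

lemma sum_muU_mul_apply_mul_apply {x y : Fin N} (hxy : x ≠ y) (φ ψ : Bool → ℝ) :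
    ∑ η : Fin N → Bool, muU u η * (φ (η x) * ψ (η y)) =
      (u * φ true + (1 - u) * φ false) * (u * ψ true + (1 - u) * ψ false) := by
  let F (i : Fin N) : Bool → ℝ := if i = x then φ else if i = y then ψ else 1
  have hFx : F x = φ := if_pos rfl
  have hFy : F y = ψ := by simp only [F, if_neg hxy.symm, if_true]
  have hF {i : Fin N} (hi : i ≠ x ∧ i ≠ y) : F i = 1 := by simp only [F, if_neg hi.1, if_neg hi.2]
  have h := sum_muU_mul_prod (u := u) F
  rw [Fintype.prod_eq_mul x y hxy fun i hi => by simp [hF hi]] at h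
  rw [← hFx, ← hFy, ← h]
  refine Finset.sum_congr rfl fun η _ => ?_
  rw [Fintype.prod_eq_mul x y hxy fun i hi => by simp [hF hi]]

end ProductMeasure

section Discordance

/-- Indicator that the opinions of `x` and `y` differ although these vertices lie in the same
component of `G`. -/
def discordance {V : Type*} (G : SimpleGraph V) (x y : V) (η : V → Bool) : ℝ :=
  if G.Reachable x y ∧ η x ≠ η y then 1 else 0

section

variable {V : Type*} (G : SimpleGraph V) (x y : V) (η : V → Bool)

variable {x y η} in
lemma discordance_congr {ζ : V → Bool} (hx : η x = ζ x) (hy : η y = ζ y) :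
    discordance G x y η = discordance G x y ζ := by
  rw [discordance, hx, hy, discordance]

lemma discordance_self : discordance G x x η = 0 := by simp [discordance]

lemma discordance_comm : discordance G x y η = discordance G y x η := by
  simp only [discordance, ne_comm (a := η x), SimpleGraph.reachable_comm (u := x)]

lemma discordance_nonneg : 0 ≤ discordance G x y η := by
  unfold discordance
  positivity

lemma discordance_le_one : discordance G x y η ≤ 1 := by
  unfold discordance
  split_ifs <;> norm_num

end

variable {N : ℕ} (G : SimpleGraph (Fin N)) (θ u : ℝ)

lemma conductance_mul_discordance_update {x y : Fin N} (hxy : x ≠ y) (j : Fin N)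
    (η : Fin N → Bool) :
    voterConductance G θ x j *
        (discordance G x y (Function.update η x (η j)) - discordance G x y η) =
      voterConductance G θ x j * (discordance G j y η - discordance G x y η) := by
  by_cases hadj : G.Adj x j
  · have hreach : G.Reachable j y ↔ G.Reachable x y :=
      ⟨hadj.reachable.trans, hadj.reachable.symm.trans⟩
    simp only [discordance, Function.update_self, Function.update_of_ne hxy.symm, hreach]
  · rw [voterConductance_of_not_adj G θ hadj, zero_mul, zero_mul]

-- The duality: seen from two points, the voter model is a pair of random walks.
lemma voterQ_mulVec_discordance {x y : Fin N} (hxy : x ≠ y) (η : Fin N → Bool) :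
    (voterQ G θ).mulVec (discordance G x y) η =
      pairGenerator (voterConductance G θ) (fun a b => discordance G a b η) x y := by
  rw [voterQ_mulVec_eq_sum_conductance, Fintype.sum_eq_add x y hxy fun i hi =>
    Finset.sum_eq_zero fun j _ => by
      rw [discordance_congr G (Function.update_of_ne hi.1.symm _ η)
        (Function.update_of_ne hi.2.symm _ η), sub_self, mul_zero]]
  refine congrArg₂ (· + ·) (Finset.sum_congr rfl fun j _ => ?_)
    (Finset.sum_congr rfl fun j _ => ?_)
  · exact conductance_mul_discordance_update G θ hxy j η
  · simpa only [discordance_comm G x] using conductance_mul_discordance_update G θ hxy.symm j η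

/-- The probability that at time `t` the vertices `x` and `y` of a common component hold different
opinions. -/
def discordanceProb (t : ℝ) (x y : Fin N) : ℝ :=
  semigroupExpectation (voterQ G θ) (muU u) t (discordance G x y)

/-- The probability that the voter model started from `muU u` has not reached consensus by time
`t`. -/
def nonConsensusProb (t : ℝ) : ℝ := 1 - probConsensusAt G θ u t

variable {G θ u}

lemma discordanceProb_self (t : ℝ) (x : Fin N) : discordanceProb G θ u t x x = 0 := by
  rw [discordanceProb, funext (discordance_self G x)]
  exact map_zero _

lemma discordanceProb_comm (t : ℝ) (x y : Fin N) :
    discordanceProb G θ u t x y = discordanceProb G θ u t y x := by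
  rw [discordanceProb, funext (discordance_comm G x y), discordanceProb]

lemma discordanceProb_of_not_reachable {x y : Fin N} (h : ¬ G.Reachable x y) (t : ℝ) :
    discordanceProb G θ u t x y = 0 := by
  have hzero : discordance G x y = 0 := funext fun η => if_neg fun h' => h h'.1
  rw [discordanceProb, hzero, map_zero]

lemma discordanceProb_nonneg (hu : u ∈ Set.Ioo (0 : ℝ) 1) {t : ℝ} (ht : 0 ≤ t) (x y : Fin N) :
    0 ≤ discordanceProb G θ u t x y :=
  semigroupExpectation_nonneg (voterQ_isGeneratorMatrix G θ) (muU_nonneg hu) ht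
    (discordance_nonneg G x y)

lemma discordanceProb_le_one (hu : u ∈ Set.Ioo (0 : ℝ) 1) {t : ℝ} (ht : 0 ≤ t) (x y : Fin N) :
    discordanceProb G θ u t x y ≤ 1 :=
  semigroupExpectation_le_one (voterQ_isGeneratorMatrix G θ) (muU_nonneg hu) sum_muU ht
    (discordance_le_one G x y)

lemma discordanceProb_zero {x y : Fin N} (hxy : x ≠ y) (hr : G.Reachable x y) :
    discordanceProb G θ u 0 x y = 2 * (u * (1 - u)) := by
  let δ (b c : Bool) : ℝ := if b = c then 1 else 0
  have hsplit (η : Fin N → Bool) : muU u η * discordance G x y η =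
      muU u η * (δ (η x) true * δ (η y) false) + muU u η * (δ (η x) false * δ (η y) true) := by
    cases hx : η x <;> cases hy : η y <;> simp [discordance, δ, hr, hx, hy]
  rw [discordanceProb, semigroupExpectation_zero]
  simp only [hsplit, Finset.sum_add_distrib,
    sum_muU_mul_apply_mul_apply hxy (δ · true) (δ · false),
    sum_muU_mul_apply_mul_apply hxy (δ · false) (δ · true)]
  simp only [δ, if_true, Bool.true_eq_false, Bool.false_eq_true, if_false]
  ring

lemma hasDerivAt_discordanceProb {x y : Fin N} (hxy : x ≠ y) (t : ℝ) :
    HasDerivAt (fun s => discordanceProb G θ u s x y)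
      (pairGenerator (voterConductance G θ) (discordanceProb G θ u t) x y) t := by
  have hgen : (voterQ G θ).mulVec (discordance G x y) =
      ∑ j, voterConductance G θ x j • (discordance G j y - discordance G x y) +
        ∑ j, voterConductance G θ y j • (discordance G x j - discordance G x y) := by
    funext η
    rw [voterQ_mulVec_discordance G θ hxy]
    simp [pairGenerator, walkGenerator]
  have h := hasDerivAt_semigroupExpectation (voterQ G θ) (muU u) (discordance G x y) t
  simp only [hgen, map_add, map_sum, map_smul, map_sub, smul_eq_mul] at h
  exact h

lemma nonConsensusProb_eq (t : ℝ) : nonConsensusProb G θ u t =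
    semigroupExpectation (voterQ G θ) (muU u) t
      (1 - fun η => if η ∈ consensusStates G then 1 else 0) := by
  rw [map_sub, semigroupExpectation_one (voterQ_isGeneratorMatrix G θ), sum_muU,
    semigroupExpectation_apply]
  rfl

lemma nonConsensusProb_nonneg (hu : u ∈ Set.Ioo (0 : ℝ) 1) {t : ℝ} (ht : 0 ≤ t) :
    0 ≤ nonConsensusProb G θ u t := by
  rw [nonConsensusProb_eq]
  refine semigroupExpectation_nonneg (voterQ_isGeneratorMatrix G θ) (muU_nonneg hu) ht fun η => ?_
  simp only [Pi.sub_apply, Pi.one_apply]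
  split_ifs <;> norm_num

lemma nonConsensusProb_le_one (hu : u ∈ Set.Ioo (0 : ℝ) 1) {t : ℝ} (ht : 0 ≤ t) :
    nonConsensusProb G θ u t ≤ 1 := by
  rw [nonConsensusProb_eq]
  refine semigroupExpectation_le_one (voterQ_isGeneratorMatrix G θ) (muU_nonneg hu) sum_muU ht
    fun η => ?_
  simp only [Pi.sub_apply, Pi.one_apply]
  split_ifs <;> norm_num

lemma continuous_nonConsensusProb : Continuous (nonConsensusProb G θ u) := by
  rw [funext nonConsensusProb_eq]
  exact continuous_iff_continuousAt.2 fun t =>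
    (hasDerivAt_semigroupExpectation _ _ _ t).continuousAt

lemma discordanceProb_le_nonConsensusProb (hu : u ∈ Set.Ioo (0 : ℝ) 1) {t : ℝ} (ht : 0 ≤ t)
    (x y : Fin N) : discordanceProb G θ u t x y ≤ nonConsensusProb G θ u t := by
  rw [nonConsensusProb_eq]
  refine semigroupExpectation_mono (voterQ_isGeneratorMatrix G θ) (muU_nonneg hu) ht fun η => ?_
  simp only [Pi.sub_apply, Pi.one_apply]
  by_cases hη : η ∈ consensusStates G
  · have hagree : ¬ (G.Reachable x y ∧ η x ≠ η y) := fun h => h.2 (hη x y h.1)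
    simp [discordance, hη, hagree]
  · simpa [hη] using discordance_le_one G x y η

lemma nonConsensusProb_le_sum_discordanceProb (hu : u ∈ Set.Ioo (0 : ℝ) 1) {t : ℝ} (ht : 0 ≤ t) :
    nonConsensusProb G θ u t ≤ ∑ x, ∑ y, discordanceProb G θ u t x y := by
  simp only [nonConsensusProb_eq, discordanceProb, ← map_sum]
  refine semigroupExpectation_mono (voterQ_isGeneratorMatrix G θ) (muU_nonneg hu) ht fun η => ?_
  simp only [Pi.sub_apply, Pi.one_apply, Finset.sum_apply]
  have hnonneg (x : Fin N) : 0 ≤ ∑ y, discordance G x y η :=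
    Finset.sum_nonneg fun y _ => discordance_nonneg G x y η
  split_ifs with hη
  · simpa using Finset.sum_nonneg fun x _ => hnonneg x
  · obtain ⟨x, y, hr, hne⟩ : ∃ x y, G.Reachable x y ∧ η x ≠ η y := by
      simpa [consensusStates] using hη
    calc (1 : ℝ) - 0 = discordance G x y η := by rw [discordance, if_pos ⟨hr, hne⟩, sub_zero]
      _ ≤ ∑ y, discordance G x y η :=
        Finset.single_le_sum (fun y _ => discordance_nonneg G x y η) (Finset.mem_univ y)
      _ ≤ ∑ x, ∑ y, discordance G x y η :=
        Finset.single_le_sum (fun x _ => hnonneg x) (Finset.mem_univ x)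

end Discordance

section RealAnalysis

open MeasureTheory

lemma le_mul_exp_of_hasDerivAt_le {f f' : ℝ → ℝ} {k : ℝ} (hf : ∀ t, HasDerivAt f (f' t) t)
    (hf' : ∀ t, f' t ≤ -k * f t) {t : ℝ} (ht : 0 ≤ t) : f t ≤ f 0 * Real.exp (-k * t) := by
  have hder (s : ℝ) : HasDerivAt (fun s => f s * Real.exp (k * s))
      (f' s * Real.exp (k * s) + f s * (Real.exp (k * s) * k)) s := by
    simpa using (hf s).fun_mul (((hasDerivAt_id s).const_mul k).exp)
  have hanti : Antitone fun s => f s * Real.exp (k * s) := by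
    refine antitone_of_deriv_nonpos (fun s => (hder s).differentiableAt) fun s => ?_
    rw [(hder s).deriv]
    nlinarith [hf' s, Real.exp_pos (k * s)]
  calc f t = f t * Real.exp (k * t) * Real.exp (-k * t) := by
        rw [mul_assoc, ← Real.exp_add, neg_mul, add_neg_cancel, Real.exp_zero, mul_one]
    _ ≤ f 0 * Real.exp (k * 0) * Real.exp (-k * t) :=
        mul_le_mul_of_nonneg_right (hanti ht) (Real.exp_pos _).le
    _ = f 0 * Real.exp (-k * t) := by rw [mul_zero, Real.exp_zero, mul_one]

lemma integrableOn_Ioi_of_le_mul_exp {f : ℝ → ℝ} (hf : Continuous f) {M k : ℝ} (hk : 0 < k)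
    (hf0 : ∀ t, 0 ≤ t → 0 ≤ f t) (hfM : ∀ t, 0 ≤ t → f t ≤ M * Real.exp (-k * t)) :
    IntegrableOn f (Set.Ioi 0) := by
  refine ((exp_neg_integrableOn_Ioi 0 hk).const_mul M).mono' hf.aestronglyMeasurable
    ((ae_restrict_mem measurableSet_Ioi).mono fun t ht => ?_)
  rw [Real.norm_of_nonneg (hf0 t (le_of_lt ht))]
  exact hfM t (le_of_lt ht)

-- Split at the time `T log M` from which the exponential bound is below `1`.
lemma setIntegral_Ioi_le_of_le_mul_exp {f : ℝ → ℝ} (hf : IntegrableOn f (Set.Ioi 0)) {M T : ℝ}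
    (hT : 0 < T) (hM : 1 ≤ M) (hf1 : ∀ t, 0 ≤ t → f t ≤ 1)
    (hfM : ∀ t, 0 ≤ t → f t ≤ M * Real.exp (-T⁻¹ * t)) :
    ∫ t in Set.Ioi 0, f t ≤ T * (Real.log M + 1) := by
  have hs : 0 ≤ T * Real.log M := mul_nonneg hT.le (Real.log_nonneg hM)
  set s := T * Real.log M
  have hk : 0 < T⁻¹ := inv_pos.2 hT
  have hf_Ioc : IntegrableOn f (Set.Ioc 0 s) := hf.mono_set Set.Ioc_subset_Ioi_self
  have hf_Ioi : IntegrableOn f (Set.Ioi s) := hf.mono_set (Set.Ioi_subset_Ioi hs)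
  have hhead : ∫ t in Set.Ioc 0 s, f t ≤ s := by
    calc ∫ t in Set.Ioc 0 s, f t ≤ ∫ _ in Set.Ioc 0 s, (1 : ℝ) :=
          setIntegral_mono_on hf_Ioc (by simp) measurableSet_Ioc fun t ht => hf1 t ht.1.le
      _ = s := by simp [hs]
  have htail : ∫ t in Set.Ioi s, f t ≤ T := by
    calc ∫ t in Set.Ioi s, f t ≤ ∫ t in Set.Ioi s, M * Real.exp (-T⁻¹ * t) :=
          setIntegral_mono_on hf_Ioi ((exp_neg_integrableOn_Ioi s hk).const_mul M)
            measurableSet_Ioi fun t ht => hfM t (hs.trans (le_of_lt ht))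
      _ = M * (T * Real.exp (-T⁻¹ * s)) := by
          rw [integral_const_mul, integral_exp_mul_Ioi (neg_lt_zero.2 hk)]
          field_simp
      _ = T := by
          have hexp : Real.exp (-T⁻¹ * s) = M⁻¹ := by
            rw [neg_mul, inv_mul_cancel_left₀ hT.ne', Real.exp_neg, Real.exp_log (by linarith)]
          rw [hexp]
          field_simp
  rw [← Set.Ioc_union_Ioi_eq_Ioi hs,
    setIntegral_union (Set.Ioc_disjoint_Ioi le_rfl) measurableSet_Ioi hf_Ioc hf_Ioi]
  linarith

lemma mul_le_setIntegral_Ioi {f : ℝ → ℝ} (hf : IntegrableOn f (Set.Ioi 0)) {a s : ℝ}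
    (hs : 0 ≤ s) (hf0 : ∀ t, 0 ≤ t → 0 ≤ f t) (hfa : ∀ t ∈ Set.Ioc 0 s, a ≤ f t) :
    s * a ≤ ∫ t in Set.Ioi 0, f t := by
  calc s * a = ∫ _ in Set.Ioc 0 s, a := by simp [hs]
    _ ≤ ∫ t in Set.Ioc 0 s, f t :=
        setIntegral_mono_on (by simp) (hf.mono_set Set.Ioc_subset_Ioi_self) measurableSet_Ioc hfa
    _ ≤ ∫ t in Set.Ioi 0, f t :=
        setIntegral_mono_set hf
          ((ae_restrict_mem measurableSet_Ioi).mono fun t ht => hf0 t (le_of_lt ht))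
          (Eventually.of_forall Set.Ioc_subset_Ioi_self)

end RealAnalysis

section ConsensusTime

open MeasureTheory

variable {N : ℕ} {G : SimpleGraph (Fin N)} {θ u : ℝ}

lemma hasDerivAt_sum_discordanceProb_sq (t : ℝ) :
    HasDerivAt (fun s => ∑ x, ∑ y, discordanceProb G θ u s x y ^ 2)
      (-2 * ∑ y, dirichletEnergy (voterConductance G θ) fun x => discordanceProb G θ u t x y)
      t := by
  have hterm (x y : Fin N) : HasDerivAt (fun s => discordanceProb G θ u s x y ^ 2)
      (2 * (discordanceProb G θ u t x y *
        pairGenerator (voterConductance G θ) (discordanceProb G θ u t) x y)) t := by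
    rcases eq_or_ne x y with rfl | hxy
    · simpa [discordanceProb_self] using hasDerivAt_const t (0 : ℝ)
    · refine ((hasDerivAt_discordanceProb hxy t).fun_pow 2).congr_deriv ?_
      rw [Nat.cast_ofNat, pow_one, mul_assoc]
  refine (HasDerivAt.fun_sum fun x _ => HasDerivAt.fun_sum fun y _ => hterm x y).congr_deriv ?_
  simp only [← Finset.mul_sum]
  rw [sum_mul_pairGenerator_self (voterConductance_comm G θ) (discordanceProb_comm t)]
  ring

lemma sum_discordanceProb_sq_le (hu : u ∈ Set.Ioo (0 : ℝ) 1) {T : ℝ} (hT : 0 < T)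
    (hP : PairPoincare G (voterConductance G θ) T) {t : ℝ} (ht : 0 ≤ t) :
    ∑ x, ∑ y, discordanceProb G θ u t x y ^ 2 ≤ (N : ℝ) ^ 2 * Real.exp (-(2 / T) * t) := by
  refine (le_mul_exp_of_hasDerivAt_le (k := 2 / T) hasDerivAt_sum_discordanceProb_sq
    (fun s => ?_) ht).trans (mul_le_mul_of_nonneg_right ?_ (Real.exp_pos _).le)
  · have hpoincare := hP (discordanceProb G θ u s) (discordanceProb_self s)
      (discordanceProb_comm s) fun x y h => discordanceProb_of_not_reachable h s
    rw [neg_mul, neg_mul, neg_le_neg_iff, div_mul_eq_mul_div, div_le_iff₀ hT]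
    linarith
  · calc ∑ x, ∑ y, discordanceProb G θ u 0 x y ^ 2 ≤ ∑ _x : Fin N, ∑ _y : Fin N, (1 : ℝ) :=
          Finset.sum_le_sum fun x _ => Finset.sum_le_sum fun y _ =>
            pow_le_one₀ (discordanceProb_nonneg hu le_rfl x y)
              (discordanceProb_le_one hu le_rfl x y)
      _ = (N : ℝ) ^ 2 := by simp [sq]

lemma nonConsensusProb_le_mul_exp (hu : u ∈ Set.Ioo (0 : ℝ) 1) {T : ℝ} (hT : 0 < T)
    (hP : PairPoincare G (voterConductance G θ) T) {t : ℝ} (ht : 0 ≤ t) :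
    nonConsensusProb G θ u t ≤ (N : ℝ) ^ 2 * Real.exp (-T⁻¹ * t) := by
  refine (nonConsensusProb_le_sum_discordanceProb hu ht).trans
    (abs_le_of_sq_le_sq' ?_ (by positivity)).2
  have hcauchy : (∑ x, ∑ y, discordanceProb G θ u t x y) ^ 2 ≤
      (N : ℝ) ^ 2 * ∑ x, ∑ y, discordanceProb G θ u t x y ^ 2 := by
    simpa [Fintype.sum_prod_type, sq] using sq_sum_le_card_mul_sum_sq
      (s := (Finset.univ : Finset (Fin N × Fin N)))
      (f := fun p => discordanceProb G θ u t p.1 p.2)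
  calc (∑ x, ∑ y, discordanceProb G θ u t x y) ^ 2
      ≤ (N : ℝ) ^ 2 * ((N : ℝ) ^ 2 * Real.exp (-(2 / T) * t)) :=
        hcauchy.trans (mul_le_mul_of_nonneg_left (sum_discordanceProb_sq_le hu hT hP ht)
          (by positivity))
    _ = ((N : ℝ) ^ 2 * Real.exp (-T⁻¹ * t)) ^ 2 := by
        rw [mul_pow, ← Real.exp_nat_mul, ← mul_assoc, ← sq]
        congr 2
        push_cast
        ring

lemma integrableOn_nonConsensusProb (hu : u ∈ Set.Ioo (0 : ℝ) 1) {T : ℝ} (hT : 0 < T)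
    (hP : PairPoincare G (voterConductance G θ) T) :
    IntegrableOn (nonConsensusProb G θ u) (Set.Ioi 0) :=
  integrableOn_Ioi_of_le_mul_exp continuous_nonConsensusProb (inv_pos.2 hT)
    (fun _ ht => nonConsensusProb_nonneg hu ht)
    fun _ ht => nonConsensusProb_le_mul_exp hu hT hP ht

lemma expectedConsensusTime_le (hu : u ∈ Set.Ioo (0 : ℝ) 1) {T : ℝ} (hT : 0 < T) (hN : 1 ≤ N)
    (hP : PairPoincare G (voterConductance G θ) T) :
    expectedConsensusTime G θ u ≤ T * (2 * Real.log N + 1) := by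
  have hN' : (1 : ℝ) ≤ (N : ℝ) ^ 2 := one_le_pow₀ (by exact_mod_cast hN)
  have h := setIntegral_Ioi_le_of_le_mul_exp (integrableOn_nonConsensusProb hu hT hP) hT hN'
    (fun _ ht => nonConsensusProb_le_one hu ht)
    fun _ ht => nonConsensusProb_le_mul_exp hu hT hP ht
  rwa [Real.log_pow] at h

/-- The number of ordered pairs of vertices lying in a common component. -/
def reachablePairCount {V : Type*} [Fintype V] (G : SimpleGraph V) : ℕ :=
  (Finset.univ.filter fun p : V × V => G.Reachable p.1 p.2).card

lemma natCast_reachablePairCount {V : Type*} [Fintype V] (G : SimpleGraph V) :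
    (reachablePairCount G : ℝ) = ∑ x, ∑ y, if G.Reachable x y then 1 else 0 := by
  rw [reachablePairCount, Finset.natCast_card_filter, Fintype.sum_prod_type]

lemma sum_discordanceProb_zero : ∑ x, ∑ y, discordanceProb G θ u 0 x y =
    2 * (u * (1 - u)) * (reachablePairCount G - N) := by
  have hterm (x y : Fin N) : discordanceProb G θ u 0 x y =
      2 * (u * (1 - u)) * ((if G.Reachable x y then 1 else 0) - if x = y then 1 else 0) := by
    rcases eq_or_ne x y with rfl | hxy
    · simp [discordanceProb_self]
    · by_cases hr : G.Reachable x y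
      · simp [discordanceProb_zero hxy hr, hr, hxy]
      · simp [discordanceProb_of_not_reachable hr, hr, hxy]
  simp only [hterm, ← Finset.mul_sum, Finset.sum_sub_distrib, natCast_reachablePairCount,
    Finset.sum_ite_eq, Finset.mem_univ, if_true, Finset.sum_const, Finset.card_univ,
    Fintype.card_fin, nsmul_eq_mul, mul_one]
  congr!

lemma sum_discordanceProb_le_mul_nonConsensusProb (hu : u ∈ Set.Ioo (0 : ℝ) 1) {t : ℝ}
    (ht : 0 ≤ t) : ∑ x, ∑ y, discordanceProb G θ u t x y ≤
      reachablePairCount G * nonConsensusProb G θ u t := by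
  rw [natCast_reachablePairCount]
  simp only [Finset.sum_mul]
  refine Finset.sum_le_sum fun x _ => Finset.sum_le_sum fun y _ => ?_
  split_ifs with h
  · simpa using discordanceProb_le_nonConsensusProb hu ht x y
  · rw [discordanceProb_of_not_reachable h, zero_mul]

lemma hasDerivAt_sum_discordanceProb (t : ℝ) :
    HasDerivAt (fun s => ∑ x, ∑ y, discordanceProb G θ u s x y)
      (-(2 * ∑ x, ∑ j, voterConductance G θ x j * discordanceProb G θ u t x j)) t := by
  set c := voterConductance G θ
  set P := discordanceProb G θ u t
  have hterm (x y : Fin N) : HasDerivAt (fun s => discordanceProb G θ u s x y)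
      (pairGenerator c P x y - if x = y then pairGenerator c P x y else 0) t := by
    rcases eq_or_ne x y with rfl | hxy
    · simpa [discordanceProb_self] using hasDerivAt_const t (0 : ℝ)
    · simpa [hxy] using hasDerivAt_discordanceProb hxy t
  have htotal : ∑ x, ∑ y, pairGenerator c P x y = 0 := by
    have hfirst : ∑ x, ∑ y, walkGenerator c (fun z => P z y) x = 0 := by
      rw [Finset.sum_comm]
      simp only [sum_walkGenerator (voterConductance_comm G θ), Finset.sum_const_zero, c]
    simp only [pairGenerator, Finset.sum_add_distrib, hfirst, zero_add,
      sum_walkGenerator (voterConductance_comm G θ), Finset.sum_const_zero, c]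
  have hdiag (x : Fin N) : pairGenerator c P x x = 2 * ∑ j, c x j * P x j := by
    simp only [pairGenerator, walkGenerator, P, discordanceProb_self, sub_zero,
      discordanceProb_comm t _ x, two_mul]
  refine (HasDerivAt.fun_sum fun x _ => HasDerivAt.fun_sum fun y _ => hterm x y).congr_deriv ?_
  simp only [Finset.sum_sub_distrib, Finset.sum_ite_eq, Finset.mem_univ, if_true, htotal, hdiag,
    zero_sub, Finset.mul_sum]

lemma sum_discordanceProb_ge (hu : u ∈ Set.Ioo (0 : ℝ) 1) {S : ℝ}
    (hS : ∑ i, (G.degree i : ℝ) * vertexRate G θ i ≤ S) {t : ℝ} (ht : 0 ≤ t) :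
    ∑ x, ∑ y, discordanceProb G θ u 0 x y - 2 * S * t ≤
      ∑ x, ∑ y, discordanceProb G θ u t x y := by
  have hder (s : ℝ) := (hasDerivAt_sum_discordanceProb (G := G) (θ := θ) (u := u) s).add
    (by simpa using (hasDerivAt_id s).const_mul (2 * S))
  have hmono : MonotoneOn
      ((fun s => ∑ x, ∑ y, discordanceProb G θ u s x y) + fun s => 2 * S * s) (Set.Ici 0) := by
    refine monotoneOn_of_deriv_nonneg (convex_Ici 0)
      (fun s _ => (hder s).continuousAt.continuousWithinAt)
      (fun s _ => (hder s).differentiableAt.differentiableWithinAt) fun s hs => ?_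
    rw [interior_Ici] at hs
    have hmeet : ∑ x, ∑ j, voterConductance G θ x j * discordanceProb G θ u s x j ≤ S := by
      refine le_trans ?_ ((sum_sum_voterConductance G θ).trans_le hS)
      exact Finset.sum_le_sum fun x _ => Finset.sum_le_sum fun j _ => mul_le_of_le_one_right
        (voterConductance_nonneg G θ x j) (discordanceProb_le_one hu (le_of_lt hs) x j)
    rw [(hder s).deriv]
    linarith
  have h := hmono (Set.mem_Ici.2 le_rfl) (Set.mem_Ici.2 ht) ht
  simp only [Pi.add_apply, mul_zero, add_zero] at h
  linarith

-- Before time `u(1-u)R/(4S)` too few pairs have met for the discordance to be halved.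
lemma le_expectedConsensusTime (hu : u ∈ Set.Ioo (0 : ℝ) 1)
    (hint : IntegrableOn (nonConsensusProb G θ u) (Set.Ioi 0)) {S : ℝ} (hS : 0 < S)
    (hdeg : ∑ i, (G.degree i : ℝ) * vertexRate G θ i ≤ S) (hN : 1 ≤ N)
    (hR : 2 * N ≤ reachablePairCount G) :
    (u * (1 - u)) ^ 2 * reachablePairCount G / (8 * S) ≤ expectedConsensusTime G θ u := by
  have hN' : (1 : ℝ) ≤ N := by exact_mod_cast hN
  have hR' : 2 * (N : ℝ) ≤ reachablePairCount G := by exact_mod_cast hR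
  set R : ℝ := (reachablePairCount G : ℝ)
  set w : ℝ := u * (1 - u)
  have hw : 0 < w := mul_pos hu.1 (by linarith [hu.2])
  have hearly : ∀ t ∈ Set.Ioc 0 (w * R / (4 * S)), w / 2 ≤ nonConsensusProb G θ u t := by
    intro t ht
    have hupper := sum_discordanceProb_le_mul_nonConsensusProb (G := G) (θ := θ) hu ht.1.le
    have hlower := sum_discordanceProb_ge hu hdeg ht.1.le
    have hinit := sum_discordanceProb_zero (G := G) (θ := θ) (u := u)
    have hloss : t * (4 * S) ≤ w * R := (le_div_iff₀ (by positivity)).1 ht.2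
    refine le_of_mul_le_mul_left ?_ (by linarith : 0 < R)
    nlinarith
  have h := mul_le_setIntegral_Ioi hint (by positivity)
    (fun _ ht => nonConsensusProb_nonneg hu ht) hearly
  refine le_trans (le_of_eq ?_) h
  field_simp
  ring

end ConsensusTime

section Cheeger

variable {V : Type*} (G : SimpleGraph V)

/-- Unweighted Dirichlet energy of `f` over the pairs in `S ×ˢ T`. -/
def edgeEnergy (S T : Finset V) (f : V → ℝ) : ℝ :=
  ∑ x ∈ S, ∑ y ∈ T, G.adjMatrix ℝ x y * (f x - f y) ^ 2

/-- Every subset of at most half of `A` has at least as many boundary edges inside `A` as it has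
vertices. -/
def Expands (A : Finset V) : Prop :=
  ∀ S ⊆ A, 2 * S.card ≤ A.card → (S.card : ℝ) ≤ ∑ x ∈ S, ∑ y ∈ A \ S, G.adjMatrix ℝ x y

lemma adjMatrix_nonneg (x y : V) : 0 ≤ G.adjMatrix ℝ x y := by
  rw [SimpleGraph.adjMatrix_apply]
  split_ifs <;> norm_num

lemma adjMatrix_comm (x y : V) : G.adjMatrix ℝ x y = G.adjMatrix ℝ y x := by
  simp only [SimpleGraph.adjMatrix_apply, G.adj_comm]

variable {G} in
lemma adjMatrix_of_adj {x y : V} (h : G.Adj x y) : G.adjMatrix ℝ x y = 1 := by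
  rw [SimpleGraph.adjMatrix_apply, if_pos h]

lemma sum_adjMatrix [Fintype V] (x : V) : ∑ y, G.adjMatrix ℝ x y = G.degree x := by
  simp only [SimpleGraph.adjMatrix_apply, Finset.sum_boole,
    ← SimpleGraph.card_neighborFinset_eq_degree, SimpleGraph.neighborFinset_eq_filter]

lemma sum_adjMatrix_le_degree [Fintype V] (A : Finset V) (x : V) :
    ∑ y ∈ A, G.adjMatrix ℝ x y ≤ G.degree x := by
  rw [← sum_adjMatrix]
  exact Finset.sum_le_univ_sum_of_nonneg (adjMatrix_nonneg G x)

lemma edgeEnergy_term_nonneg (f : V → ℝ) (x y : V) :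
    0 ≤ G.adjMatrix ℝ x y * (f x - f y) ^ 2 :=
  mul_nonneg (adjMatrix_nonneg G x y) (sq_nonneg _)

lemma edgeEnergy_nonneg (S T : Finset V) (f : V → ℝ) : 0 ≤ edgeEnergy G S T f :=
  Finset.sum_nonneg fun x _ => Finset.sum_nonneg fun y _ => edgeEnergy_term_nonneg G f x y

variable {G} in
lemma edgeEnergy_mono_right {S T T' : Finset V} (h : T ⊆ T') (f : V → ℝ) :
    edgeEnergy G S T f ≤ edgeEnergy G S T' f :=
  Finset.sum_le_sum fun x _ =>
    Finset.sum_le_sum_of_subset_of_nonneg h fun y _ _ => edgeEnergy_term_nonneg G f x y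

lemma edgeEnergy_comp_le {φ : ℝ → ℝ} (hφ : ∀ a b, |φ a - φ b| ≤ |a - b|) (S T : Finset V)
    (f : V → ℝ) : edgeEnergy G S T (φ ∘ f) ≤ edgeEnergy G S T f :=
  Finset.sum_le_sum fun x _ => Finset.sum_le_sum fun y _ =>
    mul_le_mul_of_nonneg_left (sq_le_sq.2 (hφ _ _)) (adjMatrix_nonneg G x y)

lemma abs_sub_add_indicator {S : Set V} {w : V → ℝ} (hw : ∀ x, 0 ≤ w x)
    (hS : ∀ x ∉ S, w x = 0) {δ : ℝ} (hδ : 0 ≤ δ) (x y : V) :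
    |w x - w y| + δ * |S.indicator 1 x - S.indicator (1 : V → ℝ) y| =
      |w x + δ * S.indicator 1 x - (w y + δ * S.indicator 1 y)| := by
  by_cases hx : x ∈ S <;> by_cases hy : y ∈ S
  · simp [hx, hy]
  · simp [hx, hy, hS y hy, abs_of_nonneg, hw x, hδ, add_nonneg]
  · rw [abs_sub_comm (w x + _)]
    simp [hx, hy, hS x hx, abs_of_nonneg, hw y, hδ, add_nonneg]
  · simp [hx, hy]

variable {G} in
lemma Expands.card_le_sum_abs_indicator {A S : Finset V} (hA : Expands G A) (hSA : S ⊆ A)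
    (hS : 2 * S.card ≤ A.card) :
    (S.card : ℝ) ≤ ∑ x ∈ A, ∑ y ∈ A, G.adjMatrix ℝ x y *
      |(S : Set V).indicator 1 x - (S : Set V).indicator (1 : V → ℝ) y| := by
  have hnonneg : ∀ x y, 0 ≤ G.adjMatrix ℝ x y *
      |(S : Set V).indicator 1 x - (S : Set V).indicator (1 : V → ℝ) y| := fun x y =>
    mul_nonneg (adjMatrix_nonneg G x y) (abs_nonneg _)
  calc (S.card : ℝ) ≤ ∑ x ∈ S, ∑ y ∈ A \ S, G.adjMatrix ℝ x y := hA S hSA hS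
    _ = ∑ x ∈ S, ∑ y ∈ A \ S, G.adjMatrix ℝ x y *
          |(S : Set V).indicator 1 x - (S : Set V).indicator (1 : V → ℝ) y| :=
        Finset.sum_congr rfl fun x hx => Finset.sum_congr rfl fun y hy => by
          simp [hx, (Finset.mem_sdiff.1 hy).2]
    _ ≤ ∑ x ∈ S, ∑ y ∈ A, _ := Finset.sum_le_sum fun x _ =>
        Finset.sum_le_sum_of_subset_of_nonneg Finset.sdiff_subset fun y _ _ => hnonneg x y
    _ ≤ _ := Finset.sum_le_sum_of_subset_of_nonneg hSA fun x _ _ =>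
        Finset.sum_nonneg fun y _ => hnonneg x y

-- Induction over the level sets of `v`: lower `v` on `S` by its minimum there and apply the
-- expansion of `S` to the slice removed.
variable {G} in
lemma Expands.sum_le_sum_abs_sub {A : Finset V} (hA : Expands G A) {S : Finset V} (hSA : S ⊆ A)
    (hS : 2 * S.card ≤ A.card) {v : V → ℝ} (hv : ∀ x, 0 ≤ v x)
    (hvS : ∀ x ∈ A, x ∉ S → v x = 0) :
    ∑ x ∈ A, v x ≤ ∑ x ∈ A, ∑ y ∈ A, G.adjMatrix ℝ x y * |v x - v y| := by
  induction S using Finset.strongInduction generalizing v with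
  | H S ih =>
  rcases S.eq_empty_or_nonempty with rfl | hne
  · rw [Finset.sum_eq_zero fun x hx => hvS x hx (Finset.notMem_empty x)]
    exact Finset.sum_nonneg fun x _ => Finset.sum_nonneg fun y _ =>
      mul_nonneg (adjMatrix_nonneg G x y) (abs_nonneg _)
  obtain ⟨x₀, hx₀, hmin⟩ := Finset.exists_min_image S v hne
  set I : V → ℝ := (S : Set V).indicator 1
  set w : V → ℝ := fun x => if x ∈ S then v x - v x₀ else 0 with hw
  have hw_nonneg : ∀ x, 0 ≤ w x := fun x => by
    rw [hw]; dsimp only; split_ifs with h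
    exacts [sub_nonneg.2 (hmin x h), le_rfl]
  have hw_zero : ∀ x ∉ S, w x = 0 := fun x h => if_neg h
  have hv_eq : ∀ x ∈ A, v x = w x + v x₀ * I x := fun x hx => by
    by_cases h : x ∈ S
    · simp [hw, I, h]
    · simp [hw, I, h, hvS x hx h]
  have hw_sum := ih (S.erase x₀) (Finset.erase_ssubset hx₀) ((Finset.erase_subset _ _).trans hSA)
    ((Nat.mul_le_mul_left 2 (Finset.card_erase_le)).trans hS) hw_nonneg fun x _ hx => by
      by_cases h : x ∈ S
      · obtain rfl : x = x₀ := by_contra fun hne => hx (Finset.mem_erase.2 ⟨hne, h⟩)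
        simp [hw]
      · exact hw_zero x h
  calc ∑ x ∈ A, v x = ∑ x ∈ A, w x + v x₀ * S.card := by
        rw [Finset.sum_congr rfl hv_eq, Finset.sum_add_distrib, ← Finset.mul_sum]
        simp [I, Set.indicator_apply, Finset.inter_eq_right.2 hSA]
    _ ≤ (∑ x ∈ A, ∑ y ∈ A, G.adjMatrix ℝ x y * |w x - w y|) +
          v x₀ * ∑ x ∈ A, ∑ y ∈ A, G.adjMatrix ℝ x y * |I x - I y| :=
        add_le_add hw_sum
          (mul_le_mul_of_nonneg_left (hA.card_le_sum_abs_indicator hSA hS) (hv x₀))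
    _ = ∑ x ∈ A, ∑ y ∈ A, G.adjMatrix ℝ x y * |v x - v y| := by
        simp only [Finset.mul_sum, ← Finset.sum_add_distrib]
        refine Finset.sum_congr rfl fun x hx => Finset.sum_congr rfl fun y hy => ?_
        rw [hv_eq x hx, hv_eq y hy, ← abs_sub_add_indicator hw_nonneg hw_zero (hv x₀)]
        ring

lemma abs_sq_sub_sq_le {K : ℝ} (hK : 0 < K) (a b : ℝ) :
    |a ^ 2 - b ^ 2| ≤ 2 * K * (a - b) ^ 2 + (a ^ 2 + b ^ 2) / (4 * K) := by
  have hfactor : |a ^ 2 - b ^ 2| = |a - b| * |a + b| := by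
    rw [← abs_mul]
    ring_nf
  have hsquare : 2 * K * (a - b) ^ 2 + (a ^ 2 + b ^ 2) / (4 * K) - |a - b| * |a + b| =
      ((4 * K * |a - b| - |a + b|) ^ 2 + (a - b) ^ 2) / (8 * K) := by
    field_simp
    linear_combination (-64 * K ^ 2) * sq_abs (a - b) - 4 * sq_abs (a + b)
  have : 0 ≤ ((4 * K * |a - b| - |a + b|) ^ 2 + (a - b) ^ 2) / (8 * K) := by positivity
  linarith

variable {G} in
lemma sum_sum_adjMatrix_mul_le [Fintype V] {A : Finset V} {K : ℝ}
    (hdeg : ∀ x ∈ A, (G.degree x : ℝ) ≤ K) {v : V → ℝ} (hv : ∀ x, 0 ≤ v x) :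
    ∑ x ∈ A, ∑ y ∈ A, G.adjMatrix ℝ x y * v x ≤ K * ∑ x ∈ A, v x := by
  simp only [Finset.mul_sum, ← Finset.sum_mul]
  exact Finset.sum_le_sum fun x hx =>
    mul_le_mul_of_nonneg_right ((sum_adjMatrix_le_degree G A x).trans (hdeg x hx)) (hv x)

variable {G} in
lemma Expands.sum_sq_le_of_support [Fintype V] {A : Finset V} (hA : Expands G A) {K : ℝ}
    (hK : 0 < K) (hdeg : ∀ x ∈ A, (G.degree x : ℝ) ≤ K) {g : V → ℝ}
    (hg : 2 * (A.filter (g · ≠ 0)).card ≤ A.card) :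
    ∑ x ∈ A, g x ^ 2 ≤ 4 * K * edgeEnergy G A A g := by
  have hvariation : ∑ x ∈ A, g x ^ 2 ≤
      ∑ x ∈ A, ∑ y ∈ A, G.adjMatrix ℝ x y * |g x ^ 2 - g y ^ 2| :=
    hA.sum_le_sum_abs_sub (Finset.filter_subset _ _) hg (fun x => sq_nonneg (g x))
      fun x hx hxg => by simpa [hx] using hxg
  have hmass := sum_sum_adjMatrix_mul_le hdeg fun x => sq_nonneg (g x)
  have hmass' : ∑ x ∈ A, ∑ y ∈ A, G.adjMatrix ℝ x y * g y ^ 2 ≤ K * ∑ x ∈ A, g x ^ 2 := by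
    rw [Finset.sum_comm]
    simpa only [adjMatrix_comm G] using hmass
  have hbound : ∑ x ∈ A, ∑ y ∈ A, G.adjMatrix ℝ x y * |g x ^ 2 - g y ^ 2| ≤
      2 * K * edgeEnergy G A A g + (∑ x ∈ A, ∑ y ∈ A, G.adjMatrix ℝ x y * g x ^ 2 +
        ∑ x ∈ A, ∑ y ∈ A, G.adjMatrix ℝ x y * g y ^ 2) / (4 * K) := by
    simp only [edgeEnergy, Finset.mul_sum, ← Finset.sum_add_distrib, Finset.sum_div]
    refine Finset.sum_le_sum fun x _ => Finset.sum_le_sum fun y _ => ?_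
    calc _ ≤ G.adjMatrix ℝ x y * _ :=
          mul_le_mul_of_nonneg_left (abs_sq_sub_sq_le hK (g x) (g y)) (adjMatrix_nonneg G x y)
      _ = _ := by ring
  have hhalf : (∑ x ∈ A, ∑ y ∈ A, G.adjMatrix ℝ x y * g x ^ 2 +
      ∑ x ∈ A, ∑ y ∈ A, G.adjMatrix ℝ x y * g y ^ 2) / (4 * K) ≤ (∑ x ∈ A, g x ^ 2) / 2 := by
    rw [div_le_iff₀ (by positivity)]
    linarith
  linarith

lemma exists_median {ι : Type*} {A : Finset ι} (hA : A.Nonempty) (f : ι → ℝ) :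
    ∃ m : ℝ, 2 * (A.filter (f · < m)).card ≤ A.card ∧ 2 * (A.filter (m < f ·)).card ≤ A.card := by
  have hlow : (A.filter fun a => 2 * (A.filter (f · < f a)).card ≤ A.card).Nonempty := by
    obtain ⟨a, ha, hmin⟩ := Finset.exists_min_image A f hA
    refine ⟨a, Finset.mem_filter.2 ⟨ha, ?_⟩⟩
    rw [Finset.filter_false_of_mem fun x hx => not_lt.2 (hmin x hx)]
    simp
  obtain ⟨a, ha, hmax⟩ := Finset.exists_max_image _ f hlow
  refine ⟨f a, (Finset.mem_filter.1 ha).2, ?_⟩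
  by_contra! hlarge
  obtain ⟨b, hb, hbmin⟩ := Finset.exists_min_image (A.filter (f a < f ·)) f
    (Finset.card_pos.1 (by omega))
  obtain ⟨hbA, hab⟩ := Finset.mem_filter.1 hb
  have hsplit := Finset.card_filter_add_card_filter_not (s := A) (f a < f ·)
  have hsub : A.filter (f · < f b) ⊆ A.filter (¬ f a < f ·) := fun x hx => by
    obtain ⟨hxA, hxb⟩ := Finset.mem_filter.1 hx
    exact Finset.mem_filter.2 ⟨hxA, fun h =>
      (hbmin x (Finset.mem_filter.2 ⟨hxA, h⟩)).not_gt hxb⟩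
  have hcard := Finset.card_le_card hsub
  exact (hmax b (Finset.mem_filter.2 ⟨hbA, by omega⟩)).not_gt hab

-- Applied to the positive and negative parts of `f - m` for a median `m`, each supported on at
-- most half of `A`.
variable {G} in
lemma Expands.exists_sum_sub_sq_le [Fintype V] {A : Finset V} (hA : Expands G A)
    (hne : A.Nonempty) {K : ℝ} (hK : 0 < K) (hdeg : ∀ x ∈ A, (G.degree x : ℝ) ≤ K) (f : V → ℝ) :
    ∃ m : ℝ, ∑ x ∈ A, (f x - m) ^ 2 ≤ 8 * K * edgeEnergy G A A f := by
  obtain ⟨m, hbelow, habove⟩ := exists_median hne f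
  refine ⟨m, ?_⟩
  have htruncate : ∀ {φ : ℝ → ℝ}, (∀ a b, |φ a - φ b| ≤ |a - b|) →
      2 * (A.filter fun x => φ (f x) ≠ 0).card ≤ A.card →
      ∑ x ∈ A, φ (f x) ^ 2 ≤ 4 * K * edgeEnergy G A A f := fun hφ hsupp =>
    (hA.sum_sq_le_of_support hK hdeg hsupp).trans
      (mul_le_mul_of_nonneg_left (edgeEnergy_comp_le G hφ A A f) (by positivity))
  have hpos := htruncate (φ := fun a => max (a - m) 0)
    (fun a b => (abs_max_sub_max_le_abs _ _ _).trans_eq (by ring_nf)) (by simpa using habove)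
  have hneg := htruncate (φ := fun a => max (m - a) 0)
    (fun a b => (abs_max_sub_max_le_abs _ _ _).trans_eq (by rw [abs_sub_comm]; ring_nf))
    (by simpa using hbelow)
  have hparts : ∑ x ∈ A, (f x - m) ^ 2 =
      ∑ x ∈ A, max (f x - m) 0 ^ 2 + ∑ x ∈ A, max (m - f x) 0 ^ 2 := by
    rw [← Finset.sum_add_distrib]
    refine Finset.sum_congr rfl fun x _ => ?_
    rcases le_total (f x) m with h | h
    · rw [max_eq_right (sub_nonpos.2 h), max_eq_left (sub_nonneg.2 h)]; ring
    · rw [max_eq_left (sub_nonneg.2 h), max_eq_right (sub_nonpos.2 h)]; ring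
  linarith

end Cheeger

section ConnectedSets

variable {V : Type*} {G : SimpleGraph V}

variable (G) in
/-- The vertex set `S` is nonempty and induces a connected subgraph of `G`. -/
def ConnectedOn (S : Finset V) : Prop := (G.induce (S : Set V)).Connected

lemma ConnectedOn.nonempty {S : Finset V} (hS : ConnectedOn G S) : S.Nonempty :=
  let ⟨x, hx⟩ := SimpleGraph.Connected.nonempty hS
  ⟨x, hx⟩

lemma connectedOn_singleton (x : V) : ConnectedOn G {x} := by
  rw [ConnectedOn, Finset.coe_singleton, SimpleGraph.induce_singleton_eq_top]
  exact SimpleGraph.connected_top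

lemma ConnectedOn.union {S T : Finset V} (hS : ConnectedOn G S) (hT : ConnectedOn G T)
    (hST : ¬ Disjoint S T) : ConnectedOn G (S ∪ T) := by
  rw [ConnectedOn, Finset.coe_union]
  refine SimpleGraph.induce_union_connected hS.preconnected hT.preconnected ?_
  simpa only [← Finset.coe_inter, Finset.coe_nonempty, Finset.not_disjoint_iff_nonempty_inter]
    using hST

lemma ConnectedOn.union_of_adj {S T : Finset V} (hS : ConnectedOn G S) (hT : ConnectedOn G T)
    {x y : V} (hx : x ∈ S) (hy : y ∈ T) (hxy : G.Adj x y) : ConnectedOn G (S ∪ T) := by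
  have hpair : ConnectedOn G {x, y} := by
    rw [ConnectedOn, Finset.coe_pair]
    exact SimpleGraph.induce_pair_connected_of_adj hxy
  have hunion := (hS.union hpair (Finset.not_disjoint_iff.2 ⟨x, hx, by simp⟩)).union hT
    (Finset.not_disjoint_iff.2 ⟨y, by simp, hy⟩)
  rwa [show S ∪ {x, y} ∪ T = S ∪ T by ext; simp; aesop] at hunion

lemma ConnectedOn.insert_of_adj {S : Finset V} (hS : ConnectedOn G S) {x y : V} (hx : x ∈ S)
    (hxy : G.Adj x y) : ConnectedOn G (insert y S) := by
  rw [Finset.insert_eq, Finset.union_comm]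
  exact hS.union_of_adj (connectedOn_singleton y) hx (Finset.mem_singleton_self y) hxy

lemma ConnectedOn.mono {G' : SimpleGraph V} (hG : G ≤ G') {S : Finset V} (hS : ConnectedOn G S) :
    ConnectedOn G' S :=
  SimpleGraph.Connected.mono (SimpleGraph.comap_monotone _ hG) hS

lemma ConnectedOn.reachable {S : Finset V} (hS : ConnectedOn G S) {x y : V} (hx : x ∈ S)
    (hy : y ∈ S) : G.Reachable x y :=
  (hS.preconnected ⟨x, hx⟩ ⟨y, hy⟩).map (SimpleGraph.Embedding.induce _).toHom

lemma ConnectedOn.exists_adj_of_ssubset {S T : Finset V} (hS : ConnectedOn G S) (hTS : T ⊂ S)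
    (hT : T.Nonempty) : ∃ x ∈ T, ∃ y ∈ S \ T, G.Adj x y := by
  obtain ⟨x, hx⟩ := hT
  obtain ⟨y, hyS, hyT⟩ := Finset.exists_of_ssubset hTS
  obtain ⟨p⟩ := hS.preconnected ⟨x, hTS.1 hx⟩ ⟨y, hyS⟩
  obtain ⟨d, -, hfst, hsnd⟩ := p.exists_boundary_dart (Subtype.val ⁻¹' (T : Set V)) hx hyT
  exact ⟨d.fst, hfst, d.snd, Finset.mem_sdiff.2 ⟨d.snd.2, hsnd⟩, d.adj⟩

lemma ConnectedOn.exists_subset_card_eq {S : Finset V} (hS : ConnectedOn G S) {k : ℕ}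
    (hk : 1 ≤ k) (hkS : k ≤ S.card) : ∃ T ⊆ S, ConnectedOn G T ∧ T.card = k := by
  induction k, hk using Nat.le_induction with
  | base =>
    obtain ⟨x, hx⟩ := hS.nonempty
    exact ⟨{x}, Finset.singleton_subset_iff.2 hx, connectedOn_singleton x,
      Finset.card_singleton x⟩
  | succ k _ ih =>
    obtain ⟨T, hTS, hT, hcard⟩ := ih (by omega)
    obtain ⟨x, hx, y, hy, hxy⟩ := hS.exists_adj_of_ssubset
      (Finset.ssubset_iff_subset_ne.2 ⟨hTS, by rintro rfl; omega⟩) hT.nonempty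
    obtain ⟨hyS, hyT⟩ := Finset.mem_sdiff.1 hy
    exact ⟨insert y T, Finset.insert_subset hyS hTS, hT.insert_of_adj hx hxy, by
      rw [Finset.card_insert_of_notMem hyT, hcard]⟩

lemma abs_sub_le_length_mul {W : Type*} {H : SimpleGraph W} {f : W → ℝ} {δ : ℝ}
    (hf : ∀ a b, H.Adj a b → |f a - f b| ≤ δ) {x y : W} (p : H.Walk x y) :
    |f x - f y| ≤ p.length * δ := by
  induction p with
  | nil => simp
  | @cons u v w h p ih =>
    have hsplit := abs_sub_le (f u) (f v) (f w)
    have hstep := hf u v h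
    push_cast [SimpleGraph.Walk.length_cons]
    linarith

lemma ConnectedOn.sq_sub_le {S : Finset V} (hS : ConnectedOn G S) (f : V → ℝ) {x y : V}
    (hx : x ∈ S) (hy : y ∈ S) : (f x - f y) ^ 2 ≤ (S.card : ℝ) ^ 2 * edgeEnergy G S S f := by
  have hedge : ∀ a b : (S : Set V), (G.induce (S : Set V)).Adj a b →
      |f a - f b| ≤ √(edgeEnergy G S S f) := fun a b hab => by
    refine Real.abs_le_sqrt ?_
    calc (f a - f b) ^ 2 = G.adjMatrix ℝ a b * (f a - f b) ^ 2 := by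
          rw [adjMatrix_of_adj (show G.Adj a b from hab), one_mul]
      _ ≤ ∑ z ∈ S, G.adjMatrix ℝ a z * (f a - f z) ^ 2 :=
          Finset.single_le_sum (f := fun z => G.adjMatrix ℝ a z * (f a - f z) ^ 2)
            (fun z _ => edgeEnergy_term_nonneg G f a z) b.2
      _ ≤ edgeEnergy G S S f :=
          Finset.single_le_sum (f := fun w => ∑ z ∈ S, G.adjMatrix ℝ w z * (f w - f z) ^ 2)
            (fun w _ => Finset.sum_nonneg fun z _ => edgeEnergy_term_nonneg G f w z) a.2
  obtain ⟨p, hp⟩ := (hS.preconnected ⟨x, hx⟩ ⟨y, hy⟩).exists_isPath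
  have hlength : (p.length : ℝ) ≤ S.card := by
    exact_mod_cast (hp.length_lt.le.trans_eq (Fintype.card_coe S))
  calc (f x - f y) ^ 2 = |f x - f y| ^ 2 := (sq_abs _).symm
    _ ≤ (S.card * √(edgeEnergy G S S f)) ^ 2 := by
        refine pow_le_pow_left₀ (abs_nonneg _) ?_ 2
        exact (abs_sub_le_length_mul (f := fun a : (S : Set V) => f a) hedge p).trans
          (mul_le_mul_of_nonneg_right hlength (Real.sqrt_nonneg _))
    _ = (S.card : ℝ) ^ 2 * edgeEnergy G S S f := by
        rw [mul_pow, Real.sq_sqrt (edgeEnergy_nonneg G S S f)]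

end ConnectedSets

section Clusters

variable {V : Type*} {G : SimpleGraph V}

variable (G) in
/-- The connected component of `x` in the subgraph induced by `R`, empty if `x ∉ R`. -/
def cluster (R : Finset V) (x : V) : Finset V :=
  (R.powerset.filter fun S => ConnectedOn G S ∧ x ∈ S).biUnion id

variable {R : Finset V}

lemma mem_cluster {x y : V} :
    y ∈ cluster G R x ↔ ∃ S ⊆ R, ConnectedOn G S ∧ x ∈ S ∧ y ∈ S := by
  simp only [cluster, Finset.mem_biUnion, Finset.mem_filter, Finset.mem_powerset, id, and_assoc]

lemma mem_cluster_comm {x y : V} : y ∈ cluster G R x ↔ x ∈ cluster G R y := by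
  simp only [mem_cluster, and_comm (a := x ∈ _)]

lemma cluster_subset (x : V) : cluster G R x ⊆ R := fun _ hy =>
  let ⟨_, hSR, _, _, hyS⟩ := mem_cluster.1 hy
  hSR hyS

lemma self_mem_cluster {x : V} (hx : x ∈ R) : x ∈ cluster G R x :=
  mem_cluster.2 ⟨{x}, Finset.singleton_subset_iff.2 hx, connectedOn_singleton x, by simp⟩

lemma connectedOn_cluster {x : V} (hx : x ∈ R) : ConnectedOn G (cluster G R x) := by
  have hunion := SimpleGraph.induce_sUnion_connected_of_pairwise_not_disjoint
    (G := G) (S := (fun S : Finset V => (S : Set V)) '' {S | S ⊆ R ∧ ConnectedOn G S ∧ x ∈ S})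
    ⟨_, {x}, ⟨Finset.singleton_subset_iff.2 hx, connectedOn_singleton x, by simp⟩, rfl⟩
    (by rintro _ _ ⟨S, hS, rfl⟩ ⟨T, hT, rfl⟩; exact ⟨x, hS.2.2, hT.2.2⟩)
    (by rintro _ ⟨S, hS, rfl⟩; exact hS.2.1)
  have hcoe : (cluster G R x : Set V) =
      ⋃₀ ((fun S : Finset V => (S : Set V)) '' {S | S ⊆ R ∧ ConnectedOn G S ∧ x ∈ S}) := by
    ext y
    simp [mem_cluster, and_assoc]
  rwa [ConnectedOn, hcoe]

lemma mem_cluster_of_adj {x y z : V} (hy : y ∈ cluster G R x) (hz : z ∈ R) (hyz : G.Adj y z) :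
    z ∈ cluster G R x := by
  obtain ⟨S, hSR, hS, hxS, hyS⟩ := mem_cluster.1 hy
  exact mem_cluster.2 ⟨insert z S, Finset.insert_subset hz hSR, hS.insert_of_adj hyS hyz,
    Finset.mem_insert_of_mem hxS, Finset.mem_insert_self z S⟩

end Clusters

section Pieces

variable {V : Type*} {G : SimpleGraph V} {B : Finset V} {k : ℕ}

lemma exists_maximal_disjoint_connected (G : SimpleGraph V) (B : Finset V) (k : ℕ) :
    ∃ F : Finset (Finset V), (∀ S ∈ F, S ⊆ B ∧ ConnectedOn G S ∧ S.card = k) ∧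
      (∀ S ∈ F, ∀ T ∈ F, S ≠ T → Disjoint S T) ∧
      ∀ T ⊆ B, ConnectedOn G T → T.card = k → ∃ S ∈ F, ¬ Disjoint S T := by
  obtain ⟨F, hF, hmax⟩ := Finset.exists_max_image
    (B.powerset.powerset.filter fun F => (∀ S ∈ F, S ⊆ B ∧ ConnectedOn G S ∧ S.card = k) ∧
      ∀ S ∈ F, ∀ T ∈ F, S ≠ T → Disjoint S T) Finset.card ⟨∅, by simp⟩
  obtain ⟨-, hseed, hdisj⟩ := Finset.mem_filter.1 hF
  refine ⟨F, hseed, hdisj, fun T hTB hT hcard => ?_⟩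
  by_contra! hfree
  have hTF : T ∉ F := fun h => by
    have := Finset.disjoint_self_iff_empty T |>.1 (hfree T h)
    exact hT.nonempty.ne_empty this
  have hlarger := hmax (insert T F) <| Finset.mem_filter.2 ⟨?_, ?_, ?_⟩
  · rw [Finset.card_insert_of_notMem hTF] at hlarger
    omega
  · exact Finset.mem_powerset.2 <| Finset.insert_subset (Finset.mem_powerset.2 hTB)
      fun S hS => Finset.mem_powerset.2 (hseed S hS).1
  · exact Finset.forall_mem_insert .. |>.2 ⟨⟨hTB, hT, hcard⟩, hseed⟩
  · rintro S hS U hU hSU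
    rcases Finset.mem_insert.1 hS with rfl | hSF <;>
      rcases Finset.mem_insert.1 hU with rfl | hUF
    exacts [absurd rfl hSU, (hfree U hUF).symm, hfree S hSF, hdisj S hSF U hUF hSU]

/-- A choice of connected pieces `P x ∋ x` of `B` of at most `2 * k` vertices, each of which either
has at least `k` vertices or is a whole component of `B`, and which do not overlap too much. -/
structure IsPieceSystem (G : SimpleGraph V) (B : Finset V) (k : ℕ) (P : V → Finset V) : Prop where
  self_mem : ∀ x ∈ B, x ∈ P x
  subset : ∀ x ∈ B, P x ⊆ B
  connectedOn : ∀ x ∈ B, ConnectedOn G (P x)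
  card_le : ∀ x ∈ B, (P x).card ≤ 2 * k
  le_card_or_closed : ∀ x ∈ B, k ≤ (P x).card ∨ ∀ y ∈ P x, ∀ z ∈ B, G.Adj y z → z ∈ P x
  card_filter_mem_le : ∀ D : ℕ, (∀ x ∈ B, (B.filter (G.Adj x)).card ≤ D) →
    ∀ y, (B.filter (y ∈ P ·)).card ≤ 2 * k + k * (D * k)

lemma card_cluster_lt {F : Finset (Finset V)} (hk : 1 ≤ k)
    (hmax : ∀ T ⊆ B, ConnectedOn G T → T.card = k → ∃ S ∈ F, ¬ Disjoint S T) (x : V) :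
    (cluster G (B \ F.biUnion id) x).card < k := by
  by_contra! hlarge
  have hx : x ∈ B \ F.biUnion id := by
    obtain ⟨y, hy⟩ := Finset.card_pos.1 (hk.trans hlarge)
    exact cluster_subset y (mem_cluster_comm.1 hy)
  obtain ⟨T, hT, hTconn, hcard⟩ := (connectedOn_cluster (G := G) hx).exists_subset_card_eq hk hlarge
  have hTB := hT.trans (cluster_subset x)
  obtain ⟨S, hS, hST⟩ := hmax T (hTB.trans Finset.sdiff_subset) hTconn hcard
  obtain ⟨y, hyS, hyT⟩ := Finset.not_disjoint_iff.1 hST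
  exact (Finset.mem_sdiff.1 (hTB hyT)).2 (Finset.mem_biUnion.2 ⟨S, hS, hyS⟩)

-- The candidate pieces containing `y` are the cluster of `y`, the seed of `y`, and the clusters
-- attached to that seed.
lemma card_near_le {F : Finset (Finset V)} (hcard : ∀ S ∈ F, S.card = k)
    (hsub : ∀ S ∈ F, S ⊆ B) (hdisj : ∀ S ∈ F, ∀ T ∈ F, S ≠ T → Disjoint S T) {C : V → Finset V}
    (hC : ∀ x, (C x).card ≤ k) {D : ℕ} (hD : ∀ x ∈ B, (B.filter (G.Adj x)).card ≤ D) (y : V) :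
    (C y ∪ (F.filter (y ∈ ·)).biUnion fun S =>
      S ∪ S.biUnion fun s => (B.filter (G.Adj s)).biUnion C).card ≤ 2 * k + k * (D * k) := by
  have hunique : (F.filter (y ∈ ·)).card ≤ 1 := Finset.card_le_one.2 fun S hS T hT => by
    simp only [Finset.mem_filter] at hS hT
    by_contra hne
    exact Finset.disjoint_left.1 (hdisj S hS.1 T hT.1 hne) hS.2 hT.2
  have hseed : ∀ S ∈ F, (S ∪ S.biUnion fun s => (B.filter (G.Adj s)).biUnion C).card ≤
      k + k * (D * k) := fun S hS => by
    refine (Finset.card_union_le _ _).trans (add_le_add (hcard S hS).le ?_)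
    rw [← hcard S hS]
    refine Finset.card_biUnion_le_card_mul _ _ _ fun s hs => ?_
    rw [hcard S hS]
    exact (Finset.card_biUnion_le_card_mul _ _ _ fun z _ => hC z).trans
      (Nat.mul_le_mul_right k (hD s (hsub S hS hs)))
  have hseeds := Finset.card_biUnion_le_card_mul (F.filter (y ∈ ·)) _ _ fun S hS =>
    hseed S (Finset.mem_filter.1 hS).1
  have := Finset.card_union_le (C y) ((F.filter (y ∈ ·)).biUnion fun S =>
    S ∪ S.biUnion fun s => (B.filter (G.Adj s)).biUnion C)
  have := hC y
  nlinarith [Nat.mul_le_mul_right (k + k * (D * k)) hunique]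

lemma exists_piece {F : Finset (Finset V)} (hF : ∀ S ∈ F, S ⊆ B ∧ ConnectedOn G S ∧ S.card = k)
    {C : V → Finset V} (hC : C = cluster G (B \ F.biUnion id)) (hCcard : ∀ x, (C x).card < k)
    {x : V} (hx : x ∈ B) :
    ∃ P : Finset V, x ∈ P ∧ P ⊆ B ∧ ConnectedOn G P ∧ P.card ≤ 2 * k ∧
      (k ≤ P.card ∨ ∀ y ∈ P, ∀ z ∈ B, G.Adj y z → z ∈ P) ∧
      ∀ y ∈ P, x ∈ C y ∪ (F.filter (y ∈ ·)).biUnion fun S =>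
        S ∪ S.biUnion fun s => (B.filter (G.Adj s)).biUnion C := by
  subst hC
  set C := cluster G (B \ F.biUnion id)
  by_cases hseed : ∃ S ∈ F, x ∈ S
  · obtain ⟨S, hS, hxS⟩ := hseed
    obtain ⟨hSB, hSconn, hcard⟩ := hF S hS
    refine ⟨S, hxS, hSB, hSconn, by omega, Or.inl hcard.ge, fun y hy => ?_⟩
    exact Finset.mem_union_right _ <| Finset.mem_biUnion.2
      ⟨S, Finset.mem_filter.2 ⟨hS, hy⟩, Finset.mem_union_left _ hxS⟩
  have hxR : x ∈ B \ F.biUnion id := by simpa [hx] using hseed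
  have hCB : C x ⊆ B := (cluster_subset x).trans Finset.sdiff_subset
  by_cases hattached : ∃ S ∈ F, ∃ s ∈ S, ∃ z ∈ C x, G.Adj s z
  · obtain ⟨S, hS, s, hs, z, hz, hsz⟩ := hattached
    obtain ⟨hSB, hSconn, hcard⟩ := hF S hS
    have hCx := hCcard x
    refine ⟨C x ∪ S, Finset.mem_union_left _ (self_mem_cluster hxR), Finset.union_subset hCB hSB,
      (connectedOn_cluster hxR).union_of_adj hSconn hz hs hsz.symm,
      (Finset.card_union_le _ _).trans (by omega),
      Or.inl (hcard.ge.trans (Finset.card_le_card Finset.subset_union_right)), fun y hy => ?_⟩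
    rcases Finset.mem_union.1 hy with hyC | hyS
    · exact Finset.mem_union_left _ (mem_cluster_comm.1 hyC)
    · refine Finset.mem_union_right _ <| Finset.mem_biUnion.2
        ⟨S, Finset.mem_filter.2 ⟨hS, hyS⟩, Finset.mem_union_right _ ?_⟩
      exact Finset.mem_biUnion.2 ⟨s, hs, Finset.mem_biUnion.2
        ⟨z, Finset.mem_filter.2 ⟨hCB hz, hsz⟩, mem_cluster_comm.1 hz⟩⟩
  · refine ⟨C x, self_mem_cluster hxR, hCB, connectedOn_cluster hxR,
      (hCcard x).le.trans (by omega), Or.inr fun y hy z hz hyz => ?_,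
      fun y hy => Finset.mem_union_left _ (mem_cluster_comm.1 hy)⟩
    refine mem_cluster_of_adj hy (Finset.mem_sdiff.2 ⟨hz, fun hzF => hattached ?_⟩) hyz
    obtain ⟨S, hS, hzS⟩ := Finset.mem_biUnion.1 hzF
    exact ⟨S, hS, z, hzS, y, hy, hyz.symm⟩

-- A maximal family of disjoint connected `k`-sets, the seeds, leaves only clusters smaller than
-- `k`; a cluster adjacent to a seed is joined to it, and otherwise it is a component of `B`.
lemma exists_isPieceSystem (G : SimpleGraph V) (B : Finset V) (hk : 1 ≤ k) :
    ∃ P, IsPieceSystem G B k P := by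
  obtain ⟨F, hF, hdisj, hmax⟩ := exists_maximal_disjoint_connected G B k
  have hCcard := card_cluster_lt hk hmax
  choose! P hself hsub hconn hcard hclosed hnear using
    fun x (hx : x ∈ B) => exists_piece hF rfl hCcard hx
  refine ⟨P, hself, hsub, hconn, hcard, hclosed, fun D hD y => ?_⟩
  refine le_trans (Finset.card_le_card fun x hx => ?_) (card_near_le (fun S hS => (hF S hS).2.2)
    (fun S hS => (hF S hS).1) hdisj (fun x => (hCcard x).le) hD y)
  obtain ⟨hxB, hy⟩ := Finset.mem_filter.1 hx
  exact hnear x hxB y hy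

lemma IsPieceSystem.of_spanningCoe {P : V → Finset V}
    (hP : IsPieceSystem (G.induce (B : Set V)).spanningCoe B k P) : IsPieceSystem G B k P where
  self_mem := hP.self_mem
  subset := hP.subset
  connectedOn x hx := (hP.connectedOn x hx).mono (SimpleGraph.spanningCoe_induce_le G _)
  card_le := hP.card_le
  le_card_or_closed x hx := (hP.le_card_or_closed x hx).imp_right fun h y hy z hz hyz =>
    h y hy z hz (by simpa [hP.subset x hx hy, hz] using hyz)
  card_filter_mem_le D hD := hP.card_filter_mem_le D fun x hx =>
    (Finset.card_le_card fun y hy => by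
      simp only [Finset.mem_filter] at hy ⊢
      exact hy.imp_right fun h => SimpleGraph.spanningCoe_induce_le G _ h).trans (hD x hx)

variable (G B k) in
/-- A piece system of `B`, chosen through the subgraph induced by `B` so that it depends on no
other edge of `G`. -/
def piece : V → Finset V :=
  Classical.epsilon (IsPieceSystem (G.induce (B : Set V)).spanningCoe B k)

lemma isPieceSystem_piece (hk : 1 ≤ k) : IsPieceSystem G B k (piece G B k) :=
  (Classical.epsilon_spec (exists_isPieceSystem _ B hk)).of_spanningCoe

lemma piece_congr {G' : SimpleGraph V} (h : ∀ x ∈ B, ∀ y ∈ B, G.Adj x y ↔ G'.Adj x y) :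
    piece G B k = piece G' B k := by
  have hinduce : G.induce (B : Set V) = G'.induce (B : Set V) := by
    ext x y
    exact h x x.2 y y.2
  rw [piece, hinduce, piece]

end Pieces

section CoreDecomposition

variable {V : Type*}

lemma sum_sum_le_of_card_filter_mem_le {B : Finset V} {P : V → Finset V} (hP : ∀ x ∈ B, P x ⊆ B)
    {K : ℝ} (hK : ∀ y ∈ B, ((B.filter (y ∈ P ·)).card : ℝ) ≤ K) {φ : V → ℝ} (hφ : ∀ y, 0 ≤ φ y) :
    ∑ x ∈ B, ∑ y ∈ P x, φ y ≤ K * ∑ y ∈ B, φ y := by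
  calc ∑ x ∈ B, ∑ y ∈ P x, φ y = ∑ y ∈ B, ∑ _x ∈ B.filter (y ∈ P ·), φ y :=
        Finset.sum_comm' <| by
          simp only [Finset.mem_filter]
          exact fun x _ => ⟨fun h => ⟨h, hP x h.1 h.2⟩, fun h => h.1⟩
    _ ≤ ∑ y ∈ B, K * φ y := Finset.sum_le_sum fun y hy => by
        rw [Finset.sum_const, nsmul_eq_mul]
        exact mul_le_mul_of_nonneg_right (hK y hy) (hφ y)
    _ = K * ∑ y ∈ B, φ y := (Finset.mul_sum _ _ _).symm

variable [Fintype V] {G : SimpleGraph V}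

lemma ConnectedOn.sq_sub_le_of_adj {S : Finset V} (hS : ConnectedOn G S) {K : ℝ}
    (hK : (S.card : ℝ) ≤ K) (f : V → ℝ) (m : ℝ) {x b q : V} (hx : x ∈ S) (hb : b ∈ S)
    (hbq : G.Adj b q) {C : Finset V} (hq : q ∈ C) :
    (f x - m) ^ 2 ≤ ∑ y ∈ S, (3 * (K ^ 2 + 1) * edgeEnergy G {y} Finset.univ f +
      3 * ∑ z ∈ C, G.adjMatrix ℝ y z * (f z - m) ^ 2) := by
  have hsum : ∑ y ∈ S, edgeEnergy G {y} Finset.univ f = edgeEnergy G S Finset.univ f := by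
    simp only [edgeEnergy, Finset.sum_singleton]
  have hinside : (f x - f b) ^ 2 ≤ K ^ 2 * edgeEnergy G S Finset.univ f :=
    (hS.sq_sub_le f hx hb).trans <| mul_le_mul (pow_le_pow_left₀ (Nat.cast_nonneg _) hK 2)
      (edgeEnergy_mono_right (Finset.subset_univ S) f) (edgeEnergy_nonneg G S S f) (sq_nonneg K)
  have hexit : (f b - f q) ^ 2 ≤ edgeEnergy G S Finset.univ f := by
    calc (f b - f q) ^ 2 = G.adjMatrix ℝ b q * (f b - f q) ^ 2 := by
          rw [adjMatrix_of_adj hbq, one_mul]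
      _ ≤ ∑ z, G.adjMatrix ℝ b z * (f b - f z) ^ 2 :=
          Finset.single_le_sum (f := fun z => G.adjMatrix ℝ b z * (f b - f z) ^ 2)
            (fun z _ => edgeEnergy_term_nonneg G f b z) (Finset.mem_univ q)
      _ ≤ edgeEnergy G S Finset.univ f :=
          Finset.single_le_sum (f := fun y => ∑ z, G.adjMatrix ℝ y z * (f y - f z) ^ 2)
            (fun y _ => Finset.sum_nonneg fun z _ => edgeEnergy_term_nonneg G f y z) hb
  have hterm : ∀ y z, 0 ≤ G.adjMatrix ℝ y z * (f z - m) ^ 2 := fun y z =>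
    mul_nonneg (adjMatrix_nonneg G y z) (sq_nonneg _)
  have htarget : (f q - m) ^ 2 ≤ ∑ y ∈ S, ∑ z ∈ C, G.adjMatrix ℝ y z * (f z - m) ^ 2 := by
    calc (f q - m) ^ 2 = G.adjMatrix ℝ b q * (f q - m) ^ 2 := by
          rw [adjMatrix_of_adj hbq, one_mul]
      _ ≤ ∑ z ∈ C, G.adjMatrix ℝ b z * (f z - m) ^ 2 :=
          Finset.single_le_sum (f := fun z => G.adjMatrix ℝ b z * (f z - m) ^ 2)
            (fun z _ => hterm b z) hq
      _ ≤ _ := Finset.single_le_sum (f := fun y => ∑ z ∈ C, G.adjMatrix ℝ y z * (f z - m) ^ 2)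
            (fun y _ => Finset.sum_nonneg fun z _ => hterm y z) hb
  have hsplit : (f x - m) ^ 2 ≤
      3 * (f x - f b) ^ 2 + 3 * (f b - f q) ^ 2 + 3 * (f q - m) ^ 2 := by
    nlinarith [sq_nonneg ((f x - f b) - (f b - f q)), sq_nonneg ((f x - f b) - (f q - m)),
      sq_nonneg ((f b - f q) - (f q - m))]
  rw [Finset.sum_add_distrib, ← Finset.mul_sum, ← Finset.mul_sum, hsum]
  linarith

/-- The vertices split into hubs `H`, an expanding core `A` to which every hub sends a fraction
`1 / K` of its edges, and the rest `B`, covered by small connected pieces each of which either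
touches `H ∪ A` or is a component of `G`; away from the hubs degrees are at most `K` and the
conductances `c` at least `1 / W`. -/
structure CoreDecomposition (G : SimpleGraph V) (c : V → V → ℝ) (H A B : Finset V)
    (P : V → Finset V) (K W : ℝ) : Prop where
  one_le_K : 1 ≤ K
  one_le_W : 1 ≤ W
  core_nonempty : A.Nonempty
  disjoint : Disjoint H A
  mem_rest_iff : ∀ x, x ∈ B ↔ x ∉ H ∧ x ∉ A
  degree_le : ∀ x ∉ H, (G.degree x : ℝ) ≤ K
  hub_degree_le : ∀ h ∈ H, (G.degree h : ℝ) ≤ K * ∑ a ∈ A, G.adjMatrix ℝ h a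
  one_le_hub : ∀ h ∈ H, 1 ≤ ∑ a ∈ A, G.adjMatrix ℝ h a
  expands : Expands G A
  conductance_nonneg : ∀ x y, 0 ≤ c x y
  adjMatrix_le : ∀ x ∉ H, ∀ y, G.adjMatrix ℝ x y ≤ W * c x y
  self_mem : ∀ x ∈ B, x ∈ P x
  subset : ∀ x ∈ B, P x ⊆ B
  connectedOn : ∀ x ∈ B, ConnectedOn G (P x)
  card_le : ∀ x ∈ B, ((P x).card : ℝ) ≤ K
  card_filter_mem_le : ∀ y ∈ B, ((B.filter (y ∈ P ·)).card : ℝ) ≤ K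
  attached_or_closed : ∀ x ∈ B, (∃ b ∈ P x, ∃ q ∉ B, G.Adj b q) ∨
    ∀ b ∈ P x, ∀ y, G.Adj b y → y ∈ P x

/-- The vertices outside `B`, and those whose piece has a neighbour outside `B`. -/
def giantSet (G : SimpleGraph V) (B : Finset V) (P : V → Finset V) : Finset V :=
  Finset.univ.filter fun x => x ∈ B → ∃ b ∈ P x, ∃ q ∉ B, G.Adj b q

lemma mem_giantSet_of_notMem {B : Finset V} {P : V → Finset V} {x : V} (hx : x ∉ B) :
    x ∈ giantSet G B P :=
  Finset.mem_filter.2 ⟨Finset.mem_univ x, fun hx' => absurd hx' hx⟩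

namespace CoreDecomposition

variable {c : V → V → ℝ} {H A B : Finset V} {P : V → Finset V} {K W : ℝ}
  (hD : CoreDecomposition G c H A B P K W)
include hD

lemma mul_dirichletEnergy_nonneg (f : V → ℝ) : 0 ≤ W * dirichletEnergy c f :=
  mul_nonneg (zero_le_one.trans hD.one_le_W) (dirichletEnergy_nonneg hD.conductance_nonneg f)

lemma notMem_hub_of_mem_rest {x : V} (hx : x ∈ B) : x ∉ H := ((hD.mem_rest_iff x).1 hx).1

lemma sum_rest_compl (φ : V → ℝ) : ∑ x ∈ Bᶜ, φ x = ∑ x ∈ H, φ x + ∑ x ∈ A, φ x := by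
  rw [← Finset.sum_union hD.disjoint]
  congr 1
  ext x
  rw [Finset.mem_compl, hD.mem_rest_iff, Finset.mem_union]
  tauto

lemma edgeEnergy_le {T : Finset V} (hT : ∀ x ∈ T, x ∉ H) (S : Finset V) (f : V → ℝ) :
    edgeEnergy G T S f ≤ W * dirichletEnergy c f := by
  have hW := zero_le_one.trans hD.one_le_W
  have hterm : ∀ x z, 0 ≤ W * (c x z * (f x - f z) ^ 2) := fun x z =>
    mul_nonneg hW (mul_nonneg (hD.conductance_nonneg x z) (sq_nonneg _))
  simp only [edgeEnergy, dirichletEnergy, Finset.mul_sum]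
  calc ∑ x ∈ T, ∑ z ∈ S, G.adjMatrix ℝ x z * (f x - f z) ^ 2
      ≤ ∑ x ∈ T, ∑ z ∈ S, W * (c x z * (f x - f z) ^ 2) :=
        Finset.sum_le_sum fun x hx => Finset.sum_le_sum fun z _ => by
          rw [← mul_assoc]
          exact mul_le_mul_of_nonneg_right (hD.adjMatrix_le x (hT x hx) z) (sq_nonneg _)
    _ ≤ ∑ x ∈ T, ∑ z, W * (c x z * (f x - f z) ^ 2) := Finset.sum_le_sum fun x _ =>
        Finset.sum_le_univ_sum_of_nonneg (hterm x)
    _ ≤ ∑ x, ∑ z, W * (c x z * (f x - f z) ^ 2) :=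
        Finset.sum_le_univ_sum_of_nonneg fun x => Finset.sum_nonneg fun z _ => hterm x z

lemma sum_hub_le (f : V → ℝ) (m : ℝ) :
    ∑ h ∈ H, ((G.degree h : ℝ) + 1) * (f h - m) ^ 2 ≤
      4 * K * (edgeEnergy G A H f + ∑ a ∈ A, (G.degree a : ℝ) * (f a - m) ^ 2) := by
  have hK := zero_le_one.trans hD.one_le_K
  have hhub : ∀ h ∈ H, ((G.degree h : ℝ) + 1) * (f h - m) ^ 2 ≤
      4 * K * ∑ a ∈ A, (G.adjMatrix ℝ a h * (f a - f h) ^ 2 +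
        G.adjMatrix ℝ a h * (f a - m) ^ 2) := fun h hh => by
    have hdegree : (G.degree h : ℝ) + 1 ≤ 2 * K * ∑ a ∈ A, G.adjMatrix ℝ h a := by
      linarith [hD.hub_degree_le h hh, hD.one_le_hub h hh, sum_adjMatrix_le_degree G A h]
    calc _ ≤ (2 * K * ∑ a ∈ A, G.adjMatrix ℝ h a) * (f h - m) ^ 2 :=
          mul_le_mul_of_nonneg_right hdegree (sq_nonneg _)
      _ = 2 * K * ∑ a ∈ A, G.adjMatrix ℝ a h * (f h - m) ^ 2 := by
          rw [mul_assoc, Finset.sum_mul]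
          simp only [adjMatrix_comm G h]
      _ ≤ 2 * K * ∑ a ∈ A, G.adjMatrix ℝ a h * (2 * ((f a - f h) ^ 2 + (f a - m) ^ 2)) := by
          gcongr with a
          · exact adjMatrix_nonneg G a h
          · nlinarith [sq_nonneg ((f a - f h) + (f a - m))]
      _ = _ := by
          simp only [Finset.mul_sum]
          exact Finset.sum_congr rfl fun a _ => by ring
  refine (Finset.sum_le_sum hhub).trans ?_
  rw [← Finset.mul_sum, Finset.sum_comm]
  simp only [Finset.sum_add_distrib, edgeEnergy]
  gcongr with a
  rw [← Finset.sum_mul]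
  exact mul_le_mul_of_nonneg_right (sum_adjMatrix_le_degree G H a) (sq_nonneg _)

lemma exists_sum_core_le (f : V → ℝ) :
    ∃ m, ∑ x ∈ Bᶜ, ((G.degree x : ℝ) + 1) * (f x - m) ^ 2 ≤
      52 * K ^ 3 * (W * dirichletEnergy c f) := by
  have hK := hD.one_le_K
  have hK₀ : 0 < K := zero_lt_one.trans_le hK
  have hAH : ∀ x ∈ A, x ∉ H := fun x hxA hxH => Finset.disjoint_left.1 hD.disjoint hxH hxA
  obtain ⟨m, hm⟩ := hD.expands.exists_sum_sub_sq_le hD.core_nonempty hK₀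
    (fun x hx => hD.degree_le x (hAH x hx)) f
  refine ⟨m, ?_⟩
  have hE := hD.mul_dirichletEnergy_nonneg f
  have hAH_energy := hD.edgeEnergy_le hAH H f
  replace hm := hm.trans (mul_le_mul_of_nonneg_left (hD.edgeEnergy_le hAH A f)
    (show 0 ≤ 8 * K by positivity))
  have hhub := hD.sum_hub_le f m
  have hweighted : ∑ x ∈ A, (G.degree x : ℝ) * (f x - m) ^ 2 ≤ K * ∑ x ∈ A, (f x - m) ^ 2 := by
    rw [Finset.mul_sum]
    exact Finset.sum_le_sum fun x hx =>
      mul_le_mul_of_nonneg_right (hD.degree_le x (hAH x hx)) (sq_nonneg _)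
  set E := W * dirichletEnergy c f
  rw [hD.sum_rest_compl]
  have hcore : ∑ x ∈ A, ((G.degree x : ℝ) + 1) * (f x - m) ^ 2 ≤ (K + 1) * (8 * K * E) := by
    simp only [add_mul, one_mul, Finset.sum_add_distrib]
    nlinarith
  have hhub' : ∑ h ∈ H, ((G.degree h : ℝ) + 1) * (f h - m) ^ 2 ≤
      4 * K * (E + K * (8 * K * E)) := by
    refine hhub.trans ?_
    gcongr
    exact hweighted.trans (mul_le_mul_of_nonneg_left hm hK₀.le)
  have h₁ : K * E ≤ K ^ 3 * E := mul_le_mul_of_nonneg_right (le_self_pow₀ hK (by norm_num)) hE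
  have h₂ : K ^ 2 * E ≤ K ^ 3 * E :=
    mul_le_mul_of_nonneg_right (pow_le_pow_right₀ hK (by norm_num)) hE
  linarith

lemma sum_attached_le (f : V → ℝ) (m : ℝ) :
    ∑ x ∈ giantSet G B P ∩ B, (f x - m) ^ 2 ≤
      K * (3 * (K ^ 2 + 1) * (W * dirichletEnergy c f) +
        3 * ∑ x ∈ Bᶜ, (G.degree x : ℝ) * (f x - m) ^ 2) := by
  have hK := zero_le_one.trans hD.one_le_K
  set φ : V → ℝ := fun y => 3 * (K ^ 2 + 1) * edgeEnergy G {y} Finset.univ f +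
    3 * ∑ z ∈ Bᶜ, G.adjMatrix ℝ y z * (f z - m) ^ 2 with hφ
  have hφ_nonneg : ∀ y, 0 ≤ φ y := fun y =>
    add_nonneg (mul_nonneg (by positivity) (edgeEnergy_nonneg G _ _ f)) <|
      mul_nonneg (by norm_num) <| Finset.sum_nonneg fun z _ =>
        mul_nonneg (adjMatrix_nonneg G y z) (sq_nonneg _)
  have hpiece : ∀ x ∈ giantSet G B P ∩ B, (f x - m) ^ 2 ≤ ∑ y ∈ P x, φ y := fun x hx => by
    obtain ⟨hxU, hxB⟩ := Finset.mem_inter.1 hx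
    obtain ⟨b, hb, q, hq, hbq⟩ := (Finset.mem_filter.1 hxU).2 hxB
    exact (hD.connectedOn x hxB).sq_sub_le_of_adj (hD.card_le x hxB) f m (hD.self_mem x hxB) hb
      hbq (Finset.mem_compl.2 hq)
  have henergy : ∑ y ∈ B, edgeEnergy G {y} Finset.univ f ≤ W * dirichletEnergy c f := by
    simpa only [edgeEnergy, Finset.sum_singleton] using
      hD.edgeEnergy_le (fun _ => hD.notMem_hub_of_mem_rest) Finset.univ f
  have hcore : ∑ y ∈ B, ∑ z ∈ Bᶜ, G.adjMatrix ℝ y z * (f z - m) ^ 2 ≤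
      ∑ z ∈ Bᶜ, (G.degree z : ℝ) * (f z - m) ^ 2 := by
    rw [Finset.sum_comm]
    refine Finset.sum_le_sum fun z _ => ?_
    rw [← Finset.sum_mul]
    simp only [fun y => adjMatrix_comm G y z]
    exact mul_le_mul_of_nonneg_right (sum_adjMatrix_le_degree G B z) (sq_nonneg _)
  calc ∑ x ∈ giantSet G B P ∩ B, (f x - m) ^ 2
      ≤ ∑ x ∈ giantSet G B P ∩ B, ∑ y ∈ P x, φ y := Finset.sum_le_sum hpiece
    _ ≤ ∑ x ∈ B, ∑ y ∈ P x, φ y :=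
        Finset.sum_le_sum_of_subset_of_nonneg Finset.inter_subset_right fun x _ _ =>
          Finset.sum_nonneg fun y _ => hφ_nonneg y
    _ ≤ K * ∑ y ∈ B, φ y :=
        sum_sum_le_of_card_filter_mem_le hD.subset hD.card_filter_mem_le hφ_nonneg
    _ ≤ _ := by
        rw [hφ, Finset.sum_add_distrib, ← Finset.mul_sum, ← Finset.mul_sum]
        gcongr

lemma exists_sum_giantSet_le (f : V → ℝ) :
    ∃ m, ∑ x ∈ giantSet G B P, (f x - m) ^ 2 ≤ 214 * K ^ 4 * W * dirichletEnergy c f := by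
  have hK := hD.one_le_K
  obtain ⟨m, hm⟩ := hD.exists_sum_core_le f
  refine ⟨m, ?_⟩
  have hattached := hD.sum_attached_le f m
  simp only [add_mul, one_mul, Finset.sum_add_distrib] at hm
  have hweighted : 0 ≤ ∑ x ∈ Bᶜ, (G.degree x : ℝ) * (f x - m) ^ 2 :=
    Finset.sum_nonneg fun x _ => by positivity
  have hplain : 0 ≤ ∑ x ∈ Bᶜ, (f x - m) ^ 2 := Finset.sum_nonneg fun x _ => sq_nonneg _
  have hcore : ∑ x ∈ giantSet G B P \ B, (f x - m) ^ 2 ≤ ∑ x ∈ Bᶜ, (f x - m) ^ 2 :=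
    Finset.sum_le_sum_of_subset_of_nonneg
      (fun x hx => Finset.mem_compl.2 (Finset.mem_sdiff.1 hx).2) fun x _ _ => sq_nonneg _
  have hE := hD.mul_dirichletEnergy_nonneg f
  rw [← Finset.sum_inter_add_sum_sdiff (giantSet G B P) B, mul_assoc]
  set E := W * dirichletEnergy c f
  have hattached' : ∑ x ∈ giantSet G B P ∩ B, (f x - m) ^ 2 ≤
      K * (3 * (K ^ 2 + 1) * E + 3 * (52 * K ^ 3 * E)) := by
    refine hattached.trans ?_
    gcongr
    linarith
  have h₁ : K * E ≤ K ^ 4 * E := mul_le_mul_of_nonneg_right (le_self_pow₀ hK (by norm_num)) hE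
  have h₃ : K ^ 3 * E ≤ K ^ 4 * E :=
    mul_le_mul_of_nonneg_right (pow_le_pow_right₀ hK (by norm_num)) hE
  linarith

lemma not_attached_of_notMem_giantSet {x : V} (hx : x ∉ giantSet G B P) :
    x ∈ B ∧ ∀ y, G.Reachable x y → y ∈ P x := by
  obtain ⟨hxB, hfree⟩ : x ∈ B ∧ ¬ ∃ b ∈ P x, ∃ q ∉ B, G.Adj b q := by
    simpa only [giantSet, Finset.mem_filter, Finset.mem_univ, true_and, Classical.not_imp] using hx
  have hclosed := (hD.attached_or_closed x hxB).resolve_left hfree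
  refine ⟨hxB, fun y hy => ?_⟩
  obtain ⟨p⟩ := hy
  suffices ∀ u v, G.Walk u v → u ∈ P x → v ∈ P x from this x y p (hD.self_mem x hxB)
  intro u v w
  induction w with
  | nil => exact id
  | cons h _ ih => exact fun hu => ih (hclosed _ hu _ h)

lemma mem_giantSet_of_reachable {x y : V} (hy : y ∈ giantSet G B P) (hyx : G.Reachable y x) :
    x ∈ giantSet G B P := by
  by_contra hx
  obtain ⟨hxB, hcomponent⟩ := hD.not_attached_of_notMem_giantSet hx
  have hyB : y ∈ B := hD.subset x hxB (hcomponent y hyx.symm)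
  obtain ⟨b, hb, q, hq, hbq⟩ := (Finset.mem_filter.1 hy).2 hyB
  have hyb := (hD.connectedOn y hyB).reachable (hD.self_mem y hyB) hb
  exact hq (hD.subset x hxB (hcomponent q (hyx.symm.trans (hyb.trans hbq.reachable))))

lemma sum_sq_le_of_notMem_giantSet {y : V} (hy : y ∉ giantSet G B P) {f : V → ℝ} (hfy : f y = 0)
    (hf : ∀ x, ¬ G.Reachable x y → f x = 0) :
    ∑ x, f x ^ 2 ≤ K ^ 3 * (W * dirichletEnergy c f) := by
  obtain ⟨hyB, hcomponent⟩ := hD.not_attached_of_notMem_giantSet hy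
  have hcard := hD.card_le y hyB
  have hpoint : ∀ x ∈ P y, f x ^ 2 ≤ K ^ 2 * (W * dirichletEnergy c f) := fun x hx => by
    have hosc := (hD.connectedOn y hyB).sq_sub_le f hx (hD.self_mem y hyB)
    rw [hfy, sub_zero] at hosc
    exact hosc.trans <| mul_le_mul (pow_le_pow_left₀ (Nat.cast_nonneg _) hcard 2)
      (hD.edgeEnergy_le (fun z hz => hD.notMem_hub_of_mem_rest (hD.subset y hyB hz)) _ f)
      (edgeEnergy_nonneg G _ _ f) (sq_nonneg K)
  calc ∑ x, f x ^ 2 = ∑ x ∈ P y, f x ^ 2 :=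
        (Finset.sum_subset (Finset.subset_univ _) fun x _ hx => by
          rw [hf x fun h => hx (hcomponent x h.symm), sq, zero_mul]).symm
    _ ≤ (P y).card * (K ^ 2 * (W * dirichletEnergy c f)) := by
        simpa only [nsmul_eq_mul] using Finset.sum_le_card_nsmul _ _ _ hpoint
    _ ≤ K * (K ^ 2 * (W * dirichletEnergy c f)) := mul_le_mul_of_nonneg_right hcard
        (mul_nonneg (sq_nonneg K) (hD.mul_dirichletEnergy_nonneg f))
    _ = K ^ 3 * (W * dirichletEnergy c f) := by ring

end CoreDecomposition

end CoreDecomposition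

section GiantPoincare

variable {V : Type*} [Fintype V] {G : SimpleGraph V} {c : V → V → ℝ} {U : Finset V} {Λ : ℝ}

/-- The union `U` of some components of `G` satisfies a Poincaré inequality with constant `Λ`, and
so does every component outside `U` for functions with a zero. -/
structure GiantPoincare (G : SimpleGraph V) (c : V → V → ℝ) (U : Finset V) (Λ : ℝ) : Prop where
  one_le : 1 ≤ Λ
  conductance_nonneg : ∀ x y, 0 ≤ c x y
  mem_of_reachable : ∀ y ∈ U, ∀ x, G.Reachable y x → x ∈ U
  exists_sum_sub_sq_le : ∀ f, ∃ m, ∑ x ∈ U, (f x - m) ^ 2 ≤ Λ * dirichletEnergy c f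
  sum_sq_le : ∀ y ∉ U, ∀ f : V → ℝ, f y = 0 → (∀ x, ¬ G.Reachable x y → f x = 0) →
    ∑ x, f x ^ 2 ≤ Λ * dirichletEnergy c f

lemma CoreDecomposition.giantPoincare {H A B : Finset V} {P : V → Finset V} {K W : ℝ}
    (hD : CoreDecomposition G c H A B P K W) :
    GiantPoincare G c (giantSet G B P) (214 * K ^ 4 * W) where
  one_le := by
    have := one_le_mul_of_one_le_of_one_le (one_le_pow₀ hD.one_le_K (n := 4)) hD.one_le_W
    linarith
  conductance_nonneg := hD.conductance_nonneg
  mem_of_reachable _ hy _ := hD.mem_giantSet_of_reachable hy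
  exists_sum_sub_sq_le := hD.exists_sum_giantSet_le
  sum_sq_le y hy f hfy hf := by
    have hE := hD.mul_dirichletEnergy_nonneg f
    have := hD.sum_sq_le_of_notMem_giantSet hy hfy hf
    have := mul_le_mul_of_nonneg_right (pow_le_pow_right₀ hD.one_le_K (show 3 ≤ 4 by norm_num)) hE
    have := mul_nonneg (pow_nonneg (zero_le_one.trans hD.one_le_K) 4) hE
    linarith

namespace GiantPoincare

variable (hU : GiantPoincare G c U Λ)
include hU

lemma energy_nonneg (f : V → ℝ) : 0 ≤ dirichletEnergy c f :=
  dirichletEnergy_nonneg hU.conductance_nonneg f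

lemma mul_energy_nonneg (f : V → ℝ) : 0 ≤ Λ * dirichletEnergy c f :=
  mul_nonneg (zero_le_one.trans hU.one_le) (hU.energy_nonneg f)

lemma pairPoincare_of_sum_le {T : ℝ} (hT : Λ ≤ T)
    (h : ∀ P : V → V → ℝ, (∀ x, P x x = 0) → (∀ x y, P x y = P y x) →
      ∑ y ∈ U, ∑ x ∈ U, P x y ^ 2 ≤ T * ∑ y ∈ U, dirichletEnergy c fun x => P x y) :
    PairPoincare G c T := by
  intro P hdiag hsymm hreach
  rw [Finset.sum_comm, ← Finset.sum_compl_add_sum U (fun y => ∑ x, P x y ^ 2),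
    ← Finset.sum_compl_add_sum U (fun y => dirichletEnergy c fun x => P x y), mul_add]
  refine add_le_add ?_ (le_of_eq_of_le (Finset.sum_congr rfl fun y hy => ?_) (h P hdiag hsymm))
  · rw [Finset.mul_sum]
    refine Finset.sum_le_sum fun y hy => ?_
    exact (hU.sum_sq_le y (Finset.mem_compl.1 hy) (fun x => P x y) (hdiag y)
      fun x => hreach x y).trans (mul_le_mul_of_nonneg_right hT (hU.energy_nonneg _))
  · refine (Finset.sum_subset (Finset.subset_univ U) fun x _ hx => ?_).symm
    rw [hreach x y fun hxy => hx (hU.mem_of_reachable y hy x hxy.symm), sq, zero_mul]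

lemma sum_sq_le_of_mem {f : V → ℝ} {y : V} (hy : y ∈ U) (hfy : f y = 0) :
    ∑ x ∈ U, f x ^ 2 ≤ 4 * Fintype.card V * Λ * dirichletEnergy c f := by
  obtain ⟨m, hm⟩ := hU.exists_sum_sub_sq_le f
  have hE := hU.mul_energy_nonneg f
  have hcard : (U.card : ℝ) ≤ Fintype.card V := by exact_mod_cast Finset.card_le_univ U
  have hcard_pos : (1 : ℝ) ≤ Fintype.card V := by
    exact_mod_cast Fintype.card_pos_iff.2 ⟨y⟩
  have hmean : m ^ 2 ≤ Λ * dirichletEnergy c f := by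
    calc m ^ 2 = (f y - m) ^ 2 := by rw [hfy, zero_sub, neg_sq]
      _ ≤ _ := (Finset.single_le_sum (f := fun x => (f x - m) ^ 2)
          (fun x _ => sq_nonneg _) hy).trans hm
  calc ∑ x ∈ U, f x ^ 2 ≤ ∑ x ∈ U, (2 * (f x - m) ^ 2 + 2 * m ^ 2) :=
        Finset.sum_le_sum fun x _ => by nlinarith [sq_nonneg (f x - 2 * m)]
    _ = 2 * ∑ x ∈ U, (f x - m) ^ 2 + U.card * (2 * m ^ 2) := by
        rw [Finset.sum_add_distrib, ← Finset.mul_sum, Finset.sum_const, nsmul_eq_mul]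
    _ ≤ 2 * (Λ * dirichletEnergy c f) + Fintype.card V * (2 * (Λ * dirichletEnergy c f)) := by
        gcongr
    _ ≤ _ := by nlinarith

theorem pairPoincare [Nonempty V] : PairPoincare G c (4 * Fintype.card V * Λ) := by
  have hcard : (1 : ℝ) ≤ Fintype.card V := by exact_mod_cast Fintype.card_pos
  refine hU.pairPoincare_of_sum_le (by nlinarith [hU.one_le]) fun P hdiag _ => ?_
  rw [Finset.mul_sum]
  exact Finset.sum_le_sum fun y hy => hU.sum_sq_le_of_mem hy (hdiag y)

end GiantPoincare

end GiantPoincare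

section Star

variable {V : Type*} [Fintype V] {G : SimpleGraph V} {c : V → V → ℝ} {U Γ : Finset V} {Λ ρ : ℝ}

lemma PairPoincare.mono (hc : ∀ x y, 0 ≤ c x y) {S T : ℝ} (hS : PairPoincare G c S)
    (hST : S ≤ T) : PairPoincare G c T := fun P hdiag hsymm hreach =>
  (hS P hdiag hsymm hreach).trans <| mul_le_mul_of_nonneg_right hST <|
    Finset.sum_nonneg fun _ _ => dirichletEnergy_nonneg hc _

omit [Fintype V] in
lemma sum_sq_le_of_star {v y : V} {f : V → ℝ} (hy : y ∈ Γ) (hfy : f y = 0) :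
    ∑ x ∈ Γ, f x ^ 2 ≤ 4 * Γ.card * ∑ x ∈ Γ, (f x - f v) ^ 2 := by
  have hcard : (1 : ℝ) ≤ Γ.card := by exact_mod_cast Finset.card_pos.2 ⟨y, hy⟩
  have hcenter : f v ^ 2 ≤ ∑ x ∈ Γ, (f x - f v) ^ 2 := by
    calc f v ^ 2 = (f y - f v) ^ 2 := by rw [hfy, zero_sub, neg_sq]
      _ ≤ _ := Finset.single_le_sum (f := fun x => (f x - f v) ^ 2) (fun x _ => sq_nonneg _) hy
  calc ∑ x ∈ Γ, f x ^ 2 ≤ ∑ x ∈ Γ, (2 * (f x - f v) ^ 2 + 2 * f v ^ 2) :=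
        Finset.sum_le_sum fun x _ => by nlinarith [sq_nonneg (f x - 2 * f v)]
    _ = 2 * ∑ x ∈ Γ, (f x - f v) ^ 2 + Γ.card * (2 * f v ^ 2) := by
        rw [Finset.sum_add_distrib, ← Finset.mul_sum, Finset.sum_const, nsmul_eq_mul]
    _ ≤ 2 * ∑ x ∈ Γ, (f x - f v) ^ 2 + Γ.card * (2 * ∑ x ∈ Γ, (f x - f v) ^ 2) := by gcongr
    _ ≤ _ := by nlinarith [sq_nonneg (f v)]

namespace GiantPoincare

variable (hU : GiantPoincare G c U Λ)
include hU

lemma sum_sq_le_add_sum_subset (hΓ : Γ ⊆ U) (hne : Γ.Nonempty) (f : V → ℝ) :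
    ∑ x ∈ U, f x ^ 2 ≤ 6 * Fintype.card V * Λ / Γ.card * dirichletEnergy c f +
      4 * Fintype.card V / Γ.card * ∑ x ∈ Γ, f x ^ 2 := by
  obtain ⟨m, hm⟩ := hU.exists_sum_sub_sq_le f
  have hE := hU.mul_energy_nonneg f
  have hd : (0 : ℝ) < Γ.card := by exact_mod_cast hne.card_pos
  have hUcard : (U.card : ℝ) ≤ Fintype.card V := by exact_mod_cast Finset.card_le_univ U
  have hΓcard : (Γ.card : ℝ) ≤ Fintype.card V := by exact_mod_cast Finset.card_le_univ Γ
  set n : ℝ := (Fintype.card V : ℝ)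
  set d : ℝ := (Γ.card : ℝ)
  have hmean : d * m ^ 2 ≤ 2 * ∑ x ∈ Γ, f x ^ 2 + 2 * (Λ * dirichletEnergy c f) := by
    calc d * m ^ 2 = ∑ x ∈ Γ, m ^ 2 := by rw [Finset.sum_const, nsmul_eq_mul]
      _ ≤ ∑ x ∈ Γ, (2 * f x ^ 2 + 2 * (f x - m) ^ 2) :=
          Finset.sum_le_sum fun x _ => by nlinarith [sq_nonneg (2 * f x - m)]
      _ = 2 * ∑ x ∈ Γ, f x ^ 2 + 2 * ∑ x ∈ Γ, (f x - m) ^ 2 := by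
          rw [Finset.sum_add_distrib, ← Finset.mul_sum, ← Finset.mul_sum]
      _ ≤ 2 * ∑ x ∈ Γ, f x ^ 2 + 2 * (Λ * dirichletEnergy c f) := by
          gcongr
          exact (Finset.sum_le_sum_of_subset_of_nonneg hΓ fun _ _ _ => sq_nonneg _).trans hm
  have hsplit : ∑ x ∈ U, f x ^ 2 ≤ 2 * (Λ * dirichletEnergy c f) + n * (2 * m ^ 2) := by
    calc ∑ x ∈ U, f x ^ 2 ≤ ∑ x ∈ U, (2 * (f x - m) ^ 2 + 2 * m ^ 2) :=
          Finset.sum_le_sum fun x _ => by nlinarith [sq_nonneg (f x - 2 * m)]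
      _ = 2 * ∑ x ∈ U, (f x - m) ^ 2 + U.card * (2 * m ^ 2) := by
          rw [Finset.sum_add_distrib, ← Finset.mul_sum, Finset.sum_const, nsmul_eq_mul]
      _ ≤ _ := by gcongr
  rw [← mul_le_mul_iff_of_pos_left hd]
  calc d * ∑ x ∈ U, f x ^ 2 ≤ 2 * d * (Λ * dirichletEnergy c f) + 2 * n * (d * m ^ 2) := by
        linarith [mul_le_mul_of_nonneg_left hsplit hd.le]
    _ ≤ 2 * n * (Λ * dirichletEnergy c f) +
          2 * n * (2 * ∑ x ∈ Γ, f x ^ 2 + 2 * (Λ * dirichletEnergy c f)) := by gcongr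
    _ = _ := by field_simp; ring

lemma sum_sum_sq_le_of_star (hΓ : Γ ⊆ U) (hne : Γ.Nonempty) {v : V} (hρ : 0 ≤ ρ)
    (hstar : ∀ f, ∑ x ∈ Γ, (f x - f v) ^ 2 ≤ ρ * dirichletEnergy c f) {P : V → V → ℝ}
    (hdiag : ∀ x, P x x = 0) (hsymm : ∀ x y, P x y = P y x) :
    ∑ y ∈ U, ∑ x ∈ U, P x y ^ 2 ≤
      (30 * Fintype.card V ^ 2 * Λ / Γ.card ^ 2 + 64 * Fintype.card V ^ 2 * ρ / Γ.card) *
        ∑ y ∈ U, dirichletEnergy c fun x => P x y := by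
  have hΛ := zero_le_one.trans hU.one_le
  have hd : (0 : ℝ) < Γ.card := by exact_mod_cast hne.card_pos
  have hdn : (Γ.card : ℝ) ≤ Fintype.card V := by exact_mod_cast Finset.card_le_univ Γ
  have hE : ∀ y, 0 ≤ dirichletEnergy c fun x => P x y := fun y => hU.energy_nonneg _
  have hΓenergy : ∑ y ∈ Γ, dirichletEnergy c (fun x => P x y) ≤
      ∑ y ∈ U, dirichletEnergy c fun x => P x y :=
    Finset.sum_le_sum_of_subset_of_nonneg hΓ fun y _ _ => hE y
  have henergy : 0 ≤ ∑ y ∈ U, dirichletEnergy c fun x => P x y :=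
    Finset.sum_nonneg fun y _ => hE y
  have hrows : ∀ S : Finset V, ∑ y ∈ S, ∑ x ∈ U, P x y ^ 2 ≤
      6 * Fintype.card V * Λ / Γ.card * ∑ y ∈ S, dirichletEnergy c (fun x => P x y) +
        4 * Fintype.card V / Γ.card * ∑ y ∈ S, ∑ x ∈ Γ, P x y ^ 2 := fun S => by
    rw [Finset.mul_sum, Finset.mul_sum, ← Finset.sum_add_distrib]
    exact Finset.sum_le_sum fun y _ => hU.sum_sq_le_add_sum_subset hΓ hne fun x => P x y
  have hΓΓ : ∑ y ∈ Γ, ∑ x ∈ Γ, P x y ^ 2 ≤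
      4 * Γ.card * (ρ * ∑ y ∈ Γ, dirichletEnergy c fun x => P x y) := by
    simp only [Finset.mul_sum]
    refine Finset.sum_le_sum fun y hy =>
      (sum_sq_le_of_star (v := v) (f := fun x => P x y) hy (hdiag y)).trans ?_
    gcongr
    exact hstar fun x => P x y
  have hUΓ : ∑ y ∈ U, ∑ x ∈ Γ, P x y ^ 2 = ∑ y ∈ Γ, ∑ x ∈ U, P x y ^ 2 := by
    rw [Finset.sum_comm]
    simp only [hsymm]
  set n : ℝ := (Fintype.card V : ℝ)
  set d : ℝ := (Γ.card : ℝ)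
  set D := ∑ y ∈ U, dirichletEnergy c fun x => P x y
  calc ∑ y ∈ U, ∑ x ∈ U, P x y ^ 2
      ≤ 6 * n * Λ / d * D + 4 * n / d * ∑ y ∈ Γ, ∑ x ∈ U, P x y ^ 2 := hUΓ ▸ hrows U
    _ ≤ 6 * n * Λ / d * D + 4 * n / d * (6 * n * Λ / d * D + 4 * n / d * (4 * d * (ρ * D))) := by
        gcongr
        refine (hrows Γ).trans ?_
        gcongr
        exact hΓΓ.trans (by gcongr)
    _ = (6 * n * d * Λ / d ^ 2 + 24 * n ^ 2 * Λ / d ^ 2 + 64 * n ^ 2 * ρ / d) * D := by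
        field_simp
        ring
    _ ≤ (6 * n * n * Λ / d ^ 2 + 24 * n ^ 2 * Λ / d ^ 2 + 64 * n ^ 2 * ρ / d) * D := by gcongr
    _ = _ := by ring

theorem pairPoincare_of_star (hΓ : Γ ⊆ U) (hne : Γ.Nonempty) {v : V} (hρ : 0 ≤ ρ)
    (hstar : ∀ f, ∑ x ∈ Γ, (f x - f v) ^ 2 ≤ ρ * dirichletEnergy c f) :
    PairPoincare G c
      (30 * Fintype.card V ^ 2 * Λ / Γ.card ^ 2 + 64 * Fintype.card V ^ 2 * ρ / Γ.card) := by
  have hΛ := zero_le_one.trans hU.one_le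
  have _ : (0 : ℝ) < Γ.card := by exact_mod_cast hne.card_pos
  have hdn : (Γ.card : ℝ) ≤ Fintype.card V := by exact_mod_cast Finset.card_le_univ Γ
  refine hU.pairPoincare_of_sum_le ?_ fun P => hU.sum_sum_sq_le_of_star hΓ hne hρ hstar
  have hsq : (Γ.card : ℝ) ^ 2 ≤ Fintype.card V ^ 2 := by gcongr
  have hfirst : Λ ≤ 30 * Fintype.card V ^ 2 * Λ / Γ.card ^ 2 := by
    rw [le_div_iff₀ (by positivity)]
    nlinarith [mul_le_mul_of_nonneg_left hsq hΛ, mul_nonneg hΛ (sq_nonneg (Γ.card : ℝ))]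
  exact hfirst.trans (le_add_of_nonneg_right (by positivity))

end GiantPoincare

lemma vertexRate_mul_sum_neighborFinset_le (G : SimpleGraph V) (θ : ℝ) (v : V) (f : V → ℝ) :
    vertexRate G θ v * ∑ x ∈ G.neighborFinset v, (f x - f v) ^ 2 ≤
      2 * dirichletEnergy (voterConductance G θ) f := by
  have hterm : ∀ x z, 0 ≤ voterConductance G θ x z * (f x - f z) ^ 2 := fun x z =>
    mul_nonneg (voterConductance_nonneg G θ x z) (sq_nonneg _)
  calc vertexRate G θ v * ∑ x ∈ G.neighborFinset v, (f x - f v) ^ 2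
      ≤ ∑ x ∈ G.neighborFinset v, 2 * (voterConductance G θ v x * (f v - f x) ^ 2) := by
        rw [Finset.mul_sum]
        refine Finset.sum_le_sum fun x hx => ?_
        rw [voterConductance_of_adj G θ ((G.mem_neighborFinset v x).1 hx)]
        nlinarith [mul_nonneg (vertexRate_nonneg G θ x) (sq_nonneg (f v - f x))]
    _ ≤ 2 * ∑ x, voterConductance G θ v x * (f v - f x) ^ 2 := by
        rw [← Finset.mul_sum]
        exact mul_le_mul_of_nonneg_left (Finset.sum_le_univ_sum_of_nonneg (hterm v)) zero_le_two
    _ ≤ 2 * dirichletEnergy (voterConductance G θ) f := by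
        gcongr
        exact Finset.single_le_sum (f := fun x => ∑ z, voterConductance G θ x z * (f x - f z) ^ 2)
          (fun x _ => Finset.sum_nonneg fun z _ => hterm x z) (Finset.mem_univ v)

theorem GiantPoincare.pairPoincare_of_degree {θ : ℝ}
    (hU : GiantPoincare G (voterConductance G θ) U Λ) (hθ : θ ≤ 2) {v : V} (hv : v ∈ U)
    (hdeg : 1 ≤ G.degree v) :
    PairPoincare G (voterConductance G θ)
      (158 * Λ * Fintype.card V ^ 2 / (G.degree v : ℝ) ^ θ) := by
  have hΓ : G.neighborFinset v ⊆ U := fun x hx =>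
    hU.mem_of_reachable v hv x ((G.mem_neighborFinset v x).1 hx).reachable
  have hcard := G.card_neighborFinset_eq_degree v
  have hne : (G.neighborFinset v).Nonempty := Finset.card_pos.1 (by omega)
  have hd : (1 : ℝ) ≤ G.degree v := by exact_mod_cast hdeg
  have hd₀ : (0 : ℝ) < G.degree v := zero_lt_one.trans_le hd
  have hdθ : 0 < (G.degree v : ℝ) ^ θ := Real.rpow_pos_of_pos hd₀ θ
  have hrate : 0 < vertexRate G θ v := by unfold vertexRate; positivity
  have hstar : ∀ f, ∑ x ∈ G.neighborFinset v, (f x - f v) ^ 2 ≤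
      2 / vertexRate G θ v * dirichletEnergy (voterConductance G θ) f := fun f => by
    rw [div_mul_eq_mul_div, le_div_iff₀' hrate]
    exact vertexRate_mul_sum_neighborFinset_le G θ v f
  refine (hU.pairPoincare_of_star hΓ hne (by positivity) hstar).mono hU.conductance_nonneg ?_
  rw [hcard]
  set n : ℝ := (Fintype.card V : ℝ)
  set d : ℝ := (G.degree v : ℝ)
  have hΛ := hU.one_le
  have hpow : d ^ θ ≤ d ^ 2 := by
    rw [← Real.rpow_two]
    exact Real.rpow_le_rpow_of_exponent_le hd hθ
  have hrate_eq : 64 * n ^ 2 * (2 / vertexRate G θ v) / d = 128 * n ^ 2 / d ^ θ := by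
    rw [vertexRate]
    field_simp
    ring
  calc 30 * n ^ 2 * Λ / d ^ 2 + 64 * n ^ 2 * (2 / vertexRate G θ v) / d
      ≤ 30 * n ^ 2 * Λ / d ^ θ + 128 * n ^ 2 * Λ / d ^ θ := by
        rw [hrate_eq]
        refine add_le_add (by gcongr) (div_le_div_of_nonneg_right ?_ hdθ.le)
        exact le_mul_of_one_le_right (by positivity) hΛ
    _ = _ := by ring

end Star

section CoreReachable

variable {V : Type*} {G : SimpleGraph V}

lemma Expands.eq_empty_of_no_boundary {A S : Finset V} (hA : Expands G A) (hSA : S ⊆ A)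
    (hS : 2 * S.card ≤ A.card) (hno : ∀ a ∈ S, ∀ b ∈ A \ S, ¬ G.Adj a b) : S = ∅ := by
  have hcard := hA S hSA hS
  have hboundary : ∑ a ∈ S, ∑ b ∈ A \ S, G.adjMatrix ℝ a b = 0 :=
    Finset.sum_eq_zero fun a ha => Finset.sum_eq_zero fun b hb => by
      rw [SimpleGraph.adjMatrix_apply, if_neg (hno a ha b hb)]
  rw [hboundary] at hcard
  exact Finset.card_eq_zero.1 (Nat.le_zero.1 (by exact_mod_cast hcard))

lemma Expands.reachable {A : Finset V} (hA : Expands G A) {x y : V} (hx : x ∈ A) (hy : y ∈ A) :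
    G.Reachable x y := by
  by_contra hxy
  set S := A.filter (G.Reachable x)
  have hSA : S ⊆ A := Finset.filter_subset _ _
  have hxS : x ∈ S := Finset.mem_filter.2 ⟨hx, SimpleGraph.Reachable.refl x⟩
  have hyS : y ∈ A \ S := Finset.mem_sdiff.2 ⟨hy, fun h => hxy (Finset.mem_filter.1 h).2⟩
  have hno : ∀ a ∈ S, ∀ b ∈ A \ S, ¬ G.Adj a b := fun a ha b hb hab => by
    obtain ⟨hbA, hbS⟩ := Finset.mem_sdiff.1 hb
    exact hbS (Finset.mem_filter.2 ⟨hbA, (Finset.mem_filter.1 ha).2.trans hab.reachable⟩)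
  rcases le_or_gt (2 * S.card) A.card with hsmall | hlarge
  · exact Finset.notMem_empty x (hA.eq_empty_of_no_boundary hSA hsmall hno ▸ hxS)
  · refine Finset.notMem_empty y (hA.eq_empty_of_no_boundary Finset.sdiff_subset ?_ ?_ ▸ hyS)
    · have := Finset.card_sdiff_add_card_eq_card hSA
      omega
    · rw [Finset.sdiff_sdiff_eq_self hSA]
      exact fun a ha b hb hab => hno b hb a ha hab.symm

lemma Expands.sq_card_le_reachablePairCount [Fintype V] {A : Finset V} (hA : Expands G A) :
    A.card ^ 2 ≤ reachablePairCount G := by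
  rw [sq, ← Finset.card_product]
  refine Finset.card_le_card fun p hp => ?_
  obtain ⟨hx, hy⟩ := Finset.mem_product.1 hp
  exact Finset.mem_filter.2 ⟨Finset.mem_univ p, hA.reachable hx hy⟩

end CoreReachable

section Bernoulli

variable {ι : Type*} [Fintype ι] [DecidableEq ι] (q : ι → ℝ)

/-- The expectation of `F ω` for independent bits `ω e`, where `ω e` is `true` with probability
`q e`. -/
def bernoulliExp (F : (ι → Bool) → ℝ) : ℝ :=
  ∑ ω : ι → Bool, F ω * ∏ e, if ω e then q e else 1 - q e

lemma bernoulliExp_one : bernoulliExp q (fun _ => 1) = 1 := by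
  have h := Finset.prod_univ_sum (fun _ : ι => (Finset.univ : Finset Bool))
    fun e b => if b then q e else 1 - q e
  simp only [Fintype.piFinset_univ, Fintype.sum_bool, if_true, Bool.false_eq_true, if_false,
    add_sub_cancel, Finset.prod_const_one] at h
  simp only [bernoulliExp, one_mul, ← h]

-- Pair each `ω` with its flip at `e`: the two weights of the bit `e` add up to the expectation of
-- its factor.
lemma bernoulliExp_mul_ite {e : ι} {F : (ι → Bool) → ℝ}
    (hF : ∀ ω b, F (Function.update ω e b) = F ω) (c : ℝ) :
    bernoulliExp q (fun ω => F ω * if ω e then c else 1) =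
      (1 + (c - 1) * q e) * bernoulliExp q F := by
  have hflip : ∀ Φ : (ι → Bool) → ℝ, ∑ ω, Φ (Function.update ω e (!(ω e))) = ∑ ω, Φ ω := fun Φ =>
    Function.Bijective.sum_comp (Function.Involutive.bijective fun ω => by simp) Φ
  have hrest : ∀ (ω : ι → Bool) (b : Bool), ∏ i ∈ Finset.univ.erase e,
      (if Function.update ω e b i then q i else 1 - q i) =
        ∏ i ∈ Finset.univ.erase e, if ω i then q i else 1 - q i := fun ω b =>
    Finset.prod_congr rfl fun i hi => by rw [Function.update_of_ne (Finset.ne_of_mem_erase hi)]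
  have htwice : ∀ c : ℝ, 2 * bernoulliExp q (fun ω => F ω * if ω e then c else 1) =
      (1 + (c - 1) * q e) * ∑ ω : ι → Bool,
        F ω * ∏ i ∈ Finset.univ.erase e, if ω i then q i else 1 - q i := fun c => by
    rw [two_mul]
    simp only [bernoulliExp, ← Finset.mul_prod_erase Finset.univ _ (Finset.mem_univ e)]
    nth_rewrite 1 [← hflip]
    rw [← Finset.sum_add_distrib, Finset.mul_sum]
    refine Finset.sum_congr rfl fun ω _ => ?_
    rw [hrest, hF, Function.update_self]
    cases ω e <;> simp <;> ring
  have hone := htwice 1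
  simp only [ite_self, mul_one, sub_self, zero_mul, add_zero, one_mul] at hone
  linarith [hone ▸ htwice c]

end Bernoulli

section RandomGraph

/-- The pairs of vertices `x < y`, which index the potential edges of a graph on `Fin N`. -/
abbrev EdgeIndex (N : ℕ) := {e : Fin N × Fin N // e.1 < e.2}

/-- A simple graph on `Fin N` as the indicator function of its edges. -/
def edgeConfigEquiv (N : ℕ) : (EdgeIndex N → Bool) ≃ SimpleGraph (Fin N) where
  toFun ω := SimpleGraph.fromRel fun x y => ∃ h : x < y, ω ⟨(x, y), h⟩ = true
  invFun G e := decide (G.Adj e.1.1 e.1.2)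
  left_inv ω := by
    funext ⟨⟨x, y⟩, h⟩
    simp [h, h.ne, h.not_gt]
  right_inv G := by
    ext x y
    rcases lt_trichotomy x y with h | rfl | h
    · simp [h, h.ne, h.not_gt]
    · simp
    · simp [h, h.ne', h.not_gt, G.adj_comm]

variable {N : ℕ}

lemma edgeConfigEquiv_adj (ω : EdgeIndex N → Bool) {x y : Fin N} (h : x < y) :
    (edgeConfigEquiv N ω).Adj x y ↔ ω ⟨(x, y), h⟩ = true := by
  simp [edgeConfigEquiv, h, h.ne, h.not_gt]

variable (p : ℕ → ℕ → ℝ)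

/-- The probability `p (x + 1) (y + 1)` of the edge between the vertices which `Fin N` numbers
`x` and `y` from `0`. -/
def edgeProb (x y : Fin N) : ℝ := p ((x : ℕ) + 1) ((y : ℕ) + 1)

/-- Expectation over the random graph with independent edge probabilities `p`. -/
def graphExp (N : ℕ) (F : SimpleGraph (Fin N) → ℝ) : ℝ := ∑ G, F G * graphWeight p N G

lemma graphWeight_edgeConfigEquiv (ω : EdgeIndex N → Bool) :
    graphWeight p N (edgeConfigEquiv N ω) =
      ∏ e : EdgeIndex N, if ω e then edgeProb p e.1.1 e.1.2 else 1 - edgeProb p e.1.1 e.1.2 := by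
  have hsupport : ∀ f : Fin N × Fin N → ℝ,
      ∏ e, (if e.1 < e.2 then f e else 1) = ∏ e : EdgeIndex N, f e.1 := fun f => by
    rw [← Finset.prod_filter,
      Finset.prod_subtype (p := fun e : Fin N × Fin N => e.1 < e.2) _ (by simp)]
  rw [graphWeight, ← Finset.prod_product', Finset.univ_product_univ, hsupport]
  exact Finset.prod_congr rfl fun e _ => by simp only [edgeConfigEquiv_adj ω e.2, edgeProb]

lemma graphExp_eq_bernoulliExp (F : SimpleGraph (Fin N) → ℝ) :
    graphExp p N F = bernoulliExp (fun e : EdgeIndex N => edgeProb p e.1.1 e.1.2)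
      fun ω => F (edgeConfigEquiv N ω) := by
  rw [graphExp, ← Equiv.sum_comp (edgeConfigEquiv N)]
  simp only [graphWeight_edgeConfigEquiv, bernoulliExp]

lemma graphExp_const (c : ℝ) : graphExp p N (fun _ => c) = c := by
  have hone : graphExp p N (fun _ => 1) = 1 :=
    (graphExp_eq_bernoulliExp p _).trans (bernoulliExp_one _)
  simp only [graphExp, one_mul] at hone
  rw [graphExp, ← Finset.mul_sum, hone, mul_one]

lemma graphExp_finset_sum {ι : Type*} (s : Finset ι) (F : ι → SimpleGraph (Fin N) → ℝ) :
    graphExp p N (fun G => ∑ i ∈ s, F i G) = ∑ i ∈ s, graphExp p N (F i) := by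
  simp only [graphExp, Finset.sum_mul]
  exact Finset.sum_comm

lemma graphExp_mul_ite_of_lt {a b : Fin N} (hab : a < b) {F : SimpleGraph (Fin N) → ℝ}
    (hF : ∀ G G' : SimpleGraph (Fin N), (∀ x y, s(x, y) ≠ s(a, b) → (G.Adj x y ↔ G'.Adj x y)) →
      F G = F G') (c : ℝ) :
    graphExp p N (fun G => F G * if G.Adj a b then c else 1) =
      (1 + (c - 1) * edgeProb p a b) * graphExp p N F := by
  simp only [graphExp_eq_bernoulliExp, edgeConfigEquiv_adj _ hab]
  refine bernoulliExp_mul_ite (e := (⟨(a, b), hab⟩ : EdgeIndex N)) _ (fun ω β => hF _ _ ?_) c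
  have hlt : ∀ x y : Fin N, x < y → s(x, y) ≠ s(a, b) →
      ((edgeConfigEquiv N (Function.update ω ⟨(a, b), hab⟩ β)).Adj x y ↔
        (edgeConfigEquiv N ω).Adj x y) := fun x y hxy hne => by
    rw [edgeConfigEquiv_adj _ hxy, edgeConfigEquiv_adj _ hxy, Function.update_of_ne]
    rintro heq
    obtain ⟨rfl, rfl⟩ := Prod.mk.inj (congrArg Subtype.val heq)
    exact hne rfl
  intro x y hne
  rcases lt_trichotomy x y with hxy | rfl | hxy
  · exact hlt x y hxy hne
  · simp only [SimpleGraph.irrefl]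
  · rw [SimpleGraph.adj_comm, SimpleGraph.adj_comm (edgeConfigEquiv N ω)]
    exact hlt y x hxy (Sym2.eq_swap (a := x) ▸ hne)

variable {p}

lemma graphExp_mul_ite (hp : ∀ i j, p i j = p j i) {a b : Fin N} (hab : a ≠ b)
    {F : SimpleGraph (Fin N) → ℝ}
    (hF : ∀ G G' : SimpleGraph (Fin N), (∀ x y, s(x, y) ≠ s(a, b) → (G.Adj x y ↔ G'.Adj x y)) →
      F G = F G') (c : ℝ) :
    graphExp p N (fun G => F G * if G.Adj a b then c else 1) =
      (1 + (c - 1) * edgeProb p a b) * graphExp p N F := by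
  rcases lt_or_gt_of_ne hab with h | h
  · exact graphExp_mul_ite_of_lt p h hF c
  · rw [Sym2.eq_swap (a := a)] at hF
    rw [show edgeProb p a b = edgeProb p b a from hp _ _]
    simpa only [SimpleGraph.adj_comm _ a b] using graphExp_mul_ite_of_lt p h hF c

theorem graphExp_mul_prod_ite (hp : ∀ i j, p i j = p j i) {X Y : Finset (Fin N)}
    (hXY : Disjoint X Y) {F : SimpleGraph (Fin N) → ℝ}
    (hF : ∀ G G' : SimpleGraph (Fin N), (∀ x y, ¬(x ∈ X ∧ y ∈ Y) → ¬(y ∈ X ∧ x ∈ Y) →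
      (G.Adj x y ↔ G'.Adj x y)) → F G = F G') (c : ℝ) :
    graphExp p N (fun G => F G * ∏ x ∈ X, ∏ y ∈ Y, if G.Adj x y then c else 1) =
      (∏ x ∈ X, ∏ y ∈ Y, (1 + (c - 1) * edgeProb p x y)) * graphExp p N F := by
  suffices h : ∀ E ⊆ X ×ˢ Y,
      graphExp p N (fun G => F G * ∏ e ∈ E, if G.Adj e.1 e.2 then c else 1) =
        (∏ e ∈ E, (1 + (c - 1) * edgeProb p e.1 e.2)) * graphExp p N F by
    simpa only [Finset.prod_product] using h _ subset_rfl
  intro E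
  induction E using Finset.induction_on with
  | empty => simp
  | insert e E he ih =>
    intro hE
    obtain ⟨heXY, hEXY⟩ := Finset.insert_subset_iff.1 hE
    obtain ⟨heX, heY⟩ := Finset.mem_product.1 heXY
    have hne : e.1 ≠ e.2 := fun h => Finset.disjoint_left.1 hXY heX (h ▸ heY)
    simp only [Finset.prod_insert he, mul_assoc, ← ih hEXY]
    rw [← graphExp_mul_ite hp hne ?_ c]
    · simp only [mul_comm, mul_left_comm]
    intro G G' hG
    congr 1
    · refine hF G G' fun x y hxy hyx => hG x y fun heq => ?_
      rcases Sym2.eq_iff.1 heq with ⟨rfl, rfl⟩ | ⟨rfl, rfl⟩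
      exacts [hxy ⟨heX, heY⟩, hyx ⟨heX, heY⟩]
    · refine Finset.prod_congr rfl fun e' he' => ?_
      obtain ⟨heX', -⟩ := Finset.mem_product.1 (hEXY he')
      rw [hG e'.1 e'.2]
      intro heq
      rcases Sym2.eq_iff.1 heq with ⟨h₁, h₂⟩ | ⟨h₁, -⟩
      · exact he (Prod.ext h₁ h₂ ▸ he')
      · exact Finset.disjoint_left.1 hXY heX' (h₁ ▸ heY)

end RandomGraph

/-- A symmetric family of edge probabilities. -/
structure IsEdgeProb (p : ℕ → ℕ → ℝ) : Prop where
  symm : ∀ i j, p i j = p j i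
  nonneg : ∀ i j, 0 ≤ p i j
  le_one : ∀ i j, p i j ≤ 1

namespace IsEdgeProb

variable {N : ℕ} {p : ℕ → ℕ → ℝ} (hp : IsEdgeProb p) {Φ Ψ : SimpleGraph (Fin N) → Prop}
include hp

lemma edgeProb_nonneg (x y : Fin N) : 0 ≤ edgeProb p x y := hp.nonneg _ _

lemma edgeProb_le_one (x y : Fin N) : edgeProb p x y ≤ 1 := hp.le_one _ _

lemma graphWeight_nonneg (G : SimpleGraph (Fin N)) : 0 ≤ graphWeight p N G := by
  refine Finset.prod_nonneg fun i _ => Finset.prod_nonneg fun j _ => ?_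
  split_ifs
  · exact hp.nonneg _ _
  · exact sub_nonneg.2 (hp.le_one _ _)
  · exact zero_le_one

lemma graphExp_mono {F F' : SimpleGraph (Fin N) → ℝ} (h : ∀ G, F G ≤ F' G) :
    graphExp p N F ≤ graphExp p N F' :=
  Finset.sum_le_sum fun G _ => mul_le_mul_of_nonneg_right (h G) (hp.graphWeight_nonneg G)

omit hp in
lemma graphProb_eq_graphExp : graphProb p N Φ = graphExp p N fun G => if Φ G then 1 else 0 :=
  Finset.sum_congr rfl fun G _ => by rw [ite_mul, one_mul, zero_mul]

lemma graphProb_nonneg : 0 ≤ graphProb p N Φ :=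
  Finset.sum_nonneg fun G _ => by
    split_ifs
    exacts [hp.graphWeight_nonneg G, le_rfl]

lemma graphProb_mono (h : ∀ G, Φ G → Ψ G) : graphProb p N Φ ≤ graphProb p N Ψ := by
  rw [graphProb_eq_graphExp, graphProb_eq_graphExp]
  refine hp.graphExp_mono fun G => ?_
  by_cases hG : Φ G
  · rw [if_pos hG, if_pos (h G hG)]
  · rw [if_neg hG]
    split_ifs <;> norm_num

lemma graphProb_le_one : graphProb p N Φ ≤ 1 := by
  rw [graphProb_eq_graphExp]
  refine (hp.graphExp_mono fun G => ?_).trans_eq (graphExp_const p 1)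
  split_ifs <;> norm_num

lemma graphProb_le_graphExp {F : SimpleGraph (Fin N) → ℝ} (hF : ∀ G, 0 ≤ F G)
    (hΦ : ∀ G, Φ G → 1 ≤ F G) : graphProb p N Φ ≤ graphExp p N F := by
  rw [graphProb_eq_graphExp]
  refine hp.graphExp_mono fun G => ?_
  split_ifs with hG
  exacts [hΦ G hG, hF G]

omit hp in
lemma graphProb_not : graphProb p N (fun G => ¬Φ G) = 1 - graphProb p N Φ := by
  rw [eq_sub_iff_add_eq, ← graphExp_const p (N := N) 1, graphExp, graphProb, graphProb,
    ← Finset.sum_add_distrib]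
  refine Finset.sum_congr rfl fun G _ => ?_
  by_cases hG : Φ G <;> simp [hG]

lemma graphProb_exists_mem_le {ι : Type*} (s : Finset ι) (Φ : ι → SimpleGraph (Fin N) → Prop) :
    graphProb p N (fun G => ∃ i ∈ s, Φ i G) ≤ ∑ i ∈ s, graphProb p N (Φ i) := by
  simp only [graphProb_eq_graphExp (Φ := Φ _), ← graphExp_finset_sum]
  have hind : ∀ (G : SimpleGraph (Fin N)) i, (0 : ℝ) ≤ if Φ i G then 1 else 0 := fun G i => by
    split_ifs <;> norm_num
  refine hp.graphProb_le_graphExp (fun G => Finset.sum_nonneg fun i _ => hind G i) ?_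
  rintro G ⟨i, hi, hG⟩
  calc (1 : ℝ) = if Φ i G then 1 else 0 := (if_pos hG).symm
    _ ≤ _ := Finset.single_le_sum (f := fun i => if Φ i G then (1 : ℝ) else 0)
      (fun i _ => hind G i) hi

lemma graphProb_or_le : graphProb p N (fun G => Φ G ∨ Ψ G) ≤ graphProb p N Φ + graphProb p N Ψ := by
  have h := hp.graphProb_exists_mem_le Finset.univ fun (b : Bool) G => if b then Ψ G else Φ G
  simpa [add_comm] using h

lemma sum_graphProb_eq_le_one {α : Type*} (s : Finset α) (f : SimpleGraph (Fin N) → α) :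
    ∑ a ∈ s, graphProb p N (fun G => f G = a) ≤ 1 := by
  simp only [graphProb_eq_graphExp, ← graphExp_finset_sum]
  refine (hp.graphExp_mono fun G => ?_).trans_eq (graphExp_const p 1)
  rw [Finset.sum_ite_eq]
  split_ifs <;> norm_num

lemma graphProb_and_no_edges {X Y : Finset (Fin N)} (hXY : Disjoint X Y)
    (hΦ : ∀ G G' : SimpleGraph (Fin N), (∀ x y, ¬(x ∈ X ∧ y ∈ Y) → ¬(y ∈ X ∧ x ∈ Y) →
      (G.Adj x y ↔ G'.Adj x y)) → (Φ G ↔ Φ G')) :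
    graphProb p N (fun G => Φ G ∧ ∀ x ∈ X, ∀ y ∈ Y, ¬G.Adj x y) =
      (∏ x ∈ X, ∏ y ∈ Y, (1 - edgeProb p x y)) * graphProb p N Φ := by
  have h := graphExp_mul_prod_ite hp.symm hXY (F := fun G => if Φ G then 1 else 0)
    (fun G G' hG => by simp only [hΦ G G' hG]) 0
  simp only [zero_sub, neg_one_mul, ← sub_eq_add_neg] at h
  rw [graphProb_eq_graphExp, graphProb_eq_graphExp, ← h]
  congr 1
  funext G
  have hprod : (∏ x ∈ X, ∏ y ∈ Y, if G.Adj x y then (0 : ℝ) else 1) =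
      if ∀ x ∈ X, ∀ y ∈ Y, ¬G.Adj x y then 1 else 0 := by
    simp only [← ite_not (p := G.Adj _ _), Finset.prod_ite_zero, Finset.prod_const_one]
  by_cases hG : Φ G <;> simp [hprod, hG]

end IsEdgeProb

section Chernoff

variable {N : ℕ} {p : ℕ → ℕ → ℝ}

lemma graphExp_exp_le (hp : IsEdgeProb p) {X Y : Finset (Fin N)} (hXY : Disjoint X Y) {a b : ℝ}
    (hb : ∀ q ∈ Set.Icc (0 : ℝ) 1,
      0 ≤ 1 + (Real.exp a - 1) * q ∧ 1 + (Real.exp a - 1) * q ≤ Real.exp (b * q)) (t : ℝ) :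
    graphExp p N (fun G => Real.exp (t + a * ∑ x ∈ X, ∑ y ∈ Y, G.adjMatrix ℝ x y)) ≤
      Real.exp (t + b * ∑ x ∈ X, ∑ y ∈ Y, edgeProb p x y) := by
  have hfactor := fun x y : Fin N => hb (edgeProb p x y) ⟨hp.edgeProb_nonneg x y,
    hp.edgeProb_le_one x y⟩
  have hexp : ∀ G : SimpleGraph (Fin N),
      Real.exp (t + a * ∑ x ∈ X, ∑ y ∈ Y, G.adjMatrix ℝ x y) =
        Real.exp t * ∏ x ∈ X, ∏ y ∈ Y, if G.Adj x y then Real.exp a else 1 := fun G => by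
    simp only [Real.exp_add, Finset.mul_sum, Real.exp_sum, SimpleGraph.adjMatrix_apply, mul_ite,
      mul_one, mul_zero, apply_ite Real.exp, Real.exp_zero]
  simp only [hexp]
  rw [graphExp_mul_prod_ite hp.symm hXY (fun _ _ _ => rfl), graphExp_const, Real.exp_add, mul_comm]
  refine mul_le_mul_of_nonneg_left ?_ (Real.exp_pos t).le
  simp only [Finset.mul_sum, Real.exp_sum]
  exact Finset.prod_le_prod (fun x _ => Finset.prod_nonneg fun y _ => (hfactor x y).1) fun x _ =>
    Finset.prod_le_prod (fun y _ => (hfactor x y).1) fun y _ => (hfactor x y).2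

variable (hp : IsEdgeProb p) {X Y : Finset (Fin N)} (hXY : Disjoint X Y) (t : ℝ)
include hp hXY

theorem graphProb_lt_sum_adjMatrix_le :
    graphProb p N (fun G => t < ∑ x ∈ X, ∑ y ∈ Y, G.adjMatrix ℝ x y) ≤
      Real.exp (2 * ∑ x ∈ X, ∑ y ∈ Y, edgeProb p x y - t) := by
  refine (hp.graphProb_le_graphExp (fun G => (Real.exp_pos _).le) fun G hG => ?_).trans <|
    (graphExp_exp_le hp hXY (a := 1) (b := 2) (fun q hq => ?_) (-t)).trans_eq
      (by rw [sub_eq_neg_add])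
  · exact Real.one_le_exp (by linarith)
  · have hexp_one : 1 ≤ Real.exp 1 := Real.one_le_exp zero_le_one
    have hexp_lt := Real.exp_one_lt_d9
    refine ⟨by nlinarith [hq.1], ?_⟩
    nlinarith [hq.1, Real.add_one_le_exp (2 * q)]

theorem graphProb_sum_adjMatrix_lt_le :
    graphProb p N (fun G => ∑ x ∈ X, ∑ y ∈ Y, G.adjMatrix ℝ x y < t) ≤
      Real.exp (t - 1 / 2 * ∑ x ∈ X, ∑ y ∈ Y, edgeProb p x y) := by
  refine (hp.graphProb_le_graphExp (fun G => (Real.exp_pos _).le) fun G hG => ?_).trans <|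
    (graphExp_exp_le hp hXY (a := -1) (b := -(1 / 2)) (fun q hq => ?_) t).trans_eq
      (by rw [neg_mul, ← sub_eq_add_neg])
  · exact Real.one_le_exp (by linarith)
  · have hexp_pos := Real.exp_pos (-1)
    have hexp_lt := Real.exp_neg_one_lt_d9
    refine ⟨by nlinarith [hq.1, hq.2], ?_⟩
    nlinarith [hq.1, Real.add_one_le_exp (-(1 / 2) * q)]

end Chernoff

section Events

variable {N : ℕ} {p : ℕ → ℕ → ℝ}

/-- The typical properties of a random graph with hubs `H`, core `A` and rest `B`: upper bounds
`t` on all degrees, lower bounds `s` on the number of edges from each hub to the core, expansion of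
the core, and an edge to the core from each piece of `B` of size at least `k`. -/
structure IsTypical (H A B : Finset (Fin N)) (t s : Fin N → ℝ) (k : ℕ)
    (G : SimpleGraph (Fin N)) : Prop where
  degree_le : ∀ x, (G.degree x : ℝ) ≤ t x
  le_sum_core : ∀ h ∈ H, s h ≤ ∑ a ∈ A, G.adjMatrix ℝ h a
  expands : Expands G A
  attached : ∀ x ∈ B, k ≤ (piece G B k x).card → ∃ b ∈ piece G B k x, ∃ a ∈ A, G.Adj b a

variable (hp : IsEdgeProb p) {H A B : Finset (Fin N)} {ε : ℝ} (hε : 0 ≤ ε)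
include hp

lemma graphProb_exists_lt_degree_le {t : Fin N → ℝ}
    (ht : ∀ x, Real.exp (2 * ∑ y ∈ Finset.univ.erase x, edgeProb p x y - t x) ≤ ε) :
    graphProb p N (fun G => ∃ x, t x < G.degree x) ≤ N * ε := by
  have hdeg : ∀ (G : SimpleGraph (Fin N)) x,
      (G.degree x : ℝ) = ∑ x' ∈ {x}, ∑ y ∈ Finset.univ.erase x, G.adjMatrix ℝ x' y := fun G x => by
    rw [Finset.sum_singleton, ← sum_adjMatrix, ← Finset.add_sum_erase _ _ (Finset.mem_univ x),
      SimpleGraph.adjMatrix_apply, if_neg (G.irrefl), zero_add]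
  have hunion := hp.graphProb_exists_mem_le Finset.univ
    fun x (G : SimpleGraph (Fin N)) => t x < G.degree x
  simp only [Finset.mem_univ, true_and] at hunion
  calc _ ≤ ∑ x, graphProb p N fun G => t x < G.degree x := hunion
    _ ≤ ∑ _x : Fin N, ε := Finset.sum_le_sum fun x _ => by
        simp only [hdeg]
        refine (graphProb_lt_sum_adjMatrix_le hp (by simp) (t x)).trans ?_
        rw [Finset.sum_singleton]
        exact ht x
    _ = N * ε := by simp

include hε in
lemma graphProb_exists_sum_core_lt_le (hHA : Disjoint H A) {s : Fin N → ℝ}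
    (hs : ∀ h ∈ H, Real.exp (s h - 1 / 2 * ∑ a ∈ A, edgeProb p h a) ≤ ε) :
    graphProb p N (fun G => ∃ h ∈ H, ∑ a ∈ A, G.adjMatrix ℝ h a < s h) ≤ N * ε := by
  have hterm : ∀ h ∈ H, graphProb p N (fun G => ∑ a ∈ A, G.adjMatrix ℝ h a < s h) ≤ ε :=
    fun h hh => by
      have hdisj : Disjoint {h} A :=
        Finset.disjoint_singleton_left.2 (Finset.disjoint_left.1 hHA hh)
      have hchernoff := graphProb_sum_adjMatrix_lt_le hp hdisj (s h)
      simp only [Finset.sum_singleton] at hchernoff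
      exact hchernoff.trans (hs h hh)
  calc _ ≤ ∑ h ∈ H, graphProb p N fun G => ∑ a ∈ A, G.adjMatrix ℝ h a < s h :=
        hp.graphProb_exists_mem_le H _
    _ ≤ H.card • ε := Finset.sum_le_card_nsmul H _ ε hterm
    _ ≤ N * ε := by
        rw [nsmul_eq_mul]
        gcongr
        exact_mod_cast (Finset.card_le_univ H).trans_eq (Fintype.card_fin N)

include hε in
lemma graphProb_not_expands_le
    (hA : ∀ S ⊆ A, 2 * S.card ≤ A.card →
      Real.exp (S.card - 1 / 2 * ∑ x ∈ S, ∑ y ∈ A \ S, edgeProb p x y) ≤ ε ^ S.card) :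
    graphProb p N (fun G => ¬Expands G A) ≤ (1 + ε) ^ A.card - 1 := by
  set 𝒮 := A.powerset.filter fun S => S.Nonempty ∧ 2 * S.card ≤ A.card
  have hviolation : ∀ G : SimpleGraph (Fin N), ¬Expands G A →
      ∃ S ∈ 𝒮, ∑ x ∈ S, ∑ y ∈ A \ S, G.adjMatrix ℝ x y < S.card := fun G hG => by
    simp only [Expands, not_forall, not_le] at hG
    obtain ⟨S, hSA, hcard, hlt⟩ := hG
    have hne : S.Nonempty := by
      by_contra hempty
      simp [Finset.not_nonempty_iff_eq_empty.1 hempty] at hlt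
    exact ⟨S, Finset.mem_filter.2 ⟨Finset.mem_powerset.2 hSA, hne, hcard⟩,
      lt_of_eq_of_lt (by congr!) hlt⟩
  have hbinomial : ∑ S ∈ A.powerset, ε ^ S.card = (1 + ε) ^ A.card := by
    simpa only [one_pow, mul_one, add_comm ε] using Finset.sum_pow_mul_eq_add_pow ε 1 A
  have hempty := Finset.add_sum_erase A.powerset (fun S => ε ^ S.card)
    (Finset.empty_mem_powerset A)
  rw [Finset.card_empty, pow_zero, hbinomial] at hempty
  calc _ ≤ ∑ S ∈ 𝒮, graphProb p N fun G => ∑ x ∈ S, ∑ y ∈ A \ S, G.adjMatrix ℝ x y < S.card :=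
        (hp.graphProb_mono hviolation).trans (hp.graphProb_exists_mem_le 𝒮 _)
    _ ≤ ∑ S ∈ 𝒮, ε ^ S.card := Finset.sum_le_sum fun S hS => by
        obtain ⟨hSA, -, hcard⟩ := Finset.mem_filter.1 hS
        exact (graphProb_sum_adjMatrix_lt_le hp Finset.disjoint_sdiff _).trans
          (hA S (Finset.mem_powerset.1 hSA) hcard)
    _ ≤ ∑ S ∈ A.powerset.erase ∅, ε ^ S.card := by
        refine Finset.sum_le_sum_of_subset_of_nonneg (fun S hS => ?_) fun _ _ _ => by positivity
        obtain ⟨hSA, hne, -⟩ := Finset.mem_filter.1 hS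
        exact Finset.mem_erase.2 ⟨hne.ne_empty, hSA⟩
    _ = (1 + ε) ^ A.card - 1 := eq_sub_of_add_eq' hempty

-- The pieces depend only on edges inside `B`, hence are independent of the edges from `B` to `A`.
lemma graphProb_piece_eq_and_no_edges (hBA : Disjoint B A) {S : Finset (Fin N)} (hS : S ⊆ B)
    (k : ℕ) (x : Fin N) :
    graphProb p N (fun G => piece G B k x = S ∧ ∀ b ∈ S, ∀ a ∈ A, ¬G.Adj b a) =
      (∏ b ∈ S, ∏ a ∈ A, (1 - edgeProb p b a)) * graphProb p N fun G => piece G B k x = S := by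
  refine hp.graphProb_and_no_edges (Finset.disjoint_of_subset_left hS hBA) fun G G' hG => ?_
  rw [piece_congr fun b hb c hc => hG b c ?_ ?_]
  · exact fun h => Finset.disjoint_left.1 hBA hc h.2
  · exact fun h => Finset.disjoint_left.1 hBA hb h.2

include hε in
lemma graphProb_piece_not_attached_le (hBA : Disjoint B A) {k : ℕ} (hk : 1 ≤ k)
    (hB : ∀ S ⊆ B, k ≤ S.card → ∏ x ∈ S, ∏ y ∈ A, (1 - edgeProb p x y) ≤ ε) {x : Fin N}
    (hx : x ∈ B) :
    graphProb p N (fun G => k ≤ (piece G B k x).card ∧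
      ∀ b ∈ piece G B k x, ∀ a ∈ A, ¬G.Adj b a) ≤ ε := by
  set 𝒯 := B.powerset.filter fun S => k ≤ S.card
  calc _ ≤ graphProb p N fun G => ∃ S ∈ 𝒯, piece G B k x = S ∧ ∀ b ∈ S, ∀ a ∈ A, ¬G.Adj b a :=
        hp.graphProb_mono fun G hG => ⟨_, Finset.mem_filter.2 ⟨Finset.mem_powerset.2
          ((isPieceSystem_piece hk).subset x hx), hG.1⟩, rfl, hG.2⟩
    _ ≤ ∑ S ∈ 𝒯, ε * graphProb p N fun G => piece G B k x = S := by
        refine (hp.graphProb_exists_mem_le 𝒯 _).trans (Finset.sum_le_sum fun S hS => ?_)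
        obtain ⟨hSB, hcard⟩ := Finset.mem_filter.1 hS
        rw [graphProb_piece_eq_and_no_edges hp hBA (Finset.mem_powerset.1 hSB)]
        exact mul_le_mul_of_nonneg_right (hB S (Finset.mem_powerset.1 hSB) hcard)
          hp.graphProb_nonneg
    _ ≤ ε := by
        rw [← Finset.mul_sum]
        exact mul_le_of_le_one_right hε (hp.sum_graphProb_eq_le_one 𝒯 _)

include hε in
lemma graphProb_exists_piece_not_attached_le (hBA : Disjoint B A) {k : ℕ} (hk : 1 ≤ k)
    (hB : ∀ S ⊆ B, k ≤ S.card → ∏ x ∈ S, ∏ y ∈ A, (1 - edgeProb p x y) ≤ ε) :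
    graphProb p N (fun G => ∃ x ∈ B, k ≤ (piece G B k x).card ∧
      ∀ b ∈ piece G B k x, ∀ a ∈ A, ¬G.Adj b a) ≤ N * ε :=
  calc _ ≤ ∑ x ∈ B, graphProb p N fun G => k ≤ (piece G B k x).card ∧
          ∀ b ∈ piece G B k x, ∀ a ∈ A, ¬G.Adj b a := hp.graphProb_exists_mem_le B _
    _ ≤ B.card • ε := Finset.sum_le_card_nsmul B _ ε fun _ hx =>
        graphProb_piece_not_attached_le hp hε hBA hk hB hx
    _ ≤ N * ε := by
        rw [nsmul_eq_mul]
        gcongr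
        exact_mod_cast (Finset.card_le_univ B).trans_eq (Fintype.card_fin N)

include hε in
theorem le_graphProb_isTypical (hHA : Disjoint H A) (hBA : Disjoint B A) {t s : Fin N → ℝ} {k : ℕ}
    (hk : 1 ≤ k)
    (ht : ∀ x, Real.exp (2 * ∑ y ∈ Finset.univ.erase x, edgeProb p x y - t x) ≤ ε)
    (hs : ∀ h ∈ H, Real.exp (s h - 1 / 2 * ∑ a ∈ A, edgeProb p h a) ≤ ε)
    (hA : ∀ S ⊆ A, 2 * S.card ≤ A.card →
      Real.exp (S.card - 1 / 2 * ∑ x ∈ S, ∑ y ∈ A \ S, edgeProb p x y) ≤ ε ^ S.card)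
    (hB : ∀ S ⊆ B, k ≤ S.card → ∏ x ∈ S, ∏ y ∈ A, (1 - edgeProb p x y) ≤ ε) :
    1 - (3 * (N * ε) + ((1 + ε) ^ A.card - 1)) ≤ graphProb p N (IsTypical H A B t s k) := by
  have hcomplement : ∀ G : SimpleGraph (Fin N), ¬IsTypical H A B t s k G →
      (∃ x, t x < G.degree x) ∨ (∃ h ∈ H, ∑ a ∈ A, G.adjMatrix ℝ h a < s h) ∨
        ¬Expands G A ∨ ∃ x ∈ B, k ≤ (piece G B k x).card ∧
          ∀ b ∈ piece G B k x, ∀ a ∈ A, ¬G.Adj b a := fun G hG => by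
    contrapose! hG
    exact ⟨hG.1, hG.2.1, hG.2.2.1, hG.2.2.2⟩
  have hunion := hp.graphProb_mono hcomplement
  rw [IsEdgeProb.graphProb_not] at hunion
  have h₁ := hunion.trans hp.graphProb_or_le
  have h₂ := h₁.trans (add_le_add_right hp.graphProb_or_le _)
  have h₃ := h₂.trans (add_le_add_right (add_le_add_right hp.graphProb_or_le _) _)
  linarith [graphProb_exists_lt_degree_le hp ht, graphProb_exists_sum_core_lt_le hp hε hHA hs,
    graphProb_not_expands_le hp hε hA, graphProb_exists_piece_not_attached_le hp hε hBA hk hB]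

end Events

section NorrosReittu

variable {β γ : ℝ} {N : ℕ}

lemma isEdgeProb_snrEdgeProb (hβ : 0 ≤ β) : IsEdgeProb (snrEdgeProb β γ N) where
  symm i j := by
    unfold snrEdgeProb
    congr 3
    ring
  nonneg i j := by
    unfold snrEdgeProb
    exact sub_nonneg.2 (Real.exp_le_one_iff.2 (neg_nonpos.2 (by positivity)))
  le_one i j := sub_le_self _ (Real.exp_pos _).le

/-- The weight of a vertex of the Norros–Reittu graph, its expected degree up to logarithmic
factors. As `Fin N` starts at `0`, the vertex `x` is the paper's vertex `x + 1`. -/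
def snrWeight (γ : ℝ) (x : Fin N) : ℝ := ((N : ℝ) / ((x : ℕ) + 1 : ℝ)) ^ γ

lemma one_le_div_succ (x : Fin N) : (1 : ℝ) ≤ (N : ℝ) / ((x : ℕ) + 1 : ℝ) := by
  rw [le_div_iff₀ (by positivity), one_mul]
  exact_mod_cast x.2

lemma one_le_snrWeight (hγ : 0 ≤ γ) (x : Fin N) : 1 ≤ snrWeight γ x :=
  Real.one_le_rpow (one_le_div_succ x) hγ

lemma snrWeight_rpow_le_div_succ {θ : ℝ} (h : γ * θ ≤ 1) (x : Fin N) :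
    snrWeight γ x ^ θ ≤ N / ((x : ℕ) + 1 : ℝ) := by
  rw [snrWeight, ← Real.rpow_mul (by positivity)]
  exact (Real.rpow_le_rpow_of_exponent_le (one_le_div_succ x) h).trans_eq (Real.rpow_one _)

lemma snrWeight_rpow_le_rpow_div_succ {θ : ℝ} (h : 1 ≤ γ * θ) (x : Fin N) :
    snrWeight γ x ^ θ ≤ (N : ℝ) ^ (γ * θ) / ((x : ℕ) + 1 : ℝ) := by
  have hx : (1 : ℝ) ≤ (x : ℕ) + 1 := le_add_of_nonneg_left (Nat.cast_nonneg _)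
  rw [snrWeight, ← Real.rpow_mul (by positivity),
    Real.div_rpow (Nat.cast_nonneg N) (zero_le_one.trans hx)]
  gcongr
  exact Real.self_le_rpow_of_one_le hx h

lemma snrWeight_le_rpow_natCast (hγ : 0 ≤ γ) (x : Fin N) : snrWeight γ x ≤ (N : ℝ) ^ γ :=
  Real.rpow_le_rpow (by positivity) (div_le_self (Nat.cast_nonneg N)
    (le_add_of_nonneg_left (Nat.cast_nonneg _))) hγ

lemma edgeProb_snrEdgeProb (x y : Fin N) :
    edgeProb (snrEdgeProb β γ N) x y =
      1 - Real.exp (-(β / N * snrWeight γ x * snrWeight γ y)) := by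
  have hN : (0 : ℝ) < N := by exact_mod_cast x.pos
  have hexponent : β * (N : ℝ) ^ (2 * γ - 1) * (((x : ℕ) + 1 : ℕ) : ℝ) ^ (-γ) *
      (((y : ℕ) + 1 : ℕ) : ℝ) ^ (-γ) = β / N * snrWeight γ x * snrWeight γ y := by
    push_cast
    rw [snrWeight, snrWeight, Real.div_rpow hN.le (by positivity),
      Real.div_rpow hN.le (by positivity), Real.rpow_neg (by positivity),
      Real.rpow_neg (by positivity), Real.rpow_sub hN, two_mul, Real.rpow_add hN, Real.rpow_one]
    ring
  rw [edgeProb, snrEdgeProb, hexponent]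

lemma edgeProb_snrEdgeProb_le (x y : Fin N) :
    edgeProb (snrEdgeProb β γ N) x y ≤ β / N * snrWeight γ x * snrWeight γ y := by
  rw [edgeProb_snrEdgeProb]
  linarith [Real.add_one_le_exp (-(β / N * snrWeight γ x * snrWeight γ y))]

lemma half_le_one_sub_exp_neg {w : ℝ} (h₀ : 0 ≤ w) (h₁ : w ≤ 1) :
    w / 2 ≤ 1 - Real.exp (-w) := by
  have hinv : Real.exp (-w) * Real.exp w = 1 := by
    rw [← Real.exp_add, neg_add_cancel, Real.exp_zero]
  nlinarith [Real.add_one_le_exp w, Real.exp_pos (-w)]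

lemma sum_inv_succ_le (N : ℕ) : ∑ x : Fin N, ((x : ℕ) + 1 : ℝ)⁻¹ ≤ 1 + Real.log N := by
  refine le_of_eq_of_le ?_ (harmonic_le_one_add_log N)
  rw [Fin.sum_univ_eq_sum_range fun i : ℕ => ((i : ℝ) + 1)⁻¹, harmonic]
  push_cast
  rfl

lemma sum_edgeProb_snrEdgeProb_le (hβ : 0 ≤ β) (hγ₀ : 0 ≤ γ) (hγ₁ : γ ≤ 1) (x : Fin N) :
    ∑ y, edgeProb (snrEdgeProb β γ N) x y ≤ β * snrWeight γ x * (1 + Real.log N) := by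
  have hN : (0 : ℝ) < N := by exact_mod_cast x.pos
  have hx : 0 ≤ snrWeight γ x := zero_le_one.trans (one_le_snrWeight hγ₀ x)
  calc ∑ y, edgeProb (snrEdgeProb β γ N) x y
      ≤ ∑ y : Fin N, β * snrWeight γ x * ((y : ℕ) + 1 : ℝ)⁻¹ := by
        refine Finset.sum_le_sum fun y _ => (edgeProb_snrEdgeProb_le x y).trans ?_
        have hy : snrWeight γ y ≤ N / ((y : ℕ) + 1 : ℝ) := by
          simpa only [Real.rpow_one] using
            snrWeight_rpow_le_div_succ (θ := 1) (by linarith) y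
        calc β / N * snrWeight γ x * snrWeight γ y
            ≤ β / N * snrWeight γ x * (N / ((y : ℕ) + 1 : ℝ)) := by gcongr
          _ = β * snrWeight γ x * ((y : ℕ) + 1 : ℝ)⁻¹ := by field_simp
    _ ≤ β * snrWeight γ x * (1 + Real.log N) := by
        rw [← Finset.mul_sum]
        exact mul_le_mul_of_nonneg_left (sum_inv_succ_le N) (by positivity)

end NorrosReittu

section Layers

variable {N : ℕ} {L γ : ℝ}

/-- The hubs: the vertices of weight at least `(2L) ^ γ`. -/
def hubSet (N : ℕ) (L : ℝ) : Finset (Fin N) :=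
  Finset.univ.filter fun x => ((x : ℕ) : ℝ) + 1 ≤ N / (2 * L)

/-- The core: the vertices of weight between `L ^ γ` and `(2L) ^ γ`. -/
def coreSet (N : ℕ) (L : ℝ) : Finset (Fin N) :=
  Finset.univ.filter fun x => (N : ℝ) / (2 * L) < ((x : ℕ) : ℝ) + 1 ∧ ((x : ℕ) : ℝ) + 1 ≤ N / L

/-- The remaining vertices, of weight less than `L ^ γ`. -/
def restSet (N : ℕ) (L : ℝ) : Finset (Fin N) :=
  Finset.univ.filter fun x => (N : ℝ) / L < ((x : ℕ) : ℝ) + 1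

lemma mem_hubSet {x : Fin N} : x ∈ hubSet N L ↔ ((x : ℕ) : ℝ) + 1 ≤ N / (2 * L) := by
  simp only [hubSet, Finset.mem_filter, Finset.mem_univ, true_and]

lemma mem_coreSet {x : Fin N} : x ∈ coreSet N L ↔
    (N : ℝ) / (2 * L) < ((x : ℕ) : ℝ) + 1 ∧ ((x : ℕ) : ℝ) + 1 ≤ N / L := by
  simp only [coreSet, Finset.mem_filter, Finset.mem_univ, true_and]

lemma mem_restSet {x : Fin N} : x ∈ restSet N L ↔ (N : ℝ) / L < ((x : ℕ) : ℝ) + 1 := by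
  simp only [restSet, Finset.mem_filter, Finset.mem_univ, true_and]

lemma disjoint_hubSet_coreSet : Disjoint (hubSet N L) (coreSet N L) :=
  Finset.disjoint_left.2 fun _ hx hx' =>
    (mem_coreSet.1 hx').1.not_ge (mem_hubSet.1 hx)

lemma disjoint_restSet_coreSet : Disjoint (restSet N L) (coreSet N L) :=
  Finset.disjoint_left.2 fun _ hx hx' =>
    (mem_restSet.1 hx).not_ge (mem_coreSet.1 hx').2

lemma div_two_mul_le (hL : 0 < L) : (N : ℝ) / (2 * L) ≤ N / L := by
  gcongr
  linarith

lemma mem_restSet_iff (hL : 0 < L) (x : Fin N) :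
    x ∈ restSet N L ↔ x ∉ hubSet N L ∧ x ∉ coreSet N L := by
  have hle : (N : ℝ) / (2 * L) ≤ N / L := div_two_mul_le hL
  simp only [mem_restSet, mem_hubSet, mem_coreSet, not_and, not_le]
  exact ⟨fun h => ⟨hle.trans_lt h, fun _ => h⟩, fun h => h.2 h.1⟩

lemma rpow_le_snrWeight (hL : 0 < L) (hγ : 0 ≤ γ) {x : Fin N} (hx : x ∉ restSet N L) :
    L ^ γ ≤ snrWeight γ x := by
  rw [mem_restSet, not_lt, le_div_iff₀ hL] at hx
  refine Real.rpow_le_rpow hL.le ?_ hγ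
  rw [le_div_iff₀ (by positivity)]
  linarith

lemma snrWeight_le_rpow (hL : 0 < L) (hγ : 0 ≤ γ) {x : Fin N} (hx : x ∉ hubSet N L) :
    snrWeight γ x ≤ (2 * L) ^ γ := by
  rw [mem_hubSet, not_le, div_lt_iff₀ (by positivity)] at hx
  refine Real.rpow_le_rpow (by positivity) ?_ hγ
  rw [div_le_iff₀ (by positivity)]
  linarith

lemma le_card_coreSet (hL : 1 ≤ L) (hN : 4 * L ≤ N) : (N : ℝ) / (4 * L) ≤ (coreSet N L).card := by
  have _ : 0 < L := by linarith
  have hsub : Finset.Ioc ⌊(N : ℝ) / (2 * L)⌋₊ ⌊(N : ℝ) / L⌋₊ ⊆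
      (coreSet N L).image fun x : Fin N => (x : ℕ) + 1 := fun i hi => by
    have hi₀ : 0 < i := (Nat.zero_le _).trans_lt (Finset.mem_Ioc.1 hi).1
    rw [Finset.mem_Ioc, Nat.floor_lt (by positivity), Nat.le_floor_iff (by positivity)] at hi
    have hiN : i ≤ N := by exact_mod_cast hi.2.trans (div_le_self (Nat.cast_nonneg N) hL)
    obtain ⟨j, rfl⟩ := Nat.exists_eq_add_of_lt hi₀
    rw [zero_add] at hi hiN ⊢
    refine Finset.mem_image.2 ⟨⟨j, hiN⟩, mem_coreSet.2 ?_, rfl⟩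
    exact_mod_cast hi
  have hcard := (Finset.card_le_card hsub).trans Finset.card_image_le
  rw [Nat.card_Ioc, Nat.sub_le_iff_le_add] at hcard
  have hcard' : (⌊(N : ℝ) / L⌋₊ : ℝ) ≤ (coreSet N L).card + ⌊(N : ℝ) / (2 * L)⌋₊ := by
    exact_mod_cast hcard
  have hfloor := Nat.lt_floor_add_one ((N : ℝ) / L)
  have hfloor' := Nat.floor_le (show 0 ≤ (N : ℝ) / (2 * L) by positivity)
  have hone : 1 ≤ (N : ℝ) / (4 * L) := by rwa [one_le_div (by positivity)]
  have hfour : (N : ℝ) / L = 4 * (N / (4 * L)) := by field_simp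
  have htwo : (N : ℝ) / (2 * L) = 2 * (N / (4 * L)) := by
    field_simp
    norm_num
  linarith

end Layers

section Scale

variable {β γ : ℝ} {N : ℕ} {L : ℝ}

/-- Admissible scales `L`, realised by powers of `log N`: large enough to absorb logarithms, and
small enough that an edge between vertices of weights `w` and `w'`, at most one of which exceeds
`(2 * L) ^ γ`, has probability of order `β * w * w' / N`. -/
structure IsScale (β γ : ℝ) (N : ℕ) (L : ℝ) : Prop where
  half_lt : 1 / 2 < γ
  lt_one : γ < 1
  hundred_le_log : 100 ≤ Real.log N
  le_log : β ≤ Real.log N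
  two_le_mul_log : 2 ≤ β * Real.log N
  one_le : 1 ≤ L
  log_pow_le : Real.log N ^ 3 ≤ L ^ (2 * γ - 1)
  sq_le : 32 * L ^ 2 ≤ N
  edge_le_one : β * (N : ℝ) ^ (γ - 1) * (2 * L) ^ γ ≤ 1

namespace IsScale

variable (h : IsScale β γ N L)
include h

lemma exponent_nonneg : 0 ≤ γ := by linarith [h.half_lt]

lemma beta_pos : 0 < β := by nlinarith [h.two_le_mul_log, h.hundred_le_log]

lemma pos : 0 < L := zero_lt_one.trans_le h.one_le

lemma four_mul_le : 4 * L ≤ N := by nlinarith [h.sq_le, h.one_le]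

lemma natCast_pos : (0 : ℝ) < N := by linarith [h.four_mul_le, h.pos]

lemma exp_log : Real.exp (Real.log N) = N := Real.exp_log h.natCast_pos

lemma log_pow_le_self : Real.log N ^ 3 ≤ L :=
  h.log_pow_le.trans ((Real.rpow_le_rpow_of_exponent_le h.one_le (by linarith [h.lt_one])).trans_eq
    (Real.rpow_one L))

lemma million_le : 1000000 ≤ L :=
  le_trans (by norm_num)
    ((pow_le_pow_left₀ (by norm_num) h.hundred_le_log 3).trans h.log_pow_le_self)

lemma rpow_sub_one_mul_self : L ^ (γ - 1) * L = L ^ γ := by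
  rw [← Real.rpow_add_one h.pos.ne', sub_add_cancel]

lemma rpow_sub_one_pos : 0 < L ^ (γ - 1) := Real.rpow_pos_of_pos h.pos _

lemma one_le_rpow : 1 ≤ L ^ γ := Real.one_le_rpow h.one_le h.exponent_nonneg

lemma log_pow_le_snrWeight_mul {x : Fin N} (hx : x ∉ restSet N L) :
    Real.log N ^ 3 ≤ snrWeight γ x * L ^ (γ - 1) := by
  refine h.log_pow_le.trans ?_
  rw [show 2 * γ - 1 = γ + (γ - 1) by ring, Real.rpow_add h.pos]
  exact mul_le_mul_of_nonneg_right (rpow_le_snrWeight h.pos h.exponent_nonneg hx)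
    h.rpow_sub_one_pos.le

lemma notMem_restSet_of_mem_hubSet {x : Fin N} (hx : x ∈ hubSet N L) : x ∉ restSet N L :=
  fun hx' => ((mem_restSet_iff h.pos x).1 hx').1 hx

lemma notMem_restSet_of_mem_coreSet {x : Fin N} (hx : x ∈ coreSet N L) : x ∉ restSet N L :=
  fun hx' => ((mem_restSet_iff h.pos x).1 hx').2 hx

lemma le_edgeProb_of_mem_coreSet (x : Fin N) {y : Fin N} (hy : y ∈ coreSet N L) :
    snrWeight γ x * L ^ γ / (N * Real.log N) ≤ edgeProb (snrEdgeProb β γ N) x y := by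
  have hN := h.natCast_pos
  have hβ := h.beta_pos
  have hlog : 0 < Real.log N := by linarith [h.hundred_le_log]
  have hx := zero_le_one.trans (one_le_snrWeight h.exponent_nonneg x)
  have hlower : L ^ γ ≤ snrWeight γ y :=
    rpow_le_snrWeight h.pos h.exponent_nonneg (h.notMem_restSet_of_mem_coreSet hy)
  have hupper : snrWeight γ y ≤ (2 * L) ^ γ :=
    snrWeight_le_rpow h.pos h.exponent_nonneg fun hy' =>
      Finset.disjoint_left.1 disjoint_hubSet_coreSet hy' hy
  have hy₀ := h.one_le_rpow.trans hlower
  set w := β / N * snrWeight γ x * snrWeight γ y with hw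
  have hw₁ : w ≤ 1 := by
    refine le_trans ?_ h.edge_le_one
    rw [Real.rpow_sub_one hN.ne', mul_div_assoc', div_mul_eq_mul_div, hw, div_mul_eq_mul_div,
      div_mul_eq_mul_div]
    gcongr
    exact snrWeight_le_rpow_natCast h.exponent_nonneg x
  have hβlog : 1 / Real.log N ≤ β / 2 := by
    rw [div_le_div_iff₀ hlog two_pos]
    linarith [h.two_le_mul_log]
  calc snrWeight γ x * L ^ γ / (N * Real.log N)
      = 1 / Real.log N * (snrWeight γ x * L ^ γ / N) := by field_simp
    _ ≤ β / 2 * (snrWeight γ x * snrWeight γ y / N) :=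
        mul_le_mul hβlog (by gcongr) (by have := h.one_le_rpow; positivity) (by positivity)
    _ = w / 2 := by
        rw [hw]
        ring
    _ ≤ edgeProb (snrEdgeProb β γ N) x y := by
        rw [edgeProb_snrEdgeProb]
        exact half_le_one_sub_exp_neg (by positivity) hw₁

lemma le_sum_edgeProb_of_subset_coreSet (x : Fin N) {T : Finset (Fin N)} (hT : T ⊆ coreSet N L)
    (hcard : (coreSet N L).card ≤ 2 * T.card) :
    snrWeight γ x * L ^ (γ - 1) / (8 * Real.log N) ≤
      ∑ y ∈ T, edgeProb (snrEdgeProb β γ N) x y := by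
  have hN := h.natCast_pos
  have hL := h.pos
  have hlog : 0 < Real.log N := by linarith [h.hundred_le_log]
  have hx := zero_le_one.trans (one_le_snrWeight h.exponent_nonneg x)
  have hcard' : (N : ℝ) / (8 * L) ≤ T.card := by
    have hcore := le_card_coreSet h.one_le h.four_mul_le
    have hcast : ((coreSet N L).card : ℝ) ≤ 2 * T.card := by exact_mod_cast hcard
    have heq : (N : ℝ) / (8 * L) = N / (4 * L) / 2 := by
      field_simp
      norm_num
    linarith
  calc snrWeight γ x * L ^ (γ - 1) / (8 * Real.log N)
      = N / (8 * L) * (snrWeight γ x * L ^ γ / (N * Real.log N)) := by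
        rw [← h.rpow_sub_one_mul_self]
        field_simp
    _ ≤ T.card * (snrWeight γ x * L ^ γ / (N * Real.log N)) := by gcongr
    _ = T.card • (snrWeight γ x * L ^ γ / (N * Real.log N)) := (nsmul_eq_mul _ _).symm
    _ ≤ ∑ y ∈ T, edgeProb (snrEdgeProb β γ N) x y :=
        Finset.card_nsmul_le_sum T _ _ fun y hy => h.le_edgeProb_of_mem_coreSet x (hT hy)

lemma exp_degree_le (x : Fin N) :
    Real.exp (2 * ∑ y ∈ Finset.univ.erase x, edgeProb (snrEdgeProb β γ N) x y -
      L * snrWeight γ x) ≤ Real.exp (-(2 * Real.log N)) := by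
  have hx := one_le_snrWeight h.exponent_nonneg x
  have hβ := h.beta_pos
  have hlog := h.hundred_le_log
  have herase : ∑ y ∈ Finset.univ.erase x, edgeProb (snrEdgeProb β γ N) x y ≤
      ∑ y, edgeProb (snrEdgeProb β γ N) x y :=
    Finset.sum_le_sum_of_subset_of_nonneg (Finset.erase_subset _ _) fun y _ _ =>
      (isEdgeProb_snrEdgeProb hβ.le).edgeProb_nonneg x y
  have hsum : ∑ y, edgeProb (snrEdgeProb β γ N) x y ≤
      Real.log N * snrWeight γ x * (2 * Real.log N) := by
    refine (sum_edgeProb_snrEdgeProb_le hβ.le h.exponent_nonneg h.lt_one.le x).trans ?_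
    have := h.le_log
    gcongr
    linarith
  have hlogx : 2 * Real.log N ≤ 2 * Real.log N * snrWeight γ x :=
    le_mul_of_one_le_right (by linarith) hx
  have hscale : (4 * Real.log N ^ 2 + 2 * Real.log N) * snrWeight γ x ≤ L * snrWeight γ x := by
    refine mul_le_mul_of_nonneg_right (le_trans ?_ h.log_pow_le_self) (by linarith)
    nlinarith [mul_nonneg (sq_nonneg (Real.log N)) (sub_nonneg.2 hlog)]
  rw [Real.exp_le_exp]
  linarith

lemma exp_hub_le {x : Fin N} (hx : x ∈ hubSet N L) :
    Real.exp (snrWeight γ x * L ^ (γ - 1) / (32 * Real.log N) -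
      1 / 2 * ∑ a ∈ coreSet N L, edgeProb (snrEdgeProb β γ N) x a) ≤
        Real.exp (-(2 * Real.log N)) := by
  have hlog := h.hundred_le_log
  have hsum := h.le_sum_edgeProb_of_subset_coreSet x subset_rfl (by omega)
  have hweight := h.log_pow_le_snrWeight_mul (h.notMem_restSet_of_mem_hubSet hx)
  have hs : 2 * Real.log N ≤ snrWeight γ x * L ^ (γ - 1) / (32 * Real.log N) := by
    rw [le_div_iff₀ (by positivity)]
    nlinarith [sq_nonneg (Real.log N)]
  have hquarter : snrWeight γ x * L ^ (γ - 1) / (8 * Real.log N) =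
      4 * (snrWeight γ x * L ^ (γ - 1) / (32 * Real.log N)) := by
    field_simp
    ring
  rw [Real.exp_le_exp]
  linarith

lemma exp_core_le {S : Finset (Fin N)} (hS : S ⊆ coreSet N L)
    (hcard : 2 * S.card ≤ (coreSet N L).card) :
    Real.exp (S.card - 1 / 2 * ∑ x ∈ S, ∑ y ∈ coreSet N L \ S,
      edgeProb (snrEdgeProb β γ N) x y) ≤ Real.exp (-(2 * Real.log N)) ^ S.card := by
  have hlog := h.hundred_le_log
  have hcompl := Finset.card_sdiff_add_card_eq_card hS
  have hvertex : ∀ x ∈ S, Real.log N ^ 2 / 8 ≤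
      ∑ y ∈ coreSet N L \ S, edgeProb (snrEdgeProb β γ N) x y := fun x hx => by
    refine le_trans ?_ (h.le_sum_edgeProb_of_subset_coreSet x Finset.sdiff_subset (by omega))
    rw [div_le_div_iff₀ (by norm_num) (by positivity)]
    nlinarith [h.log_pow_le_snrWeight_mul (h.notMem_restSet_of_mem_coreSet (hS hx))]
  have hsum := Finset.card_nsmul_le_sum S _ _ hvertex
  rw [nsmul_eq_mul] at hsum
  have hrate : 1 - Real.log N ^ 2 / 16 ≤ -(2 * Real.log N) := by nlinarith
  rw [← Real.exp_nat_mul, Real.exp_le_exp]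
  nlinarith [mul_le_mul_of_nonneg_left hrate (Nat.cast_nonneg (α := ℝ) S.card)]

lemma prod_core_le (x : Fin N) :
    ∏ y ∈ coreSet N L, (1 - edgeProb (snrEdgeProb β γ N) x y) ≤
      Real.exp (-(L ^ (γ - 1) / (8 * Real.log N))) := by
  have hp := isEdgeProb_snrEdgeProb (γ := γ) (N := N) h.beta_pos.le
  have hlog := h.hundred_le_log
  calc ∏ y ∈ coreSet N L, (1 - edgeProb (snrEdgeProb β γ N) x y)
      ≤ ∏ y ∈ coreSet N L, Real.exp (-edgeProb (snrEdgeProb β γ N) x y) :=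
        Finset.prod_le_prod (fun y _ => sub_nonneg.2 (hp.edgeProb_le_one x y)) fun y _ =>
          Real.one_sub_le_exp_neg _
    _ = Real.exp (-∑ y ∈ coreSet N L, edgeProb (snrEdgeProb β γ N) x y) := by
        rw [← Real.exp_sum, Finset.sum_neg_distrib]
    _ ≤ Real.exp (-(L ^ (γ - 1) / (8 * Real.log N))) := by
        refine Real.exp_le_exp.2 (neg_le_neg (le_trans ?_
          (h.le_sum_edgeProb_of_subset_coreSet x subset_rfl (by omega))))
        gcongr
        exact le_mul_of_one_le_left h.rpow_sub_one_pos.le (one_le_snrWeight h.exponent_nonneg x)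

lemma prod_prod_core_le {S : Finset (Fin N)} (hS : ⌊L ^ 2⌋₊ ≤ S.card) :
    ∏ x ∈ S, ∏ y ∈ coreSet N L, (1 - edgeProb (snrEdgeProb β γ N) x y) ≤
      Real.exp (-(2 * Real.log N)) := by
  have hp := isEdgeProb_snrEdgeProb (γ := γ) (N := N) h.beta_pos.le
  have hlog := h.hundred_le_log
  have hcard : 16 * Real.log N ^ 2 * L ≤ S.card := by
    have hfloor := Nat.lt_floor_add_one (L ^ 2)
    have hS' : (⌊L ^ 2⌋₊ : ℝ) ≤ S.card := by exact_mod_cast hS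
    have hsq : 100 * Real.log N ^ 2 ≤ L := by
      nlinarith [h.log_pow_le_self, sq_nonneg (Real.log N)]
    nlinarith [h.million_le, mul_le_mul_of_nonneg_right hsq h.pos.le]
  have hexponent : 2 * Real.log N ≤ S.card * (L ^ (γ - 1) / (8 * Real.log N)) := by
    rw [mul_div_assoc', le_div_iff₀ (by positivity)]
    calc 2 * Real.log N * (8 * Real.log N)
        ≤ 16 * Real.log N ^ 2 * L ^ γ := by nlinarith [h.one_le_rpow, sq_nonneg (Real.log N)]
      _ = 16 * Real.log N ^ 2 * L * L ^ (γ - 1) := by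
          rw [← h.rpow_sub_one_mul_self]
          ring
      _ ≤ S.card * L ^ (γ - 1) := mul_le_mul_of_nonneg_right hcard h.rpow_sub_one_pos.le
  calc _ ≤ ∏ _x ∈ S, Real.exp (-(L ^ (γ - 1) / (8 * Real.log N))) :=
        Finset.prod_le_prod (fun x _ => Finset.prod_nonneg fun y _ =>
          sub_nonneg.2 (hp.edgeProb_le_one x y)) fun x _ => h.prod_core_le x
    _ = Real.exp (S.card * -(L ^ (γ - 1) / (8 * Real.log N))) := by
        rw [Finset.prod_const, Real.exp_nat_mul]
    _ ≤ _ := by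
        rw [Real.exp_le_exp]
        linarith

end IsScale

lemma one_add_pow_sub_one_le {n : ℕ} {ε δ : ℝ} (hε : 0 ≤ ε) (hδ : n * ε ≤ δ) (hδ₁ : δ ≤ 1) :
    (1 + ε) ^ n - 1 ≤ 2 * δ := by
  have hδ₀ : 0 ≤ δ := le_trans (by positivity) hδ
  have hexp : (1 + ε) ^ n ≤ Real.exp δ := calc
    (1 + ε) ^ n ≤ Real.exp ε ^ n := by
        gcongr
        linarith [Real.add_one_le_exp ε]
    _ = Real.exp (n * ε) := (Real.exp_nat_mul ε n).symm
    _ ≤ Real.exp δ := Real.exp_le_exp.2 hδ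
  have habs := Real.abs_exp_sub_one_le (x := δ) (by rwa [abs_of_nonneg hδ₀])
  rw [abs_of_nonneg hδ₀] at habs
  linarith [le_abs_self (Real.exp δ - 1)]

/-- The typical properties of the Norros–Reittu graph: vertices have degree at most `L` times their
weight, the core expands, hubs have many edges to the core, and large pieces are attached to it. -/
def IsTypicalNR (γ L : ℝ) (G : SimpleGraph (Fin N)) : Prop :=
  IsTypical (hubSet N L) (coreSet N L) (restSet N L) (fun x => L * snrWeight γ x)
    (fun x => snrWeight γ x * L ^ (γ - 1) / (32 * Real.log N)) ⌊L ^ 2⌋₊ G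

theorem IsScale.le_snrProb_isTypicalNR (h : IsScale β γ N L) :
    1 - 5 / (N : ℝ) ≤ snrProb β γ N (IsTypicalNR γ L) := by
  have hN := h.natCast_pos
  set ε := Real.exp (-(2 * Real.log N)) with hε
  have hε₀ : 0 ≤ ε := (Real.exp_pos _).le
  have hNε : N * ε = 1 / N := by
    rw [hε, two_mul, neg_add, Real.exp_add, Real.exp_neg, h.exp_log]
    field_simp
  have hcard : ((coreSet N L).card : ℝ) ≤ N := by
    exact_mod_cast (Finset.card_le_univ _).trans_eq (Fintype.card_fin N)
  have hunion : (1 + ε) ^ (coreSet N L).card - 1 ≤ 2 * (1 / N) :=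
    one_add_pow_sub_one_le hε₀ (by rw [← hNε]; gcongr)
      ((div_le_one hN).2 (by linarith [h.four_mul_le, h.one_le]))
  have hk : 1 ≤ ⌊L ^ 2⌋₊ := (Nat.one_le_floor_iff _).2 (one_le_pow₀ h.one_le)
  have htypical := le_graphProb_isTypical (isEdgeProb_snrEdgeProb (γ := γ) h.beta_pos.le) hε₀
    disjoint_hubSet_coreSet disjoint_restSet_coreSet hk h.exp_degree_le
    (fun x hx => h.exp_hub_le hx) (fun S hS hcard => h.exp_core_le hS hcard)
    fun S _ hS => h.prod_prod_core_le hS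
  rw [hNε] at htypical
  refine le_trans ?_ htypical
  have hfive : (5 : ℝ) / N = 3 * (1 / N) + 2 * (1 / N) := by ring
  linarith

end Scale

section Rates

variable {V : Type*} [Fintype V] {G : SimpleGraph V} {θ : ℝ}

lemma one_le_rpow_abs_mul_rpow {a K : ℝ} (ha : 1 ≤ a) (haK : a ≤ K) (s : ℝ) :
    1 ≤ K ^ |s| * a ^ s := by
  have ha₀ : 0 < a := zero_lt_one.trans_le ha
  calc (1 : ℝ) = a ^ (-s) * a ^ s := by rw [← Real.rpow_add ha₀, neg_add_cancel, Real.rpow_zero]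
    _ ≤ a ^ |s| * a ^ s := by
        gcongr
        exact neg_le_abs s
    _ ≤ K ^ |s| * a ^ s := by gcongr

lemma adjMatrix_le_mul_voterConductance {x : V} {K : ℝ} (hK : 0 ≤ K)
    (hx : (G.degree x : ℝ) ≤ K) (y : V) :
    G.adjMatrix ℝ x y ≤ 2 * K ^ |θ - 1| * voterConductance G θ x y := by
  by_cases hxy : G.Adj x y
  · have hd : (1 : ℝ) ≤ G.degree x := by
      exact_mod_cast (G.degree_pos_iff_exists_adj x).2 ⟨y, hxy⟩
    have hrate : 1 ≤ K ^ |θ - 1| * vertexRate G θ x := by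
      rw [vertexRate, ← div_eq_mul_inv, ← Real.rpow_sub_one (by positivity)]
      exact one_le_rpow_abs_mul_rpow hd hx (θ - 1)
    rw [adjMatrix_of_adj hxy, voterConductance_of_adj G θ hxy]
    nlinarith [mul_nonneg (Real.rpow_nonneg hK |θ - 1|) (vertexRate_nonneg G θ y)]
  · rw [SimpleGraph.adjMatrix_apply, if_neg hxy, voterConductance_of_not_adj G θ hxy, mul_zero]

lemma degree_mul_vertexRate_le {x : V} {C w m : ℝ} (hC : 1 ≤ C) (hw : 0 ≤ w)
    (hx : (G.degree x : ℝ) ≤ C * w) (hm : 1 ≤ m) (hwm : w ^ θ ≤ m) :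
    G.degree x * vertexRate G θ x ≤ C ^ |θ| * m := by
  have hCθ : 1 ≤ C ^ |θ| := Real.one_le_rpow hC (abs_nonneg θ)
  rcases (G.degree x).eq_zero_or_pos with h₀ | hpos
  · rw [h₀, Nat.cast_zero, zero_mul]
    positivity
  have hd : (1 : ℝ) ≤ G.degree x := by exact_mod_cast hpos
  have hd₀ : (G.degree x : ℝ) ≠ 0 := (zero_lt_one.trans_le hd).ne'
  rw [vertexRate, mul_left_comm, mul_inv_cancel₀ hd₀, mul_one]
  rcases le_total 0 θ with hθ | hθ
  · calc (G.degree x : ℝ) ^ θ ≤ (C * w) ^ θ := by gcongr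
      _ = C ^ |θ| * w ^ θ := by rw [Real.mul_rpow (by positivity) hw, abs_of_nonneg hθ]
      _ ≤ C ^ |θ| * m := by gcongr
  · exact (Real.rpow_le_one_of_one_le_of_nonpos hd hθ).trans (one_le_mul_of_one_le_of_one_le hCθ hm)

end Rates

section TypicalGraph

variable {β γ θ u : ℝ} {N : ℕ} {L : ℝ} {G : SimpleGraph (Fin N)}

namespace IsScale

variable (h : IsScale β γ N L) (hG : IsTypicalNR γ L G)
include h

lemma mul_log_le : 32 * Real.log N ≤ L := by
  nlinarith [h.log_pow_le_self, h.hundred_le_log, sq_nonneg (Real.log N)]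

lemma one_le_floor_sq : 1 ≤ ⌊L ^ 2⌋₊ := (Nat.one_le_floor_iff _).2 (one_le_pow₀ h.one_le)

lemma core_nonempty : (coreSet N L).Nonempty := by
  have hcard := le_card_coreSet h.one_le h.four_mul_le
  have hpos : 0 < (N : ℝ) / (4 * L) := div_pos h.natCast_pos (by linarith [h.pos])
  exact Finset.card_pos.1 (by exact_mod_cast hpos.trans_le hcard)

lemma one_le_hub_bound {x : Fin N} (hx : x ∉ restSet N L) :
    1 ≤ snrWeight γ x * L ^ (γ - 1) / (32 * Real.log N) := by
  have hlog := h.hundred_le_log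
  rw [one_le_div (by positivity)]
  refine le_trans ?_ (h.log_pow_le_snrWeight_mul hx)
  nlinarith [mul_nonneg (sub_nonneg.2 hlog) (sq_nonneg (Real.log N))]

include hG

lemma degree_le_of_notMem_hubSet {x : Fin N} (hx : x ∉ hubSet N L) :
    (G.degree x : ℝ) ≤ 2 * L ^ 2 := by
  have hpow : (2 * L) ^ γ ≤ 2 * L :=
    Real.rpow_le_self_of_one_le (by linarith [h.one_le]) h.lt_one.le
  calc (G.degree x : ℝ) ≤ L * snrWeight γ x := hG.degree_le x
    _ ≤ L * (2 * L) := mul_le_mul_of_nonneg_left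
        ((snrWeight_le_rpow h.pos h.exponent_nonneg hx).trans hpow) h.pos.le
    _ = 2 * L ^ 2 := by ring

lemma hub_degree_le {x : Fin N} (hx : x ∈ hubSet N L) :
    (G.degree x : ℝ) ≤ L ^ 7 * ∑ a ∈ coreSet N L, G.adjMatrix ℝ x a := by
  have hlog := h.hundred_le_log
  have hL := h.pos
  have hweight := zero_le_one.trans (one_le_snrWeight h.exponent_nonneg x)
  calc (G.degree x : ℝ) ≤ L * snrWeight γ x := hG.degree_le x
    _ ≤ L * snrWeight γ x * L ^ γ :=
        le_mul_of_one_le_right (mul_nonneg hL.le hweight) h.one_le_rpow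
    _ = L ^ 2 * (32 * Real.log N) * (snrWeight γ x * L ^ (γ - 1) / (32 * Real.log N)) := by
        rw [← h.rpow_sub_one_mul_self]
        field_simp
    _ ≤ L ^ 7 * ∑ a ∈ coreSet N L, G.adjMatrix ℝ x a := by
        refine mul_le_mul ?_ (hG.le_sum_core x hx) ?_ (by positivity)
        · calc L ^ 2 * (32 * Real.log N) ≤ L ^ 2 * L := by gcongr; exact h.mul_log_le
            _ = L ^ 3 := by ring
            _ ≤ L ^ 7 := pow_le_pow_right₀ h.one_le (by norm_num)
        · exact zero_le_one.trans (h.one_le_hub_bound (h.notMem_restSet_of_mem_hubSet hx))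

lemma card_filter_mem_piece_le (y : Fin N) :
    (((restSet N L).filter (y ∈ piece G (restSet N L) ⌊L ^ 2⌋₊ ·)).card : ℝ) ≤ L ^ 7 := by
  have hL := h.million_le
  have hdeg : ∀ x ∈ restSet N L, ((restSet N L).filter (G.Adj x)).card ≤ ⌊2 * L ^ 2⌋₊ :=
    fun x hx => by
      refine le_trans (Finset.card_le_card fun z hz => ?_) (Nat.le_floor
        (h.degree_le_of_notMem_hubSet hG ((mem_restSet_iff h.pos x).1 hx).1))
      exact (G.mem_neighborFinset x z).2 (Finset.mem_filter.1 hz).2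
  have hcard : ((restSet N L).filter (y ∈ piece G (restSet N L) ⌊L ^ 2⌋₊ ·)).card ≤
      2 * ⌊L ^ 2⌋₊ + ⌊L ^ 2⌋₊ * (⌊2 * L ^ 2⌋₊ * ⌊L ^ 2⌋₊) := by
    convert (isPieceSystem_piece h.one_le_floor_sq).card_filter_mem_le _ hdeg y
  have hk : (⌊L ^ 2⌋₊ : ℝ) ≤ L ^ 2 := Nat.floor_le (sq_nonneg L)
  have hD : (⌊2 * L ^ 2⌋₊ : ℝ) ≤ 2 * L ^ 2 := Nat.floor_le (by positivity)
  calc _ ≤ 2 * (⌊L ^ 2⌋₊ : ℝ) + ⌊L ^ 2⌋₊ * (⌊2 * L ^ 2⌋₊ * ⌊L ^ 2⌋₊) := by exact_mod_cast hcard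
    _ ≤ 2 * L ^ 2 + L ^ 2 * (2 * L ^ 2 * L ^ 2) := by gcongr
    _ ≤ 2 * L ^ 6 + 2 * L ^ 6 := by
        have hpow : L ^ 2 ≤ L ^ 6 := pow_le_pow_right₀ h.one_le (by norm_num)
        linarith
    _ ≤ L ^ 7 := by nlinarith [pow_pos h.pos 6]

theorem coreDecomposition (θ : ℝ) :
    CoreDecomposition G (voterConductance G θ) (hubSet N L) (coreSet N L) (restSet N L)
      (piece G (restSet N L) ⌊L ^ 2⌋₊) (L ^ 7) (2 * (L ^ 7) ^ |θ - 1|) := by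
  have hL := h.million_le
  have hP := isPieceSystem_piece (G := G) (B := restSet N L) h.one_le_floor_sq
  have hK : 1 ≤ L ^ 7 := one_le_pow₀ h.one_le
  have hpow : 2 * L ^ 2 ≤ L ^ 7 := by
    calc 2 * L ^ 2 ≤ L * L ^ 2 := by gcongr; linarith
      _ = L ^ 3 := by ring
      _ ≤ L ^ 7 := pow_le_pow_right₀ h.one_le (by norm_num)
  have hdegree : ∀ x ∉ hubSet N L, (G.degree x : ℝ) ≤ L ^ 7 := fun x hx =>
    (h.degree_le_of_notMem_hubSet hG hx).trans hpow
  refine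
    { one_le_K := hK
      one_le_W := by linarith [Real.one_le_rpow hK (abs_nonneg (θ - 1))]
      core_nonempty := h.core_nonempty
      disjoint := disjoint_hubSet_coreSet
      mem_rest_iff := mem_restSet_iff h.pos
      degree_le := hdegree
      hub_degree_le := fun x hx => h.hub_degree_le hG hx
      one_le_hub := fun x hx =>
        (h.one_le_hub_bound (h.notMem_restSet_of_mem_hubSet hx)).trans (hG.le_sum_core x hx)
      expands := hG.expands
      conductance_nonneg := voterConductance_nonneg G θ
      adjMatrix_le := fun x hx y =>
        adjMatrix_le_mul_voterConductance (zero_le_one.trans hK) (hdegree x hx) y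
      self_mem := hP.self_mem
      subset := hP.subset
      connectedOn := hP.connectedOn
      card_le := fun x hx => ?_
      card_filter_mem_le := fun y _ => by convert h.card_filter_mem_piece_le hG y
      attached_or_closed := fun x hx => ?_ }
  · calc _ ≤ 2 * (⌊L ^ 2⌋₊ : ℝ) := by exact_mod_cast hP.card_le x hx
      _ ≤ 2 * L ^ 2 := by gcongr; exact Nat.floor_le (sq_nonneg L)
      _ ≤ L ^ 7 := hpow
  · rcases hP.le_card_or_closed x hx with hlarge | hclosed
    · obtain ⟨b, hb, a, ha, hba⟩ := hG.attached x hx hlarge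
      exact Or.inl ⟨b, hb, a, h.notMem_restSet_of_mem_coreSet ha, hba⟩
    · refine or_iff_not_imp_left.2 fun hfree b hb y hby => hclosed b hb y ?_ hby
      by_contra hy
      exact hfree ⟨b, hb, y, hy, hby⟩

end IsScale

end TypicalGraph

section ConsensusBounds

variable {β γ θ u : ℝ} {N : ℕ} {L : ℝ} {G : SimpleGraph (Fin N)}

namespace IsScale

variable (h : IsScale β γ N L) (hG : IsTypicalNR γ L G)
include h

lemma one_le_natCast : 1 ≤ N := by exact_mod_cast h.natCast_pos

lemma poincare_mul_log_le (s : ℝ) :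
    158 * (214 * (L ^ 7) ^ 4 * (2 * (L ^ 7) ^ s)) * (2 * Real.log N + 1) ≤ L ^ (7 * s + 30) := by
  have hL := h.pos
  have hpow : (L ^ 7) ^ s = L ^ (7 * s) := by
    rw [← Real.rpow_natCast, ← Real.rpow_mul hL.le]
    norm_num
  have hconst : 67624 * (2 * Real.log N + 1) ≤ L ^ 2 := by
    nlinarith [h.mul_log_le, h.million_le, h.hundred_le_log]
  calc _ = L ^ (7 * s) * L ^ 28 * (67624 * (2 * Real.log N + 1)) := by
        rw [hpow]
        ring
    _ ≤ L ^ (7 * s) * L ^ 28 * L ^ 2 := by gcongr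
    _ = L ^ (7 * s + 30) := by
        rw [mul_assoc, ← pow_add, Real.rpow_add hL]
        norm_num

include hG

theorem pairPoincare (θ : ℝ) :
    PairPoincare G (voterConductance G θ)
      (4 * N * (214 * (L ^ 7) ^ 4 * (2 * (L ^ 7) ^ |θ - 1|))) := by
  have _ : Nonempty (Fin N) := ⟨⟨0, h.one_le_natCast⟩⟩
  have hP := (h.coreDecomposition hG θ).giantPoincare.pairPoincare
  rwa [Fintype.card_fin] at hP

theorem expectedConsensusTime_le (hu : u ∈ Set.Ioo (0 : ℝ) 1) (θ : ℝ) :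
    expectedConsensusTime G θ u ≤ N * L ^ (7 * |θ - 1| + 30) := by
  have hL := h.pos
  have hN := h.natCast_pos
  have hlog := h.hundred_le_log
  set Λ := 214 * (L ^ 7) ^ 4 * (2 * (L ^ 7) ^ |θ - 1|)
  have _ : 0 < Λ := by positivity
  calc expectedConsensusTime G θ u ≤ 4 * N * Λ * (2 * Real.log N + 1) :=
        _root_.expectedConsensusTime_le hu (by positivity) h.one_le_natCast (h.pairPoincare hG θ)
    _ = N * (4 * Λ * (2 * Real.log N + 1)) := by ring
    _ ≤ N * (158 * Λ * (2 * Real.log N + 1)) := by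
        gcongr
        norm_num
    _ ≤ N * L ^ (7 * |θ - 1| + 30) := by
        gcongr
        exact h.poincare_mul_log_le |θ - 1|

omit hG in
lemma zero_mem_hubSet : (⟨0, h.one_le_natCast⟩ : Fin N) ∈ hubSet N L := by
  rw [mem_hubSet, le_div_iff₀ (by linarith [h.pos])]
  push_cast
  linarith [h.four_mul_le, h.pos]

lemma le_degree_zero : (N : ℝ) ^ γ / L ^ 2 ≤ G.degree ⟨0, h.one_le_natCast⟩ := by
  have hL := h.pos
  have hlog := h.hundred_le_log
  have hweight : snrWeight γ (⟨0, h.one_le_natCast⟩ : Fin N) = (N : ℝ) ^ γ := by simp [snrWeight]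
  have hcore := hG.le_sum_core _ h.zero_mem_hubSet
  rw [hweight] at hcore
  refine le_trans ?_ (hcore.trans (sum_adjMatrix_le_degree G _ _))
  calc (N : ℝ) ^ γ / L ^ 2 ≤ (N : ℝ) ^ γ * L ^ γ / L ^ 2 := by
        gcongr
        exact le_mul_of_one_le_right (by positivity) h.one_le_rpow
    _ = (N : ℝ) ^ γ * L ^ (γ - 1) / L := by
        rw [← h.rpow_sub_one_mul_self]
        field_simp
    _ ≤ (N : ℝ) ^ γ * L ^ (γ - 1) / (32 * Real.log N) := by
        gcongr
        exact h.mul_log_le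

-- The vertex of largest weight alone meets everything else fast enough to beat the bound `N`.
theorem expectedConsensusTime_le_of_le_two (hu : u ∈ Set.Ioo (0 : ℝ) 1) (hθ₀ : 0 ≤ θ)
    (hθ₂ : θ ≤ 2) :
    expectedConsensusTime G θ u ≤ (N : ℝ) ^ (2 - γ * θ) * L ^ (7 * |θ - 1| + 30 + 2 * θ) := by
  have hL := h.pos
  have hN := h.natCast_pos
  have hlog := h.hundred_le_log
  set v : Fin N := ⟨0, h.one_le_natCast⟩
  set Λ := 214 * (L ^ 7) ^ 4 * (2 * (L ^ 7) ^ |θ - 1|)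
  have _ : 0 < Λ := by positivity
  have hdeg : (N : ℝ) ^ γ / L ^ 2 ≤ G.degree v := h.le_degree_zero hG
  have hdeg₀ : (0 : ℝ) < G.degree v := lt_of_lt_of_le (by positivity) hdeg
  have hdegθ : (N : ℝ) ^ (γ * θ) / L ^ (2 * θ) ≤ (G.degree v : ℝ) ^ θ := by
    rw [Real.rpow_mul hN.le, Real.rpow_mul hL.le, Real.rpow_two,
      ← Real.div_rpow (by positivity) (by positivity)]
    exact Real.rpow_le_rpow (by positivity) hdeg hθ₀
  have hv : v ∈ giantSet G (restSet N L) (piece G (restSet N L) ⌊L ^ 2⌋₊) :=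
    mem_giantSet_of_notMem (h.notMem_restSet_of_mem_hubSet h.zero_mem_hubSet)
  have hP := (h.coreDecomposition hG θ).giantPoincare.pairPoincare_of_degree hθ₂ hv
    (by exact_mod_cast hdeg₀)
  rw [Fintype.card_fin] at hP
  calc expectedConsensusTime G θ u
      ≤ 158 * Λ * (N : ℝ) ^ 2 / (G.degree v : ℝ) ^ θ * (2 * Real.log N + 1) :=
        _root_.expectedConsensusTime_le hu (by positivity) h.one_le_natCast hP
    _ = (N : ℝ) ^ 2 / (G.degree v : ℝ) ^ θ * (158 * Λ * (2 * Real.log N + 1)) := by ring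
    _ ≤ (N : ℝ) ^ 2 / ((N : ℝ) ^ (γ * θ) / L ^ (2 * θ)) * L ^ (7 * |θ - 1| + 30) := by
        gcongr
        exact h.poincare_mul_log_le |θ - 1|
    _ = (N : ℝ) ^ (2 - γ * θ) * L ^ (7 * |θ - 1| + 30 + 2 * θ) := by
        rw [Real.rpow_sub hN, Real.rpow_two, Real.rpow_add hL (7 * |θ - 1| + 30)]
        field_simp

lemma sum_degree_mul_vertexRate_le {M : ℝ} (hM : N ≤ M)
    (hw : ∀ x : Fin N, snrWeight γ x ^ θ ≤ M / ((x : ℕ) + 1 : ℝ)) :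
    ∑ x, (G.degree x : ℝ) * vertexRate G θ x ≤ L ^ (|θ| + 1) * M := by
  have hL := h.pos
  have hM₀ : 0 ≤ M := h.natCast_pos.le.trans hM
  calc ∑ x, (G.degree x : ℝ) * vertexRate G θ x
      ≤ ∑ x : Fin N, L ^ |θ| * M * ((x : ℕ) + 1 : ℝ)⁻¹ := by
        refine Finset.sum_le_sum fun x _ => ?_
        rw [mul_assoc, ← div_eq_mul_inv]
        refine degree_mul_vertexRate_le h.one_le
          (zero_le_one.trans (one_le_snrWeight h.exponent_nonneg x)) (hG.degree_le x) ?_ (hw x)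
        exact (one_le_div_succ x).trans (by gcongr)
    _ ≤ L ^ |θ| * M * (1 + Real.log N) := by
        rw [← Finset.mul_sum]
        gcongr
        exact sum_inv_succ_le N
    _ ≤ L ^ |θ| * M * L := by
        gcongr
        linarith [h.mul_log_le, h.hundred_le_log]
    _ = L ^ (|θ| + 1) * M := by
        rw [Real.rpow_add_one hL.ne']
        ring

lemma le_reachablePairCount : (N : ℝ) ^ 2 / (16 * L ^ 2) ≤ reachablePairCount G := by
  have hL := h.pos
  have hN := h.natCast_pos
  calc (N : ℝ) ^ 2 / (16 * L ^ 2) = (N / (4 * L)) ^ 2 := by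
        rw [div_pow]
        ring
    _ ≤ ((coreSet N L).card : ℝ) ^ 2 := by
        gcongr
        exact le_card_coreSet h.one_le h.four_mul_le
    _ ≤ reachablePairCount G := by exact_mod_cast hG.expands.sq_card_le_reachablePairCount

theorem le_expectedConsensusTime (hu : u ∈ Set.Ioo (0 : ℝ) 1) (huL : 1 ≤ (u * (1 - u)) ^ 2 * L)
    {M : ℝ} (hM : N ≤ M) (hw : ∀ x : Fin N, snrWeight γ x ^ θ ≤ M / ((x : ℕ) + 1 : ℝ)) :
    (N : ℝ) ^ 2 / M * L ^ (-(|θ| + 5)) ≤ expectedConsensusTime G θ u := by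
  have hL := h.pos
  have hN := h.natCast_pos
  have hM₀ : 0 < M := hN.trans_le hM
  have hR := h.le_reachablePairCount hG
  have hR₂ : 2 * (N : ℝ) ≤ reachablePairCount G := by
    refine le_trans ?_ hR
    rw [le_div_iff₀ (by positivity)]
    nlinarith [mul_le_mul_of_nonneg_left h.sq_le hN.le]
  have hint := integrableOn_nonConsensusProb hu (by positivity) (h.pairPoincare hG θ)
  refine le_trans ?_ (_root_.le_expectedConsensusTime hu hint (S := L ^ (|θ| + 1) * M)
    (by positivity) (h.sum_degree_mul_vertexRate_le hG hM hw) h.one_le_natCast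
    (by exact_mod_cast hR₂))
  have hconst : 1 ≤ (u * (1 - u)) ^ 2 * L * (L / 128) :=
    one_le_mul_of_one_le_of_one_le huL (by linarith [h.million_le])
  calc (N : ℝ) ^ 2 / M * L ^ (-(|θ| + 5))
      ≤ (N : ℝ) ^ 2 / M * L ^ (-(|θ| + 5)) * ((u * (1 - u)) ^ 2 * L * (L / 128)) :=
        le_mul_of_one_le_right (by positivity) hconst
    _ = (u * (1 - u)) ^ 2 * (N ^ 2 / (16 * L ^ 2)) / (8 * (L ^ (|θ| + 1) * M)) := by
        rw [Real.rpow_neg hL.le, show |θ| + 5 = |θ| + 1 + (4 : ℕ) by push_cast; ring,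
          Real.rpow_add hL, Real.rpow_natCast]
        field_simp
        ring
    _ ≤ _ := by gcongr

end IsScale

end ConsensusBounds

section Asymptotics

variable {β γ : ℝ}

/-- `F = Θ_P^{log N}(g)` for a functional `F` of the Norros–Reittu graph: with probability tending
to `1`, the quantities `F G_N` and `g N` agree up to a power of `log N`. -/
def IsThetaLogInProb (β γ : ℝ) (F : ∀ N : ℕ, SimpleGraph (Fin N) → ℝ) (g : ℕ → ℝ) : Prop :=
  ∃ C > (0 : ℝ), Tendsto (fun N : ℕ => snrProb β γ N fun G =>
    g N * Real.log N ^ (-C) ≤ F N G ∧ F N G ≤ g N * Real.log N ^ C) atTop (nhds 1)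

/-- The exponent `κ` for which `(log N) ^ κ` is the scale that separates hubs from small
vertices. -/
def scaleExponent (γ : ℝ) : ℝ := 3 / (2 * γ - 1)

lemma scaleExponent_pos (hγ : 1 / 2 < γ) : 0 < scaleExponent γ :=
  div_pos three_pos (by linarith)

lemma tendsto_log_natCast_atTop : Tendsto (fun N : ℕ => Real.log N) atTop atTop :=
  Real.tendsto_log_atTop.comp tendsto_natCast_atTop_atTop

lemma eventually_mul_log_rpow_le (a c : ℝ) {b : ℝ} (hb : 0 < b) :
    ∀ᶠ N : ℕ in atTop, c * Real.log N ^ a ≤ (N : ℝ) ^ b := by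
  have hlittle := (isLittleO_log_rpow_rpow_atTop a hb).const_mul_left c
  filter_upwards [tendsto_natCast_atTop_atTop.eventually (hlittle.bound one_pos)] with N hN
  rw [one_mul, Real.norm_of_nonneg (by positivity : 0 ≤ (N : ℝ) ^ b)] at hN
  exact (Real.le_norm_self _).trans hN

theorem eventually_isScale (hγ : γ ∈ Set.Ioo (1 / 2 : ℝ) 1) (hβ : 0 < β) :
    ∀ᶠ N : ℕ in atTop, IsScale β γ N (Real.log N ^ scaleExponent γ) := by
  have hκ := scaleExponent_pos hγ.1
  have hlog := tendsto_log_natCast_atTop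
  filter_upwards [eventually_mul_log_rpow_le (scaleExponent γ * 2) 32 one_pos,
    eventually_mul_log_rpow_le (scaleExponent γ * γ) (β * 2 ^ γ) (sub_pos.2 hγ.2),
    hlog.eventually_ge_atTop 100, hlog.eventually_ge_atTop β, hlog.eventually_ge_atTop (2 / β),
    eventually_gt_atTop 0] with N hsq hedge h100 hβlog htwo hN
  have hN' : (0 : ℝ) < N := by exact_mod_cast hN
  have hlog₀ : 0 < Real.log N := by linarith
  refine ⟨hγ.1, hγ.2, h100, hβlog, (div_le_iff₀' hβ).1 htwo,
    Real.one_le_rpow (by linarith) hκ.le, ?_, ?_, ?_⟩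
  · have hγ' : 2 * γ - 1 ≠ 0 := by linarith [hγ.1]
    rw [← Real.rpow_mul hlog₀.le, scaleExponent, div_mul_cancel₀ _ hγ']
    exact_mod_cast le_rfl
  · rwa [Real.rpow_one, Real.rpow_mul hlog₀.le, Real.rpow_two] at hsq
  · calc β * (N : ℝ) ^ (γ - 1) * (2 * Real.log N ^ scaleExponent γ) ^ γ
        = (N : ℝ) ^ (γ - 1) * (β * 2 ^ γ * Real.log N ^ (scaleExponent γ * γ)) := by
          rw [Real.mul_rpow two_pos.le (by positivity), ← Real.rpow_mul hlog₀.le]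
          ring
      _ ≤ (N : ℝ) ^ (γ - 1) * (N : ℝ) ^ (1 - γ) := by gcongr
      _ = 1 := by
          rw [← Real.rpow_add hN', sub_add_sub_cancel, sub_self, Real.rpow_zero]

theorem tendsto_snrProb_isTypicalNR (hγ : γ ∈ Set.Ioo (1 / 2 : ℝ) 1) (hβ : 0 < β) :
    Tendsto (fun N : ℕ => snrProb β γ N (IsTypicalNR γ (Real.log N ^ scaleExponent γ)))
      atTop (nhds 1) := by
  have hlim : Tendsto (fun N : ℕ => 1 - 5 / (N : ℝ)) atTop (nhds 1) := by
    simpa only [sub_zero] using (tendsto_const_div_atTop_nhds_zero_nat (5 : ℝ)).const_sub 1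
  refine tendsto_of_tendsto_of_tendsto_of_le_of_le' hlim tendsto_const_nhds ?_ ?_
  · filter_upwards [eventually_isScale hγ hβ] with N h using h.le_snrProb_isTypicalNR
  · exact Eventually.of_forall fun N => (isEdgeProb_snrEdgeProb hβ.le).graphProb_le_one

theorem isThetaLogInProb_of_isTypicalNR (hγ : γ ∈ Set.Ioo (1 / 2 : ℝ) 1) (hβ : 0 < β)
    {F : ∀ N : ℕ, SimpleGraph (Fin N) → ℝ} {g : ℕ → ℝ} (hg : ∀ N, 0 ≤ g N) (L₀ a b : ℝ)
    (hF : ∀ N L, IsScale β γ N L → L₀ ≤ L → ∀ G : SimpleGraph (Fin N), IsTypicalNR γ L G →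
      g N * L ^ (-a) ≤ F N G ∧ F N G ≤ g N * L ^ b) :
    IsThetaLogInProb β γ F g := by
  set κ := scaleExponent γ
  refine ⟨max 1 (max (κ * a) (κ * b)), one_pos.trans_le (le_max_left _ _), ?_⟩
  set C := max 1 (max (κ * a) (κ * b))
  have haC : κ * a ≤ C := (le_max_left _ _).trans (le_max_right _ _)
  have hbC : κ * b ≤ C := (le_max_right _ _).trans (le_max_right _ _)
  have hlarge := ((tendsto_rpow_atTop (scaleExponent_pos hγ.1)).comp
    tendsto_log_natCast_atTop).eventually_ge_atTop L₀
  refine tendsto_of_tendsto_of_tendsto_of_le_of_le' (tendsto_snrProb_isTypicalNR hγ hβ)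
    tendsto_const_nhds ?_ ?_
  · filter_upwards [eventually_isScale hγ hβ, hlarge] with N hscale hL₀
    refine (isEdgeProb_snrEdgeProb hβ.le).graphProb_mono fun G hG => ?_
    obtain ⟨hlower, hupper⟩ := hF N _ hscale hL₀ G hG
    have hlog : 1 ≤ Real.log N := by linarith [hscale.hundred_le_log]
    rw [← Real.rpow_mul (by linarith)] at hlower hupper
    constructor
    · refine le_trans (mul_le_mul_of_nonneg_left ?_ (hg N)) hlower
      exact Real.rpow_le_rpow_of_exponent_le hlog (by linarith)
    · exact hupper.trans (mul_le_mul_of_nonneg_left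
        (Real.rpow_le_rpow_of_exponent_le hlog hbC) (hg N))
  · exact Eventually.of_forall fun N => (isEdgeProb_snrEdgeProb hβ.le).graphProb_le_one

variable {u θ : ℝ}

theorem isThetaLogInProb_natCast (hγ : γ ∈ Set.Ioo (1 / 2 : ℝ) 1) (hu : u ∈ Set.Ioo (0 : ℝ) 1)
    (hβ : 0 < β) (hθ : γ * θ ≤ 1) :
    IsThetaLogInProb β γ (fun _ G => expectedConsensusTime G θ u) fun N => N := by
  refine isThetaLogInProb_of_isTypicalNR hγ hβ (fun N => N.cast_nonneg) (1 / (u * (1 - u)) ^ 2)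
    (|θ| + 5) (7 * |θ - 1| + 30) fun N L h hL G hG => ⟨?_, h.expectedConsensusTime_le hG hu θ⟩
  have huL := (div_le_iff₀' (pow_pos (mul_pos hu.1 (sub_pos.2 hu.2)) 2)).1 hL
  have hlower := h.le_expectedConsensusTime hG hu huL le_rfl (snrWeight_rpow_le_div_succ hθ)
  rwa [sq, mul_div_cancel_right₀ _ h.natCast_pos.ne'] at hlower

theorem isThetaLogInProb_rpow (hγ : γ ∈ Set.Ioo (1 / 2 : ℝ) 1) (hu : u ∈ Set.Ioo (0 : ℝ) 1)
    (hβ : 0 < β) (hθ : 1 ≤ γ * θ) (hθ₂ : θ ≤ 2) :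
    IsThetaLogInProb β γ (fun _ G => expectedConsensusTime G θ u)
      fun N => (N : ℝ) ^ (2 - γ * θ) := by
  have hγ₀ : 0 < γ := one_half_pos.trans hγ.1
  have hθ₀ : 0 ≤ θ := (pos_of_mul_pos_right (one_pos.trans_le hθ) hγ₀.le).le
  refine isThetaLogInProb_of_isTypicalNR hγ hβ (fun N => by positivity) (1 / (u * (1 - u)) ^ 2)
    (|θ| + 5) (7 * |θ - 1| + 30 + 2 * θ) fun N L h hL G hG =>
      ⟨?_, h.expectedConsensusTime_le_of_le_two hG hu hθ₀ hθ₂⟩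
  have huL := (div_le_iff₀' (pow_pos (mul_pos hu.1 (sub_pos.2 hu.2)) 2)).1 hL
  have hN : (1 : ℝ) ≤ N := by exact_mod_cast h.one_le_natCast
  have hlower := h.le_expectedConsensusTime hG hu huL (Real.self_le_rpow_of_one_le hN hθ)
    (snrWeight_rpow_le_rpow_div_succ hθ)
  rwa [← Real.rpow_two, ← Real.rpow_sub h.natCast_pos] at hlower

end Asymptotics

theorem discursive_consensus_ultrasmall_world_general
    (γ u β θ : ℝ) (hγ : γ ∈ Set.Ioo (1 / 2 : ℝ) 1) (hu : u ∈ Set.Ioo (0 : ℝ) 1) (hβ : 0 < β) :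
    (θ ≤ 1 / γ →
      IsThetaLogInProb β γ (fun _ G => expectedConsensusTime G θ u) fun N => N) ∧
    (1 / γ < θ → θ ≤ 2 →
      IsThetaLogInProb β γ (fun _ G => expectedConsensusTime G θ u)
        fun N => (N : ℝ) ^ (2 - γ * θ)) := by
  have hγ₀ : 0 < γ := one_half_pos.trans hγ.1
  exact ⟨fun hθ => isThetaLogInProb_natCast hγ hu hβ ((le_div_iff₀' hγ₀).1 hθ),
    fun hθ hθ₂ => isThetaLogInProb_rpow hγ hu hβ ((div_le_iff₀' hγ₀).1 hθ.le) hθ₂⟩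

/-- For `γ ∈ (1/2,1)`, `u ∈ (0,1)`, `β ≥ 2`, the discursive voter model with
temperature `θ` on the Simplified Norros–Reittu graph `G_N`, started from `μ_u`, satisfies:
(i) for `θ ∈ (−∞, 1/γ]`, `E^θ_{μ_u}(τ_cons | G_N) = Θ_P^{log N}(N)`;
(ii) for `θ ∈ (1/γ, 2]`, `E^θ_{μ_u}(τ_cons | G_N) = Θ_P^{log N}(N^{2−γθ})`. -/
theorem discursive_consensus_ultrasmall_world
    (γ u β θ : ℝ) (hγ : γ ∈ Set.Ioo (1 / 2 : ℝ) 1) (hu : u ∈ Set.Ioo (0 : ℝ) 1)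
    (hβ : 2 ≤ β) :
    (θ ≤ 1 / γ →
      ∃ C > (0 : ℝ),
        Tendsto
          (fun N : ℕ =>
            snrProb β γ N (fun G =>
              (N : ℝ) * Real.log N ^ (-C) ≤ expectedConsensusTime G θ u ∧
                expectedConsensusTime G θ u ≤ (N : ℝ) * Real.log N ^ C))
          atTop (nhds 1)) ∧
    (1 / γ < θ → θ ≤ 2 →
      ∃ C > (0 : ℝ),
        Tendsto
          (fun N : ℕ =>
            snrProb β γ N (fun G =>
              (N : ℝ) ^ (2 - γ * θ) * Real.log N ^ (-C) ≤ expectedConsensusTime G θ u ∧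
                expectedConsensusTime G θ u ≤ (N : ℝ) ^ (2 - γ * θ) * Real.log N ^ C))
          atTop (nhds 1)) :=
  discursive_consensus_ultrasmall_world_general γ u β θ hγ hu (two_pos.trans_le hβ)
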